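/- arXiv:1503.03670 — 3 statements merged into one kernel-verified Lean document; each statement's English description precedes it below -/
import Mathlib

section
/- Let a²,b²,c² > 0, k ∈ ℤ∖{0}, 0 < R ≤ ∞, and let w₀, w₁, w₂ ∈ C²((0,R)). Define Q : B_R∖{0} → S₀ by Q(x) = w₀(r)E₀ + w₁(r)E₁(φ) + w₂(r)E₂(φ) for x = (r cos φ, r sin φ). Then Q satisfies the Euler–Lagrange equation ΔQ = −a²Q − b²(Q² − (1/3)|Q|²I₃) + c²|Q|²Q on B_R∖{0} (the Laplacian acting componentwise on matrix entries) if and only if, with ρ² = w₀² + w₁² + w₂², the functions satisfy on (0,R): w₀'' + w₀'/r = w₀(−a² + c²ρ² − (b²/√6)w₀) + (b²/√6)(w₁² + w₂²); w₁'' + w₁'/r − k²w₁/r² = w₁(−a² + c²ρ² + (2b²/√6)w₀); and w₂'' + w₂'/r − k²w₂/r² = w₂(−a² + c²ρ² + (2b²/√6)w₀). -/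
open Real Matrix
open scoped ENNReal

noncomputable section

abbrev Mat3 := Matrix (Fin 3) (Fin 3) ℝ

/-- `Q` is a symmetric traceless 3×3 real matrix, i.e. an element of `S₀`. -/
def isS0 (Q : Mat3) : Prop := Qᵀ = Q ∧ Q.trace = 0

def e1 : Fin 3 → ℝ := ![1, 0, 0]
def e2 : Fin 3 → ℝ := ![0, 1, 0]
def e3 : Fin 3 → ℝ := ![0, 0, 1]

/-- `n(φ) = (cos(kφ/2), sin(kφ/2), 0)`. -/
def nvec (k : ℤ) (φ : ℝ) : Fin 3 → ℝ := ![Real.cos ((k : ℝ) * φ / 2), Real.sin ((k : ℝ) * φ / 2), 0]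

/-- `m(φ) = (−sin(kφ/2), cos(kφ/2), 0)`. -/
def mvec (k : ℤ) (φ : ℝ) : Fin 3 → ℝ := ![-Real.sin ((k : ℝ) * φ / 2), Real.cos ((k : ℝ) * φ / 2), 0]

/-- `I₂ = I₃ − e₃ ⊗ e₃`. -/
def I2 : Mat3 := 1 - vecMulVec e3 e3

def E0 : Mat3 := Real.sqrt (3/2) • (vecMulVec e3 e3 - (1/3 : ℝ) • (1 : Mat3))
def E1 (k : ℤ) (φ : ℝ) : Mat3 :=
  Real.sqrt 2 • (vecMulVec (nvec k φ) (nvec k φ) - (1/2 : ℝ) • I2)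
def E2mat (k : ℤ) (φ : ℝ) : Mat3 :=
  (Real.sqrt 2)⁻¹ • (vecMulVec (nvec k φ) (mvec k φ) + vecMulVec (mvec k φ) (nvec k φ))
def E3mat : Mat3 := (Real.sqrt 2)⁻¹ • (vecMulVec e1 e3 + vecMulVec e3 e1)
def E4mat : Mat3 := (Real.sqrt 2)⁻¹ • (vecMulVec e2 e3 + vecMulVec e3 e2)

/-- The rotation `R_k(ψ)` of winding `k/2` about the vertical axis. -/
def Rk (k : ℤ) (ψ : ℝ) : Mat3 :=
  !![Real.cos ((k : ℝ) * ψ / 2), -Real.sin ((k : ℝ) * ψ / 2), 0;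
     Real.sin ((k : ℝ) * ψ / 2),  Real.cos ((k : ℝ) * ψ / 2), 0;
     0, 0, 1]

/-- The Landau-de Gennes bulk potential. -/
def fbulk (a2 b2 c2 : ℝ) (Q : Mat3) : ℝ :=
  -(a2/2) * (Q*Q).trace - (b2/3) * (Q*Q*Q).trace + (c2/4) * ((Q*Q).trace)^2

/-- The constant `s₊ = (b² + √(b⁴ + 24a²c²))/(4c²)`. -/
def splus (a2 b2 c2 : ℝ) : ℝ := (b2 + Real.sqrt (b2^2 + 24*a2*c2)) / (4*c2)

/-- Laplacian of a scalar function on `ℝ²`, as the sum of the two repeated partial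
derivatives along the coordinate axes. -/
def lap (f : ℝ × ℝ → ℝ) (p : ℝ × ℝ) : ℝ :=
  deriv (fun t => deriv (fun s => f (s, p.2)) t) p.1 +
  deriv (fun t => deriv (fun s => f (p.1, s)) t) p.2

/-- Componentwise Laplacian of a matrix-valued map on `ℝ²`. -/
def matLap (Q : ℝ × ℝ → Mat3) (p : ℝ × ℝ) : Mat3 :=
  Matrix.of fun i j => lap (fun x => Q x i j) p

/-- Squared norm of the gradient of a scalar function on `ℝ²`. -/
def gradNormSq (f : ℝ × ℝ → ℝ) (p : ℝ × ℝ) : ℝ :=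
  (fderiv ℝ f p (1, 0))^2 + (fderiv ℝ f p (0, 1))^2

/-- `|∇Q|²`: sum over all matrix entries of the squared norms of their gradients. -/
def matGradNormSq (Q : ℝ × ℝ → Mat3) (p : ℝ × ℝ) : ℝ :=
  ∑ i, ∑ j, gradNormSq (fun x => Q x i j) p

/-- Membership in the open disk of radius `R ∈ (0,∞]` centered at the origin. -/
def inBall (R : ℝ≥0∞) (x : ℝ × ℝ) : Prop :=
  ENNReal.ofReal (Real.sqrt (x.1^2 + x.2^2)) < R

/-- The right-hand side of the Euler–Lagrange equation
`ΔQ = −a²Q − b²(Q² − (1/3)|Q|²I₃) + c²|Q|²Q`. -/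
def ELrhs (a2 b2 c2 : ℝ) (A : Mat3) : Mat3 :=
  -a2 • A - b2 • (A * A - ((1/3 : ℝ) * (A * A).trace) • (1 : Mat3)) + (c2 * (A * A).trace) • A

/-- Frobenius squared norm of a 3×3 matrix. -/
def frobSq (A : Mat3) : ℝ := ∑ i, ∑ j, (A i j)^2

/-- For `x = (x₁,x₂) ∈ ℝ²`, `x̃ = (x₁,x₂,0) ∈ ℝ³`. -/
def tilde (x : ℝ × ℝ) : Fin 3 → ℝ := ![x.1, x.2, 0]

/-- The projection `P₂(x₁,x₂,x₃) = (x₁,x₂)`. -/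
def P2 (v : Fin 3 → ℝ) : ℝ × ℝ := (v 0, v 1)

/-- The antisymmetric matrix `S₀ = e₂⊗e₁ − e₁⊗e₂`. -/
def S0mat : Mat3 := vecMulVec e2 e1 - vecMulVec e1 e2

end

open Filter Topology Set

/-!
In polar coordinates the Laplacian is `∂ᵣ² + r⁻¹ ∂ᵣ + r⁻² ∂_φ²`. The frame rotates by
`E₁' = k E₂` and `E₂' = -k E₁` while `E₀` is constant, so the Laplacian of
`w₀ E₀ + w₁ E₁ + w₂ E₂` has the three left-hand sides of the ODE system as its coordinates.
The span of `E₀, E₁, E₂` is stable under `Q ↦ Q² - |Q|² I₃ / 3`, so the right-hand side of the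
Euler–Lagrange equation also has coordinates in the frame, and coordinates are unique because the
frame is orthonormal.
-/

section Calculus

variable {𝕜 E F : Type*} [NontriviallyNormedField 𝕜]
  [NormedAddCommGroup E] [NormedSpace 𝕜 E] [NormedAddCommGroup F] [NormedSpace 𝕜 F]

lemma deriv_deriv_eq_of_hasDerivAt {g g' : 𝕜 → F} {g'' : F} {t : 𝕜}
    (hg : ∀ᶠ s in 𝓝 t, HasDerivAt g (g' s) s) (hg' : HasDerivAt g' g'' t) :
    deriv (deriv g) t = g'' :=
  (EventuallyEq.deriv_eq (hg.mono fun _ hs => hs.deriv)).trans hg'.deriv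

lemma eventually_differentiableAt_of_contDiffAt {f : E → F} {n : WithTop ℕ∞} {p : E}
    (hf : ContDiffAt 𝕜 n f p) (hn : 1 ≤ n) : ∀ᶠ x in 𝓝 p, DifferentiableAt 𝕜 f x :=
  ((hf.of_le hn).eventually (by simp)).mono fun _ hx => hx.differentiableAt one_ne_zero

lemma eventually_hasDerivAt_of_contDiffAt {w : 𝕜 → F} {n : WithTop ℕ∞} {r : 𝕜}
    (hw : ContDiffAt 𝕜 n w r) (hn : 1 ≤ n) : ∀ᶠ ρ in 𝓝 r, HasDerivAt w (deriv w ρ) ρ :=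
  (eventually_differentiableAt_of_contDiffAt hw hn).mono fun _ hρ => hρ.hasDerivAt

lemma deriv_deriv_comp {f : E → F} {γ γ' : 𝕜 → E} {γ'' : E} {t : 𝕜}
    (hf : ContDiffAt 𝕜 2 f (γ t))
    (hγ : ∀ᶠ s in 𝓝 t, HasDerivAt γ (γ' s) s) (hγ' : HasDerivAt γ' γ'' t) :
    deriv (deriv fun s => f (γ s)) t =
      fderiv 𝕜 (fderiv 𝕜 f) (γ t) (γ' t) (γ' t) + fderiv 𝕜 f (γ t) γ'' := by
  have hγt := hγ.self_of_nhds
  have hf' : HasFDerivAt (fderiv 𝕜 f) (fderiv 𝕜 (fderiv 𝕜 f) (γ t)) (γ t) :=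
    ((hf.fderiv_right one_add_one_eq_two.le).differentiableAt one_ne_zero).hasFDerivAt
  refine deriv_deriv_eq_of_hasDerivAt (g' := fun s => fderiv 𝕜 f (γ s) (γ' s)) ?_
    ((hf'.comp_hasDerivAt t hγt).clm_apply hγ')
  have hdiff := eventually_differentiableAt_of_contDiffAt hf one_le_two
  filter_upwards [hγ, hγt.continuousAt.eventually hdiff] with s hs hfs
  exact hfs.hasFDerivAt.comp_hasDerivAt s hs

lemma bilin_rotated_pair (B : E →L[𝕜] E →L[𝕜] F) (u v : E) {c s : 𝕜} (h : c ^ 2 + s ^ 2 = 1) :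
    B (c • u + s • v) (c • u + s • v) + B (-s • u + c • v) (-s • u + c • v) = B u u + B v v := by
  calc
    _ = (c ^ 2 + s ^ 2) • (B u u + B v v) := by
      simp only [map_add, map_smul, _root_.add_apply, _root_.smul_apply]
      module
    _ = B u u + B v v := by rw [h, one_smul]

end Calculus

lemma contDiffAt_of_contDiffAt_comp {𝕜 E F G : Type*} [RCLike 𝕜]
    [NormedAddCommGroup E] [NormedSpace 𝕜 E] [CompleteSpace E]
    [NormedAddCommGroup F] [NormedSpace 𝕜 F] [NormedAddCommGroup G] [NormedSpace 𝕜 G]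
    {g : E → F} {f : F → G} {g' : E ≃L[𝕜] F} {a : E} {n : WithTop ℕ∞} (hn : n ≠ 0)
    (hg : ContDiffAt 𝕜 n g a) (hg' : HasFDerivAt g (g' : E →L[𝕜] F) a)
    (hfg : ContDiffAt 𝕜 n (f ∘ g) a) : ContDiffAt 𝕜 n f (g a) := by
  have hinv : hg.localInverse hg' hn (g a) = a := hg.localInverse_apply_image hg' hn
  have hright : ∀ᶠ y in 𝓝 (g a), g (hg.localInverse hg' hn y) = y :=
    (hg.toOpenPartialHomeomorph g hg' hn).eventually_right_inverse
      (hg.image_mem_toOpenPartialHomeomorph_target hg' hn)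
  have hcomp : ContDiffAt 𝕜 n ((f ∘ g) ∘ hg.localInverse hg' hn) (g a) :=
    ContDiffAt.comp (g a) (by rwa [hinv]) (hg.to_localInverse hg' hn)
  exact hcomp.congr_of_eventuallyEq (hright.mono fun y hy => congrArg f hy.symm)

section PolarCoordinates

lemma contDiff_polarCoord_symm {n : WithTop ℕ∞} : ContDiff ℝ n polarCoord.symm := by
  change ContDiff ℝ n fun q : ℝ × ℝ => (q.1 * cos q.2, q.1 * sin q.2)
  fun_prop

-- `polarCoord.symm` is a local diffeomorphism at `(r, φ)` for every angle `φ`, so no branch of the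
-- polar angle has to be chosen.
lemma contDiffAt_of_contDiffAt_polar {F : Type*} [NormedAddCommGroup F] [NormedSpace ℝ F]
    {f : ℝ × ℝ → F} {n : WithTop ℕ∞} {r φ : ℝ} (hn : n ≠ 0) (hr : r ≠ 0)
    (hf : ContDiffAt ℝ n (fun q : ℝ × ℝ => f (q.1 * cos q.2, q.1 * sin q.2)) (r, φ)) :
    ContDiffAt ℝ n f (r * cos φ, r * sin φ) := by
  have hdet : (fderivPolarCoordSymm (r, φ)).det ≠ 0 := by rwa [det_fderivPolarCoordSymm]
  exact contDiffAt_of_contDiffAt_comp (g := polarCoord.symm)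
    (g' := (fderivPolarCoordSymm (r, φ)).toContinuousLinearEquivOfDetNeZero hdet) hn
    contDiff_polarCoord_symm.contDiffAt (hasFDerivAt_polarCoord_symm (r, φ)) hf

lemma hasDerivAt_polar_radius (r φ : ℝ) :
    HasDerivAt (fun ρ => (ρ * cos φ, ρ * sin φ)) (cos φ, sin φ) r :=
  (hasDerivAt_mul_const (cos φ)).prodMk (hasDerivAt_mul_const (sin φ))

lemma hasDerivAt_polar_angle (r φ : ℝ) :
    HasDerivAt (fun θ => (r * cos θ, r * sin θ)) (r * -sin φ, r * cos φ) φ :=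
  ((hasDerivAt_cos φ).const_mul r).prodMk ((hasDerivAt_sin φ).const_mul r)

lemma hasDerivAt_deriv_polar_angle (r φ : ℝ) :
    HasDerivAt (fun θ => (r * -sin θ, r * cos θ)) (r * -cos φ, r * -sin φ) φ :=
  ((hasDerivAt_sin φ).neg.const_mul r).prodMk ((hasDerivAt_cos φ).const_mul r)

lemma lap_eq_fderiv_fderiv {f : ℝ × ℝ → ℝ} {p : ℝ × ℝ} (hf : ContDiffAt ℝ 2 f p) :
    lap f p = fderiv ℝ (fderiv ℝ f) p (1, 0) (1, 0) + fderiv ℝ (fderiv ℝ f) p (0, 1) (0, 1) := by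
  have hx := deriv_deriv_comp (γ := fun s => (s, p.2)) hf
    (.of_forall fun s => (hasDerivAt_id s).prodMk (hasDerivAt_const s p.2))
    (hasDerivAt_const p.1 _)
  have hy := deriv_deriv_comp (γ := fun s => (p.1, s)) hf
    (.of_forall fun s => (hasDerivAt_const s p.1).prodMk (hasDerivAt_id s))
    (hasDerivAt_const p.2 _)
  simp only [map_zero, add_zero] at hx hy
  exact congrArg₂ (· + ·) hx hy

lemma lap_polar_of_contDiffAt {f : ℝ × ℝ → ℝ} {r φ : ℝ} (hr : r ≠ 0)
    (hf : ContDiffAt ℝ 2 f (r * cos φ, r * sin φ)) :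
    lap f (r * cos φ, r * sin φ) =
      deriv (deriv fun ρ => f (ρ * cos φ, ρ * sin φ)) r
        + deriv (fun ρ => f (ρ * cos φ, ρ * sin φ)) r / r
        + deriv (deriv fun θ => f (r * cos θ, r * sin θ)) φ / r ^ 2 := by
  have hradial : deriv (fun ρ => f (ρ * cos φ, ρ * sin φ)) r =
      fderiv ℝ f (r * cos φ, r * sin φ) (cos φ, sin φ) :=
    ((hf.differentiableAt two_ne_zero).hasFDerivAt.comp_hasDerivAt r
      (hasDerivAt_polar_radius r φ)).deriv
  have hradial₂ := deriv_deriv_comp (γ := fun ρ => (ρ * cos φ, ρ * sin φ)) hf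
    (.of_forall fun ρ => hasDerivAt_polar_radius ρ φ) (hasDerivAt_const r _)
  have hangular₂ := deriv_deriv_comp (γ := fun θ => (r * cos θ, r * sin θ)) hf
    (.of_forall fun θ => hasDerivAt_polar_angle r θ) (hasDerivAt_deriv_polar_angle r φ)
  have hrotate := bilin_rotated_pair (fderiv ℝ (fderiv ℝ f) (r * cos φ, r * sin φ)) (1, 0)
    (0, 1) (cos_sq_add_sin_sq φ)
  have htangent : (r * -sin φ, r * cos φ) = r • (-sin φ, cos φ) := rfl
  have hinward : (r * -cos φ, r * -sin φ) = -r • (cos φ, sin φ) := by simp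
  simp only [Prod.smul_mk, Prod.mk_add_mk, smul_eq_mul, mul_one, mul_zero, add_zero,
    zero_add] at hrotate
  rw [lap_eq_fderiv_fderiv hf, ← hrotate, hradial, hradial₂, hangular₂, htangent, hinward]
  simp only [map_smul, map_zero, smul_eq_mul, _root_.smul_apply]
  field_simp
  ring

lemma lap_polar {f F : ℝ × ℝ → ℝ} {r φ : ℝ} (hr : r ≠ 0) (hF : ContDiffAt ℝ 2 F (r, φ))
    (hfF : (fun q : ℝ × ℝ => f (q.1 * cos q.2, q.1 * sin q.2)) =ᶠ[𝓝 (r, φ)] F) :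
    lap f (r * cos φ, r * sin φ) =
      deriv (deriv fun ρ => F (ρ, φ)) r + deriv (fun ρ => F (ρ, φ)) r / r
        + deriv (deriv fun θ => F (r, θ)) φ / r ^ 2 := by
  have hradial : (fun ρ => f (ρ * cos φ, ρ * sin φ)) =ᶠ[𝓝 r] fun ρ => F (ρ, φ) :=
    hfF.comp_tendsto (Continuous.prodMk_left φ).continuousAt
  have hangular : (fun θ => f (r * cos θ, r * sin θ)) =ᶠ[𝓝 φ] fun θ => F (r, θ) :=
    hfF.comp_tendsto (Continuous.prodMk_right r).continuousAt
  have hf : ContDiffAt ℝ 2 f (r * cos φ, r * sin φ) :=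
    contDiffAt_of_contDiffAt_polar two_ne_zero hr (hF.congr_of_eventuallyEq hfF)
  rw [lap_polar_of_contDiffAt hr hf, hradial.deriv.deriv_eq, hradial.deriv_eq,
    hangular.deriv.deriv_eq]

lemma sqrt_polar_sq_add_sq {r : ℝ} (hr : 0 ≤ r) (φ : ℝ) :
    √((r * cos φ) ^ 2 + (r * sin φ) ^ 2) = r := by
  rw [mul_pow, mul_pow, ← mul_add, cos_sq_add_sin_sq, mul_one, sqrt_sq hr]

lemma exists_polar_coordinates (x : ℝ × ℝ) :
    ∃ φ, x = (√(x.1 ^ 2 + x.2 ^ 2) * cos φ, √(x.1 ^ 2 + x.2 ^ 2) * sin φ) := by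
  have hnorm : √(x.1 ^ 2 + x.2 ^ 2) = ‖(⟨x.1, x.2⟩ : ℂ)‖ :=
    (Complex.norm_eq_sqrt_sq_add_sq ⟨x.1, x.2⟩).symm
  refine ⟨Complex.arg ⟨x.1, x.2⟩, ?_⟩
  rw [hnorm, Complex.norm_mul_cos_arg, Complex.norm_mul_sin_arg]

lemma sqrt_sq_add_sq_pos_iff (x : ℝ × ℝ) : 0 < √(x.1 ^ 2 + x.2 ^ 2) ↔ x ≠ 0 := by
  have hne : √(x.1 ^ 2 + x.2 ^ 2) ≠ 0 ↔ x ≠ 0 := by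
    rw [Ne, sqrt_eq_zero (by positivity), add_eq_zero_iff_of_nonneg (sq_nonneg _) (sq_nonneg _)]
    simp [Prod.ext_iff]
  rw [← hne, (sqrt_nonneg _).lt_iff_ne']

lemma forall_radius_mem_iff {s : Set ℝ} (hs : s ⊆ Ici 0) {P : ℝ × ℝ → Prop} :
    (∀ x : ℝ × ℝ, √(x.1 ^ 2 + x.2 ^ 2) ∈ s → P x) ↔
      ∀ r ∈ s, ∀ φ, P (r * cos φ, r * sin φ) := by
  refine ⟨fun h r hr φ => h _ (by rwa [sqrt_polar_sq_add_sq (hs hr)]), fun h x hx => ?_⟩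
  obtain ⟨φ, hφ⟩ := exists_polar_coordinates x
  rw [hφ]
  exact h _ hx φ

lemma isOpen_pos_and_ofReal_lt (R : ℝ≥0∞) : IsOpen {r : ℝ | 0 < r ∧ ENNReal.ofReal r < R} :=
  isOpen_Ioi.inter (isOpen_Iio.preimage ENNReal.continuous_ofReal)

end PolarCoordinates

section Frame

lemma nvec_dotProduct_nvec (k : ℤ) (φ : ℝ) : nvec k φ ⬝ᵥ nvec k φ = 1 := by
  simp [nvec, ← sq]

lemma mvec_dotProduct_mvec (k : ℤ) (φ : ℝ) : mvec k φ ⬝ᵥ mvec k φ = 1 := by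
  simp [mvec, ← sq]

lemma nvec_dotProduct_mvec (k : ℤ) (φ : ℝ) : nvec k φ ⬝ᵥ mvec k φ = 0 := by
  simp [nvec, mvec, mul_comm]

lemma mvec_dotProduct_nvec (k : ℤ) (φ : ℝ) : mvec k φ ⬝ᵥ nvec k φ = 0 := by
  rw [dotProduct_comm, nvec_dotProduct_mvec]

lemma e3_dotProduct_e3 : e3 ⬝ᵥ e3 = 1 := by simp [e3]

lemma e3_dotProduct_nvec (k : ℤ) (φ : ℝ) : e3 ⬝ᵥ nvec k φ = 0 := by
  simp [nvec, e3]

lemma e3_dotProduct_mvec (k : ℤ) (φ : ℝ) : e3 ⬝ᵥ mvec k φ = 0 := by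
  simp [mvec, e3]

lemma nvec_dotProduct_e3 (k : ℤ) (φ : ℝ) : nvec k φ ⬝ᵥ e3 = 0 := by
  rw [dotProduct_comm, e3_dotProduct_nvec]

lemma mvec_dotProduct_e3 (k : ℤ) (φ : ℝ) : mvec k φ ⬝ᵥ e3 = 0 := by
  rw [dotProduct_comm, e3_dotProduct_mvec]

lemma vecMulVec_nvec_add_vecMulVec_mvec (k : ℤ) (φ : ℝ) :
    vecMulVec (nvec k φ) (nvec k φ) + vecMulVec (mvec k φ) (mvec k φ) = I2 := by
  ext i j
  fin_cases i <;> fin_cases j <;>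
    simp [nvec, mvec, e3, I2, ← sq] <;> ring

lemma E0_eq : E0 = (√6)⁻¹ • ((3 : ℝ) • vecMulVec e3 e3 - 1) := by
  have hsqrt : √(3 / 2) = 3 * (√6)⁻¹ := by
    rw [sqrt_eq_iff_eq_sq (by positivity) (by positivity), mul_pow, inv_pow,
      sq_sqrt (by positivity)]
    norm_num
  rw [E0, hsqrt]
  module

lemma E1_eq (k : ℤ) (φ : ℝ) :
    E1 k φ = (√2)⁻¹ • (vecMulVec (nvec k φ) (nvec k φ) - vecMulVec (mvec k φ) (mvec k φ)) := by
  have hsqrt : √2 * (1 / 2) = (√2)⁻¹ := by rw [mul_one_div, sqrt_div_self]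
  rw [E1, ← vecMulVec_nvec_add_vecMulVec_mvec k φ, ← hsqrt]
  module

lemma inv_sqrt_mul_inv_sqrt {x : ℝ} (hx : 0 ≤ x) : (√x)⁻¹ * (√x)⁻¹ = x⁻¹ := by
  rw [← mul_inv, mul_self_sqrt hx]

lemma E0_mul_E0 : E0 * E0 = (1 / 3 : ℝ) • 1 + (√6)⁻¹ • E0 := by
  calc
    E0 * E0 = ((√6)⁻¹ * (√6)⁻¹) • ((3 : ℝ) • vecMulVec e3 e3 + 1) := by
      simp only [E0_eq, sub_mul, mul_sub, smul_mul_assoc, mul_smul_comm, one_mul, mul_one,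
        vecMulVec_mul_vecMulVec, e3_dotProduct_e3, one_smul]
      module
    _ = (1 / 3 : ℝ) • 1 + ((√6)⁻¹ * (√6)⁻¹) • ((3 : ℝ) • vecMulVec e3 e3 - 1) := by
      rw [inv_sqrt_mul_inv_sqrt (by positivity)]
      module
    _ = (1 / 3 : ℝ) • 1 + (√6)⁻¹ • E0 := by rw [E0_eq, smul_smul]

lemma E0_mul_of_vecMulVec_e3_mul_eq_zero {A : Mat3} (hA : vecMulVec e3 e3 * A = 0) :
    E0 * A = -(√6)⁻¹ • A := by
  rw [E0_eq, smul_mul_assoc, sub_mul, smul_mul_assoc, hA, one_mul]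
  module

lemma mul_E0_of_mul_vecMulVec_e3_eq_zero {A : Mat3} (hA : A * vecMulVec e3 e3 = 0) :
    A * E0 = -(√6)⁻¹ • A := by
  rw [E0_eq, mul_smul_comm, mul_sub, mul_smul_comm, hA, mul_one]
  module

/-- The tensor with coordinates `x, y, z` in the moving frame `E₀, E₁(φ), E₂(φ)`. -/
noncomputable def frameTensor (k : ℤ) (φ x y z : ℝ) : Mat3 :=
  x • E0 + y • E1 k φ + z • E2mat k φ

lemma frameTensor_zero_left (k : ℤ) (φ y z : ℝ) : frameTensor k φ 0 y z =
    (√2)⁻¹ • (y • (vecMulVec (nvec k φ) (nvec k φ) - vecMulVec (mvec k φ) (mvec k φ))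
      + z • (vecMulVec (nvec k φ) (mvec k φ) + vecMulVec (mvec k φ) (nvec k φ))) := by
  rw [frameTensor, E1_eq, E2mat]
  module

lemma E0_mul_frameTensor_zero_left (k : ℤ) (φ y z : ℝ) :
    E0 * frameTensor k φ 0 y z = -(√6)⁻¹ • frameTensor k φ 0 y z :=
  E0_mul_of_vecMulVec_e3_mul_eq_zero <| by
    simp [frameTensor_zero_left, mul_add, mul_sub, vecMulVec_mul_vecMulVec, e3_dotProduct_nvec,
      e3_dotProduct_mvec]

lemma frameTensor_zero_left_mul_E0 (k : ℤ) (φ y z : ℝ) :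
    frameTensor k φ 0 y z * E0 = -(√6)⁻¹ • frameTensor k φ 0 y z :=
  mul_E0_of_mul_vecMulVec_e3_eq_zero <| by
    simp [frameTensor_zero_left, add_mul, sub_mul, vecMulVec_mul_vecMulVec, nvec_dotProduct_e3,
      mvec_dotProduct_e3]

lemma frameTensor_zero_left_mul_self (k : ℤ) (φ y z : ℝ) :
    frameTensor k φ 0 y z * frameTensor k φ 0 y z = ((y ^ 2 + z ^ 2) / 2) • I2 := by
  calc
    _ = ((√2)⁻¹ * (√2)⁻¹ * (y ^ 2 + z ^ 2)) •
        (vecMulVec (nvec k φ) (nvec k φ) + vecMulVec (mvec k φ) (mvec k φ)) := by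
      simp only [frameTensor_zero_left, add_mul, mul_add, sub_mul, mul_sub, smul_mul_assoc,
        mul_smul_comm, vecMulVec_mul_vecMulVec, nvec_dotProduct_nvec, nvec_dotProduct_mvec,
        mvec_dotProduct_nvec, mvec_dotProduct_mvec, one_smul, zero_smul, vecMulVec_zero]
      module
    _ = ((y ^ 2 + z ^ 2) / 2) • I2 := by
      rw [inv_sqrt_mul_inv_sqrt zero_le_two, vecMulVec_nvec_add_vecMulVec_mvec, inv_mul_eq_div]

lemma I2_eq : I2 = (2 / 3 : ℝ) • 1 - (2 * (√6)⁻¹) • E0 := by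
  rw [E0_eq, smul_smul, mul_assoc, inv_sqrt_mul_inv_sqrt (by positivity), I2]
  module

lemma frameTensor_mul_self (k : ℤ) (φ x y z : ℝ) :
    frameTensor k φ x y z * frameTensor k φ x y z =
      ((x ^ 2 + y ^ 2 + z ^ 2) / 3) • 1
        + (√6)⁻¹ • frameTensor k φ (x ^ 2 - y ^ 2 - z ^ 2) (-2 * x * y) (-2 * x * z) := by
  have hsplit : frameTensor k φ x y z = x • E0 + frameTensor k φ 0 y z := by
    unfold frameTensor; module
  rw [hsplit, add_mul, mul_add, mul_add, smul_mul_assoc, mul_smul_comm, smul_mul_assoc,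
    mul_smul_comm, E0_mul_E0, E0_mul_frameTensor_zero_left, frameTensor_zero_left_mul_E0,
    frameTensor_zero_left_mul_self, I2_eq]
  unfold frameTensor
  module

lemma trace_frameTensor (k : ℤ) (φ x y z : ℝ) : (frameTensor k φ x y z).trace = 0 := by
  have hE0 : E0.trace = 0 := by
    simp [E0_eq, trace_sub, trace_smul, trace_vecMulVec, e3_dotProduct_e3]
  have hE1 : (E1 k φ).trace = 0 := by
    simp [E1_eq, trace_vecMulVec, nvec_dotProduct_nvec, mvec_dotProduct_mvec]
  have hE2 : (E2mat k φ).trace = 0 := by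
    simp [E2mat, trace_vecMulVec, nvec_dotProduct_mvec, mvec_dotProduct_nvec]
  simp [frameTensor, hE0, hE1, hE2]

lemma trace_frameTensor_mul_self (k : ℤ) (φ x y z : ℝ) :
    (frameTensor k φ x y z * frameTensor k φ x y z).trace = x ^ 2 + y ^ 2 + z ^ 2 := by
  rw [frameTensor_mul_self, trace_add, trace_smul, trace_smul, trace_frameTensor, trace_one,
    Fintype.card_fin, smul_zero, add_zero, smul_eq_mul]
  exact div_mul_cancel₀ _ three_ne_zero

lemma frameTensor_inj {k : ℤ} {φ x y z x' y' z' : ℝ} :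
    frameTensor k φ x y z = frameTensor k φ x' y' z' ↔ x = x' ∧ y = y' ∧ z = z' := by
  refine ⟨fun h => ?_, by rintro ⟨rfl, rfl, rfl⟩; rfl⟩
  have hsub : frameTensor k φ (x - x') (y - y') (z - z') = 0 := by
    rw [← sub_eq_zero.2 h]
    unfold frameTensor; module
  have hnorm := trace_frameTensor_mul_self k φ (x - x') (y - y') (z - z')
  rw [hsub, mul_zero, trace_zero] at hnorm
  refine ⟨?_, ?_, ?_⟩ <;> rw [← sub_eq_zero] <;> nlinarith

lemma ELrhs_frameTensor (a2 b2 c2 : ℝ) (k : ℤ) (φ x y z : ℝ) :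
    ELrhs a2 b2 c2 (frameTensor k φ x y z) = frameTensor k φ
      (x * (-a2 + c2 * (x ^ 2 + y ^ 2 + z ^ 2) - (b2 / √6) * x) + (b2 / √6) * (y ^ 2 + z ^ 2))
      (y * (-a2 + c2 * (x ^ 2 + y ^ 2 + z ^ 2) + (2 * b2 / √6) * x))
      (z * (-a2 + c2 * (x ^ 2 + y ^ 2 + z ^ 2) + (2 * b2 / √6) * x)) := by
  rw [ELrhs, trace_frameTensor_mul_self, frameTensor_mul_self]
  unfold frameTensor
  module

end Frame

section FrameCalculus

lemma contDiff_nvec (k : ℤ) (i : Fin 3) {n : WithTop ℕ∞} : ContDiff ℝ n fun φ => nvec k φ i := by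
  fin_cases i
  · exact (by fun_prop : ContDiff ℝ n fun θ : ℝ => cos (k * θ / 2))
  · exact (by fun_prop : ContDiff ℝ n fun θ : ℝ => sin (k * θ / 2))
  · exact contDiff_const

lemma contDiff_mvec (k : ℤ) (i : Fin 3) {n : WithTop ℕ∞} : ContDiff ℝ n fun φ => mvec k φ i := by
  fin_cases i
  · exact (by fun_prop : ContDiff ℝ n fun θ : ℝ => -sin (k * θ / 2))
  · exact (by fun_prop : ContDiff ℝ n fun θ : ℝ => cos (k * θ / 2))
  · exact contDiff_const

lemma hasDerivAt_half_angle (k : ℤ) (φ : ℝ) : HasDerivAt (fun θ : ℝ => k * θ / 2) (k / 2) φ := by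
  simpa using ((hasDerivAt_id φ).const_mul (k : ℝ)).div_const 2

lemma hasDerivAt_nvec (k : ℤ) (i : Fin 3) (φ : ℝ) :
    HasDerivAt (fun θ => nvec k θ i) (k / 2 * mvec k φ i) φ := by
  fin_cases i
  · exact (hasDerivAt_half_angle k φ).cos.congr_deriv (mul_comm _ _)
  · exact (hasDerivAt_half_angle k φ).sin.congr_deriv (mul_comm _ _)
  · exact (hasDerivAt_const φ 0).congr_deriv (mul_zero _).symm

lemma hasDerivAt_mvec (k : ℤ) (i : Fin 3) (φ : ℝ) :
    HasDerivAt (fun θ => mvec k θ i) (-(k / 2) * nvec k φ i) φ := by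
  fin_cases i
  · exact (hasDerivAt_half_angle k φ).sin.neg.congr_deriv (by simp [nvec, mul_comm])
  · exact (hasDerivAt_half_angle k φ).cos.congr_deriv (by simp [nvec, mul_comm])
  · exact (hasDerivAt_const φ 0).congr_deriv (mul_zero _).symm

lemma E1_apply (k : ℤ) (φ : ℝ) (i j : Fin 3) :
    E1 k φ i j = (√2)⁻¹ * (nvec k φ i * nvec k φ j - mvec k φ i * mvec k φ j) := by
  simp [E1_eq, vecMulVec_apply]

lemma E2mat_apply (k : ℤ) (φ : ℝ) (i j : Fin 3) :
    E2mat k φ i j = (√2)⁻¹ * (nvec k φ i * mvec k φ j + mvec k φ i * nvec k φ j) := by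
  simp [E2mat, vecMulVec_apply]

lemma hasDerivAt_E1 (k : ℤ) (i j : Fin 3) (φ : ℝ) :
    HasDerivAt (fun θ => E1 k θ i j) (k * E2mat k φ i j) φ := by
  simp only [E1_apply, E2mat_apply]
  refine ((((hasDerivAt_nvec k i φ).mul (hasDerivAt_nvec k j φ)).sub
    ((hasDerivAt_mvec k i φ).mul (hasDerivAt_mvec k j φ))).const_mul _).congr_deriv ?_
  ring

lemma hasDerivAt_E2mat (k : ℤ) (i j : Fin 3) (φ : ℝ) :
    HasDerivAt (fun θ => E2mat k θ i j) (-k * E1 k φ i j) φ := by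
  simp only [E1_apply, E2mat_apply]
  refine ((((hasDerivAt_nvec k i φ).mul (hasDerivAt_mvec k j φ)).add
    ((hasDerivAt_mvec k i φ).mul (hasDerivAt_nvec k j φ))).const_mul _).congr_deriv ?_
  ring

lemma frameTensor_apply (k : ℤ) (φ x y z : ℝ) (i j : Fin 3) :
    frameTensor k φ x y z i j = x * E0 i j + y * E1 k φ i j + z * E2mat k φ i j := by
  simp [frameTensor]

lemma hasDerivAt_frameTensor_angle (k : ℤ) (φ x y z : ℝ) (i j : Fin 3) :
    HasDerivAt (fun θ => frameTensor k θ x y z i j)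
      (frameTensor k φ 0 (-k * z) (k * y) i j) φ := by
  simp only [frameTensor_apply]
  refine ((((hasDerivAt_E1 k i j φ).const_mul y).const_add (x * E0 i j)).add
    ((hasDerivAt_E2mat k i j φ).const_mul z)).congr_deriv ?_
  ring

lemma deriv_deriv_frameTensor_angle (k : ℤ) (φ x y z : ℝ) (i j : Fin 3) :
    deriv (deriv fun θ => frameTensor k θ x y z i j) φ =
      frameTensor k φ 0 (-k * (k * y)) (k * (-k * z)) i j :=
  deriv_deriv_eq_of_hasDerivAt (.of_forall fun _ => hasDerivAt_frameTensor_angle ..)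
    (hasDerivAt_frameTensor_angle ..)

variable {w₀ w₁ w₂ : ℝ → ℝ}

lemma hasDerivAt_frameTensor_radius {w₀' w₁' w₂' r : ℝ} (h₀ : HasDerivAt w₀ w₀' r)
    (h₁ : HasDerivAt w₁ w₁' r) (h₂ : HasDerivAt w₂ w₂' r) (k : ℤ) (φ : ℝ) (i j : Fin 3) :
    HasDerivAt (fun ρ => frameTensor k φ (w₀ ρ) (w₁ ρ) (w₂ ρ) i j)
      (frameTensor k φ w₀' w₁' w₂' i j) r := by
  simp only [frameTensor_apply]
  exact ((h₀.mul_const _).add (h₁.mul_const _)).add (h₂.mul_const _)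

lemma contDiffAt_frameTensor {n : WithTop ℕ∞} {r : ℝ} (h₀ : ContDiffAt ℝ n w₀ r)
    (h₁ : ContDiffAt ℝ n w₁ r) (h₂ : ContDiffAt ℝ n w₂ r) (k : ℤ) (φ : ℝ) (i j : Fin 3) :
    ContDiffAt ℝ n (fun q : ℝ × ℝ => frameTensor k q.2 (w₀ q.1) (w₁ q.1) (w₂ q.1) i j) (r, φ) := by
  have hfst {w : ℝ → ℝ} (hw : ContDiffAt ℝ n w r) :
      ContDiffAt ℝ n (fun q : ℝ × ℝ => w q.1) (r, φ) := hw.comp (r, φ) contDiffAt_fst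
  have hnvec (i : Fin 3) : ContDiff ℝ n fun q : ℝ × ℝ => nvec k q.2 i :=
    (contDiff_nvec k i).comp contDiff_snd
  have hmvec (i : Fin 3) : ContDiff ℝ n fun q : ℝ × ℝ => mvec k q.2 i :=
    (contDiff_mvec k i).comp contDiff_snd
  simp only [frameTensor_apply, E1_apply, E2mat_apply]
  have := hfst h₀
  have := hfst h₁
  have := hfst h₂
  fun_prop

lemma matLap_polar {Q : ℝ × ℝ → Mat3} {k : ℤ} {r φ : ℝ} (hr : r ≠ 0)
    (h₀ : ContDiffAt ℝ 2 w₀ r) (h₁ : ContDiffAt ℝ 2 w₁ r) (h₂ : ContDiffAt ℝ 2 w₂ r)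
    (hQ : ∀ᶠ q : ℝ × ℝ in 𝓝 (r, φ), Q (q.1 * cos q.2, q.1 * sin q.2) =
      frameTensor k q.2 (w₀ q.1) (w₁ q.1) (w₂ q.1)) :
    matLap Q (r * cos φ, r * sin φ) = frameTensor k φ
      (deriv (deriv w₀) r + deriv w₀ r / r)
      (deriv (deriv w₁) r + deriv w₁ r / r - (k : ℝ) ^ 2 * w₁ r / r ^ 2)
      (deriv (deriv w₂) r + deriv w₂ r / r - (k : ℝ) ^ 2 * w₂ r / r ^ 2) := by
  have hfirst {w : ℝ → ℝ} (hw : ContDiffAt ℝ 2 w r) : ∀ᶠ ρ in 𝓝 r, HasDerivAt w (deriv w ρ) ρ :=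
    eventually_hasDerivAt_of_contDiffAt hw one_le_two
  have hsecond {w : ℝ → ℝ} (hw : ContDiffAt ℝ 2 w r) :
      HasDerivAt (deriv w) (deriv (deriv w) r) r :=
    ((hw.derivWithin one_add_one_eq_two.le).differentiableAt one_ne_zero).hasDerivAt
  ext i j
  have hradial : ∀ᶠ ρ in 𝓝 r, HasDerivAt (fun ρ => frameTensor k φ (w₀ ρ) (w₁ ρ) (w₂ ρ) i j)
      (frameTensor k φ (deriv w₀ ρ) (deriv w₁ ρ) (deriv w₂ ρ) i j) ρ := by
    filter_upwards [hfirst h₀, hfirst h₁, hfirst h₂] with ρ hρ₀ hρ₁ hρ₂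
    exact hasDerivAt_frameTensor_radius hρ₀ hρ₁ hρ₂ k φ i j
  have hradial₂ := hasDerivAt_frameTensor_radius (hsecond h₀) (hsecond h₁) (hsecond h₂) k φ i j
  have hlap := lap_polar (f := fun x => Q x i j) hr (contDiffAt_frameTensor h₀ h₁ h₂ k φ i j)
    (hQ.mono fun q hq => congrFun (congrFun hq i) j)
  dsimp only at hlap
  rw [matLap, of_apply, hlap, deriv_deriv_eq_of_hasDerivAt hradial hradial₂,
    hradial.self_of_nhds.deriv, deriv_deriv_frameTensor_angle]
  simp only [frameTensor_apply]
  ring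

end FrameCalculus

/-- The ODE system of the radial profiles `w₀, w₁, w₂` at the radius `r`. -/
def RadialSystemAt (a2 b2 c2 : ℝ) (k : ℤ) (w₀ w₁ w₂ : ℝ → ℝ) (r : ℝ) : Prop :=
  (deriv (deriv w₀) r + deriv w₀ r / r =
    w₀ r * (-a2 + c2 * ((w₀ r) ^ 2 + (w₁ r) ^ 2 + (w₂ r) ^ 2) - (b2 / √6) * w₀ r)
      + (b2 / √6) * ((w₁ r) ^ 2 + (w₂ r) ^ 2)) ∧
  (deriv (deriv w₁) r + deriv w₁ r / r - (k : ℝ) ^ 2 * w₁ r / r ^ 2 =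
    w₁ r * (-a2 + c2 * ((w₀ r) ^ 2 + (w₁ r) ^ 2 + (w₂ r) ^ 2) + (2 * b2 / √6) * w₀ r)) ∧
  (deriv (deriv w₂) r + deriv w₂ r / r - (k : ℝ) ^ 2 * w₂ r / r ^ 2 =
    w₂ r * (-a2 + c2 * ((w₀ r) ^ 2 + (w₁ r) ^ 2 + (w₂ r) ^ 2) + (2 * b2 / √6) * w₀ r))

lemma matLap_eq_ELrhs_polar_iff {a2 b2 c2 : ℝ} {Q : ℝ × ℝ → Mat3} {k : ℤ} {w₀ w₁ w₂ : ℝ → ℝ}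
    {r φ : ℝ} (hr : r ≠ 0)
    (h₀ : ContDiffAt ℝ 2 w₀ r) (h₁ : ContDiffAt ℝ 2 w₁ r) (h₂ : ContDiffAt ℝ 2 w₂ r)
    (hQ : ∀ᶠ q : ℝ × ℝ in 𝓝 (r, φ), Q (q.1 * cos q.2, q.1 * sin q.2) =
      frameTensor k q.2 (w₀ q.1) (w₁ q.1) (w₂ q.1)) :
    matLap Q (r * cos φ, r * sin φ) = ELrhs a2 b2 c2 (Q (r * cos φ, r * sin φ)) ↔
      RadialSystemAt a2 b2 c2 k w₀ w₁ w₂ r := by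
  rw [matLap_polar hr h₀ h₁ h₂ hQ, hQ.self_of_nhds, ELrhs_frameTensor, frameTensor_inj,
    RadialSystemAt]

theorem stmt1_general (a2 b2 c2 : ℝ) (k : ℤ) {s : Set ℝ} (hs : IsOpen s) (hs₀ : s ⊆ Ioi 0)
    {w₀ w₁ w₂ : ℝ → ℝ} (hw₀ : ContDiffOn ℝ 2 w₀ s) (hw₁ : ContDiffOn ℝ 2 w₁ s)
    (hw₂ : ContDiffOn ℝ 2 w₂ s) {Q : ℝ × ℝ → Mat3}
    (hQ : ∀ r ∈ s, ∀ φ, Q (r * cos φ, r * sin φ) = frameTensor k φ (w₀ r) (w₁ r) (w₂ r)) :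
    (∀ x : ℝ × ℝ, √(x.1 ^ 2 + x.2 ^ 2) ∈ s → matLap Q x = ELrhs a2 b2 c2 (Q x)) ↔
      ∀ r ∈ s, RadialSystemAt a2 b2 c2 k w₀ w₁ w₂ r := by
  rw [forall_radius_mem_iff (hs₀.trans Ioi_subset_Ici_self)]
  refine forall₂_congr fun r hr => ?_
  have hsr : s ∈ 𝓝 r := hs.mem_nhds hr
  have hpoint (φ : ℝ) := matLap_eq_ELrhs_polar_iff (a2 := a2) (b2 := b2) (c2 := c2) (φ := φ)
    (hs₀ hr).ne' (hw₀.contDiffAt hsr) (hw₁.contDiffAt hsr) (hw₂.contDiffAt hsr)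
    ((continuousAt_fst.eventually_mem hsr).mono fun q hq => hQ q.1 hq q.2)
  simp only [hpoint, forall_const]

/-- equivalence between the Euler–Lagrange PDE and the ODE system for
maps of the form `Q = w₀(r)E₀ + w₁(r)E₁(φ) + w₂(r)E₂(φ)` on `B_R∖{0}`. -/
theorem stmt1 (a2 b2 c2 : ℝ) (ha : 0 < a2) (hb : 0 < b2) (hc : 0 < c2)
    (k : ℤ) (hk : k ≠ 0) (R : ℝ≥0∞) (hR : 0 < R)
    (w₀ w₁ w₂ : ℝ → ℝ)
    (hw₀ : ContDiffOn ℝ 2 w₀ {r : ℝ | 0 < r ∧ ENNReal.ofReal r < R})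
    (hw₁ : ContDiffOn ℝ 2 w₁ {r : ℝ | 0 < r ∧ ENNReal.ofReal r < R})
    (hw₂ : ContDiffOn ℝ 2 w₂ {r : ℝ | 0 < r ∧ ENNReal.ofReal r < R})
    (Q : ℝ × ℝ → Mat3)
    (hQ : ∀ r φ : ℝ, 0 < r → ENNReal.ofReal r < R →
      Q (r * Real.cos φ, r * Real.sin φ) = w₀ r • E0 + w₁ r • E1 k φ + w₂ r • E2mat k φ) :
    (∀ x : ℝ × ℝ, x ≠ 0 → inBall R x → matLap Q x = ELrhs a2 b2 c2 (Q x)) ↔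
    (∀ r : ℝ, 0 < r → ENNReal.ofReal r < R →
      (deriv (deriv w₀) r + deriv w₀ r / r =
        w₀ r * (-a2 + c2 * ((w₀ r)^2 + (w₁ r)^2 + (w₂ r)^2) - (b2 / Real.sqrt 6) * w₀ r)
          + (b2 / Real.sqrt 6) * ((w₁ r)^2 + (w₂ r)^2)) ∧
      (deriv (deriv w₁) r + deriv w₁ r / r - (k : ℝ)^2 * w₁ r / r^2 =
        w₁ r * (-a2 + c2 * ((w₀ r)^2 + (w₁ r)^2 + (w₂ r)^2) + (2 * b2 / Real.sqrt 6) * w₀ r)) ∧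
      (deriv (deriv w₂) r + deriv w₂ r / r - (k : ℝ)^2 * w₂ r / r^2 =
        w₂ r * (-a2 + c2 * ((w₀ r)^2 + (w₁ r)^2 + (w₂ r)^2) + (2 * b2 / Real.sqrt 6) * w₀ r))) := by
  simpa only [mem_ofPred_eq, and_imp, sqrt_sq_add_sq_pos_iff, inBall, RadialSystemAt] using
    stmt1_general a2 b2 c2 k (isOpen_pos_and_ofReal_lt R) (fun _ hr => hr.1) hw₀ hw₁ hw₂
      fun r hr φ => hQ r φ hr.1 hr.2
end

section
/- Let a²,b²,c² > 0 and k ∈ ℤ∖{0}. There exist functions u ∈ C²([0,∞)) ∩ C^∞((0,∞)) and v ∈ C^∞([0,∞)) satisfying on (0,∞) the ODE system u'' + u'/r − k²u/r² = u[−a² + √(2/3)·b²v + c²(u² + v²)] and v'' + v'/r = v[−a² − (1/√6)b²v + c²(u² + v²)] + (1/√6)b²u², together with the boundary conditions u(0) = 0, v'(0) = 0, lim_{r→∞} u(r) = s₊/√2, lim_{r→∞} v(r) = −s₊/√6, and moreover u(r) > 0 and v(r) < 0 for all r ∈ (0,∞). -/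
open Real Matrix
open scoped ENNReal

/-!
Write `a² = c² s² (1 + δ) / 3` and `b² = c² s (1 - δ)` with `s = s₊` and `|δ| < 1`. After a dilation
of the radius, `u = (s / √2) U` and `v = (s / √6) (δ y - (1 + δ))` reduce the problem to a system
for `(U, y)` with values in `[0, 1]²` and both limits equal to `1`; the bounds on `y` give `v < 0`.
Writing `U = rⁿ a` with `n = |k|` trades the centrifugal term `n² U / r²` for the radial Laplacian
in dimension `2 n + 2`.

Subtracting `r² + e + 1` from the radial Laplacian in dimension `e + 1` gives an operator which,
after conjugation by `exp (r² / 2)`, is inverted by two explicit integrations; its inverse preserves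
order up to sign. With these potentials subtracted from both sides of the system, the negated
right-hand sides increase with `(a, y)`, and the system is a fixed-point equation for a monotone
map. The pair `((1 + r²)^(-n / 2), 1)` is a supersolution and there is an explicit subsolution below
it, so monotone iteration yields a solution in between, which the two bounds force to have the right
limits. Smoothness follows by bootstrapping: the inverse gains a derivative on even sources.
-/

section

open MeasureTheory Set Filter Topology

/-! ### Weighted radial means -/

section WeightedMean

variable {E : Type*} [NormedAddCommGroup E] [NormedSpace ℝ E] {g : ℝ → E}

/-- The weighted radial mean `∫₀¹ tᵉ g(st) dt`. For `s > 0` it is `s⁻ᵉ⁻¹ ∫₀ˢ τᵉ g(τ) dτ`, the radial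
flux produced by the source `g` in dimension `e + 1`, divided by `s`; the form used here is smooth
across `s = 0`. -/
noncomputable def weightedMean (e : ℕ) (g : ℝ → E) (s : ℝ) : E :=
  ∫ t in (0 : ℝ)..1, t ^ e • g (s * t)

lemma continuous_weightedMean (e : ℕ) (hg : Continuous g) : Continuous (weightedMean e g) := by
  unfold weightedMean
  apply intervalIntegral.continuous_parametric_intervalIntegral_of_continuous'
  fun_prop

lemma hasDerivAt_weightedMean (e : ℕ) (hg : ContDiff ℝ 1 g) (s : ℝ) :
    HasDerivAt (weightedMean e g) (weightedMean (e + 1) (deriv g) s) s := by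
  have hg' : Continuous (deriv g) := hg.continuous_deriv le_rfl
  have hgc := hg.continuous
  obtain ⟨M, hM⟩ := (isCompact_Icc (a := -(|s| + 1)) (b := |s| + 1)).exists_bound_of_continuousOn
    hg'.continuousOn
  refine (intervalIntegral.hasDerivAt_integral_of_dominated_loc_of_deriv_le
    (F' := fun x t => t ^ (e + 1) • deriv g (x * t)) (bound := fun _ => M)
    (Metric.ball_mem_nhds s one_pos) ?_ ?_ ?_ ?_ intervalIntegrable_const ?_).2
  · filter_upwards with x
    exact (by fun_prop : Continuous fun t => t ^ e • g (x * t)).aestronglyMeasurable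
  · exact (by fun_prop : Continuous fun t => t ^ e • g (s * t)).intervalIntegrable _ _
  · exact (by fun_prop : Continuous fun t => t ^ (e + 1) • deriv g (s * t)).aestronglyMeasurable
  · filter_upwards with t ht x hx
    rw [uIoc_of_le zero_le_one] at ht
    have hx' : |x| ≤ |s| + 1 := by
      rw [Metric.mem_ball, Real.dist_eq] at hx
      linarith [abs_sub_abs_le_abs_sub x s]
    have hxt : |x * t| ≤ |s| + 1 := by
      rw [abs_mul, abs_of_pos ht.1]
      nlinarith [abs_nonneg x, ht.2, ht.1]
    rw [norm_smul, norm_pow, Real.norm_of_nonneg ht.1.le]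
    exact (mul_le_of_le_one_left (norm_nonneg _) (pow_le_one₀ ht.1.le ht.2)).trans
      (hM _ (abs_le.1 hxt))
  · filter_upwards with t _ x _
    have hgt : HasDerivAt g (deriv g (x * t)) (x * t) :=
      (hg.differentiable one_ne_zero _).hasDerivAt
    have hcomp := (hgt.scomp x ((hasDerivAt_id x).mul_const t)).const_smul (t ^ e)
    rwa [one_mul, smul_smul, ← pow_succ] at hcomp

lemma contDiff_weightedMean (m : ℕ) :
    ∀ (e : ℕ) {g : ℝ → E}, ContDiff ℝ m g → ContDiff ℝ m (weightedMean e g) := by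
  induction m with
  | zero => exact fun e g hg => contDiff_zero.2 (continuous_weightedMean e hg.continuous)
  | succ m ih =>
    intro e g hg
    have hg₁ : ContDiff ℝ 1 g := hg.of_le (by exact_mod_cast Nat.succ_le_succ (Nat.zero_le m))
    push_cast at hg ⊢
    refine contDiff_succ_iff_deriv.2
      ⟨fun s => (hasDerivAt_weightedMean e hg₁ s).differentiableAt, by simp, ?_⟩
    rw [funext fun s => (hasDerivAt_weightedMean e hg₁ s).deriv]
    exact ih _ (contDiff_succ_iff_deriv.1 hg).2.2

lemma pow_smul_weightedMean (e : ℕ) (g : ℝ → E) (s : ℝ) :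
    s ^ (e + 1) • weightedMean e g s = ∫ τ in (0 : ℝ)..s, τ ^ e • g τ := by
  have hsubst := intervalIntegral.smul_integral_comp_mul_left (a := 0) (b := 1)
    (f := fun τ => τ ^ e • g τ) s
  rw [mul_zero, mul_one] at hsubst
  rw [← hsubst, weightedMean, pow_succ', mul_smul, ← intervalIntegral.integral_smul]
  simp only [mul_pow, mul_smul]

lemma hasDerivAt_weightedMean_of_pos [CompleteSpace E] (e : ℕ) (hg : Continuous g) {s : ℝ}
    (hs : 0 < s) :
    HasDerivAt (weightedMean e g) (s⁻¹ • (g s - (e + 1 : ℝ) • weightedMean e g s)) s := by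
  have hprim : HasDerivAt (fun s => ∫ τ in (0 : ℝ)..s, τ ^ e • g τ) (s ^ e • g s) s :=
    (Continuous.integral_hasStrictDerivAt (by fun_prop) 0 s).hasDerivAt
  have hquot := ((hasDerivAt_pow (e + 1) s).fun_inv (pow_pos hs _).ne').fun_smul hprim
  have hmean : weightedMean e g =ᶠ[𝓝 s]
      fun s => (s ^ (e + 1))⁻¹ • ∫ τ in (0 : ℝ)..s, τ ^ e • g τ := by
    filter_upwards [eventually_gt_nhds hs] with x hx
    rw [← pow_smul_weightedMean, inv_smul_smul₀ (pow_pos hx _).ne']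
  refine (hquot.congr_of_eventuallyEq hmean).congr_deriv ?_
  rw [← pow_smul_weightedMean]
  have hpow := (pow_pos hs e).ne'
  rw [smul_sub, smul_smul, smul_smul, smul_smul, sub_eq_add_neg, ← neg_smul]
  congr 2
  · rw [pow_succ]
    field_simp
  · push_cast
    simp only [pow_succ]
    field_simp

lemma stronglyMeasurable_weightedMean (e : ℕ) (hg : StronglyMeasurable g) :
    StronglyMeasurable (weightedMean e g) := by
  unfold weightedMean
  simp_rw [intervalIntegral.integral_of_le zero_le_one]
  refine StronglyMeasurable.integral_prod_right (f := fun s t : ℝ => t ^ e • g (s * t)) ?_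
  exact (by fun_prop : Measurable fun p : ℝ × ℝ => p.2 ^ e).stronglyMeasurable.smul
    (hg.comp_measurable (by fun_prop))

lemma even_weightedMean (e : ℕ) (hg : Function.Even g) : Function.Even (weightedMean e g) := by
  intro s
  simp only [weightedMean, neg_mul, hg _]

end WeightedMean

/-! ### The inverse of a radial Schrödinger operator -/

section RadialInverse

/-- The Gaussian conjugate of the weighted radial mean. If `w = radialInverse e h` then
`w' = r w - r gaussianMean e h`. -/
noncomputable def gaussianMean (e : ℕ) (h : ℝ → ℝ) (s : ℝ) : ℝ :=
  exp (-s ^ 2 / 2) * weightedMean e (fun x => exp (x ^ 2 / 2) * h x) s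

/-- Minus the derivative of `exp (-r² / 2) * radialInverse e h r`. -/
noncomputable def fluxDensity (e : ℕ) (h : ℝ → ℝ) (s : ℝ) : ℝ :=
  s * (exp (-s ^ 2 / 2) * gaussianMean e h s)

/-- The even, subexponential solution `w` of `w'' + (e / r) w' - (r² + e + 1) w = -h`. The shift
`r² + e + 1` is the one for which `exp (r² / 2)` solves the homogeneous equation, which makes the
inverse explicit and visibly monotone. -/
noncomputable def radialInverse (e : ℕ) (h : ℝ → ℝ) (r : ℝ) : ℝ :=
  exp (r ^ 2 / 2) * ∫ s in Ioi |r|, fluxDensity e h s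

/-- The class of sources `h` for which `radialInverse e h` is defined by a convergent integral. -/
structure QuadraticGrowth (M : ℝ) (h : ℝ → ℝ) : Prop where
  measurable : Measurable h
  abs_le : ∀ x, |h x| ≤ M * (1 + x ^ 2)

/-- The common integrable majorant of the flux densities of all sources of growth `M`. -/
noncomputable def fluxMajorant (M s : ℝ) : ℝ :=
  M * (|s| * (1 + s ^ 2) * exp (-s ^ 2 / 2))

lemma integrable_fluxMajorant (M : ℝ) : Integrable (fluxMajorant M) := by
  have h₁ := integrable_rpow_mul_exp_neg_mul_sq (b := 1 / 2) (by norm_num) (s := 1) (by norm_num)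
  have h₃ := integrable_rpow_mul_exp_neg_mul_sq (b := 1 / 2) (by norm_num) (s := 3) (by norm_num)
  refine ((h₁.norm.add h₃.norm).const_mul M).congr (ae_of_all _ fun s => ?_)
  have hcube : s ^ (3 : ℝ) = s ^ 3 := by exact_mod_cast rpow_natCast s 3
  simp only [Pi.add_apply, rpow_one, norm_mul, hcube, Real.norm_eq_abs, abs_pow, abs_exp,
    fluxMajorant]
  rw [show -(1 / 2) * s ^ 2 = -s ^ 2 / 2 by ring, ← sq_abs s]
  ring

lemma exp_mul_exp_neg_sq_half (r : ℝ) : exp (r ^ 2 / 2) * exp (-r ^ 2 / 2) = 1 := by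
  rw [← Real.exp_add, neg_div, add_neg_cancel, Real.exp_zero]

lemma hasDerivAt_exp_sq_half (r : ℝ) :
    HasDerivAt (fun r => exp (r ^ 2 / 2)) (r * exp (r ^ 2 / 2)) r := by
  refine ((hasDerivAt_pow 2 r).div_const 2).exp.congr_deriv ?_
  push_cast
  ring

lemma hasDerivAt_exp_neg_sq_half (r : ℝ) :
    HasDerivAt (fun r => exp (-r ^ 2 / 2)) (-r * exp (-r ^ 2 / 2)) r := by
  refine ((hasDerivAt_pow 2 r).fun_neg.div_const 2).exp.congr_deriv ?_
  push_cast
  ring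

lemma tendsto_exp_neg_sq_half : Tendsto (fun r : ℝ => exp (-r ^ 2 / 2)) atTop (𝓝 0) := by
  simp only [neg_div]
  exact tendsto_exp_neg_atTop_nhds_zero.comp
    ((tendsto_pow_atTop two_ne_zero).atTop_div_const two_pos)

variable {e : ℕ} {M M' : ℝ} {h h' : ℝ → ℝ}

namespace QuadraticGrowth

lemma nonneg (hh : QuadraticGrowth M h) : 0 ≤ M := by
  simpa using (abs_nonneg _).trans (hh.abs_le 0)

lemma neg (hh : QuadraticGrowth M h) : QuadraticGrowth M fun x => -h x :=
  ⟨hh.measurable.neg, fun x => by simpa using hh.abs_le x⟩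

lemma norm_integrand_le {s t : ℝ} (hh : QuadraticGrowth M h) (ht : t ∈ Ioc (0 : ℝ) 1) :
    ‖t ^ e • (exp ((s * t) ^ 2 / 2) * h (s * t))‖ ≤ M * (1 + s ^ 2) * exp (s ^ 2 / 2) := by
  have hM := hh.nonneg
  have hsq : (s * t) ^ 2 ≤ s ^ 2 := by
    rw [mul_pow]
    exact mul_le_of_le_one_right (sq_nonneg s) (pow_le_one₀ ht.1.le ht.2)
  have hgrowth : |h (s * t)| ≤ M * (1 + s ^ 2) :=
    (hh.abs_le _).trans (mul_le_mul_of_nonneg_left (by linarith) hM)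
  rw [norm_smul, norm_pow, Real.norm_of_nonneg ht.1.le, norm_mul, Real.norm_eq_abs,
    Real.norm_eq_abs, abs_exp]
  calc t ^ e * (exp ((s * t) ^ 2 / 2) * |h (s * t)|)
      ≤ 1 * (exp (s ^ 2 / 2) * (M * (1 + s ^ 2))) := by
        gcongr
        exact pow_le_one₀ ht.1.le ht.2
    _ = _ := by ring

lemma intervalIntegrable (hh : QuadraticGrowth M h) (s : ℝ) :
    IntervalIntegrable (fun t => t ^ e • (exp ((s * t) ^ 2 / 2) * h (s * t))) volume 0 1 := by
  have hm := hh.measurable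
  rw [intervalIntegrable_iff_integrableOn_Ioc_of_le zero_le_one]
  refine Measure.integrableOn_of_bounded (M := M * (1 + s ^ 2) * exp (s ^ 2 / 2)) (by simp)
    (Measurable.aestronglyMeasurable (by fun_prop)) ?_
  exact (ae_restrict_iff' measurableSet_Ioc).2
    (ae_of_all _ fun t ht => hh.norm_integrand_le ht)

lemma measurable_fluxDensity (hh : QuadraticGrowth M h) : Measurable (fluxDensity e h) := by
  have hm := hh.measurable
  have hmean : Measurable (weightedMean e fun x => exp (x ^ 2 / 2) * h x) :=
    (stronglyMeasurable_weightedMean e (by fun_prop : Measurable _).stronglyMeasurable).measurable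
  unfold fluxDensity gaussianMean
  fun_prop

lemma abs_gaussianMean_le (hh : QuadraticGrowth M h) (s : ℝ) :
    |gaussianMean e h s| ≤ M * (1 + s ^ 2) := by
  have hmean : ‖weightedMean e (fun x => exp (x ^ 2 / 2) * h x) s‖ ≤
      M * (1 + s ^ 2) * exp (s ^ 2 / 2) * |1 - 0| :=
    intervalIntegral.norm_integral_le_of_norm_le_const fun t ht =>
      hh.norm_integrand_le (uIoc_of_le (zero_le_one (α := ℝ)) ▸ ht)
  rw [sub_zero, abs_one, mul_one, Real.norm_eq_abs] at hmean
  rw [gaussianMean, abs_mul, abs_exp]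
  calc _ ≤ exp (-s ^ 2 / 2) * (M * (1 + s ^ 2) * exp (s ^ 2 / 2)) := by gcongr
    _ = M * (1 + s ^ 2) * (exp (s ^ 2 / 2) * exp (-s ^ 2 / 2)) := by ring
    _ = M * (1 + s ^ 2) := by rw [exp_mul_exp_neg_sq_half, mul_one]

lemma norm_fluxDensity_le (hh : QuadraticGrowth M h) (s : ℝ) :
    ‖fluxDensity e h s‖ ≤ fluxMajorant M s := by
  rw [fluxDensity, Real.norm_eq_abs, abs_mul, abs_mul, abs_exp]
  calc |s| * (exp (-s ^ 2 / 2) * |gaussianMean e h s|)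
      ≤ |s| * (exp (-s ^ 2 / 2) * (M * (1 + s ^ 2))) := by
        gcongr
        exact hh.abs_gaussianMean_le s
    _ = fluxMajorant M s := by
        unfold fluxMajorant
        ring

lemma integrable_fluxDensity (hh : QuadraticGrowth M h) : Integrable (fluxDensity e h) :=
  (integrable_fluxMajorant M).mono' hh.measurable_fluxDensity.aestronglyMeasurable
    (ae_of_all _ hh.norm_fluxDensity_le)

end QuadraticGrowth

lemma fluxDensity_mono (hh : QuadraticGrowth M h) (hh' : QuadraticGrowth M' h')
    (hle : ∀ x, 0 ≤ x → h x ≤ h' x) {s : ℝ} (hs : 0 ≤ s) :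
    fluxDensity e h s ≤ fluxDensity e h' s := by
  unfold fluxDensity gaussianMean
  gcongr
  refine intervalIntegral.integral_mono_on zero_le_one (hh.intervalIntegrable s)
    (hh'.intervalIntegrable s) fun t ht => ?_
  have := hle (s * t) (mul_nonneg hs ht.1)
  have := ht.1
  dsimp only
  gcongr

lemma radialInverse_mono (hh : QuadraticGrowth M h) (hh' : QuadraticGrowth M' h')
    (hle : ∀ x, 0 ≤ x → h x ≤ h' x) (r : ℝ) : radialInverse e h r ≤ radialInverse e h' r :=
  mul_le_mul_of_nonneg_left
    (setIntegral_mono_on hh.integrable_fluxDensity.integrableOn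
      hh'.integrable_fluxDensity.integrableOn measurableSet_Ioi
      fun _ hs => fluxDensity_mono hh hh' hle ((abs_nonneg r).trans hs.le))
    (exp_nonneg _)

lemma radialInverse_neg (r : ℝ) : radialInverse e (fun x => -h x) r = -radialInverse e h r := by
  simp only [radialInverse, fluxDensity, gaussianMean, weightedMean, mul_neg, smul_neg,
    intervalIntegral.integral_neg, integral_neg]

lemma even_radialInverse : Function.Even (radialInverse e h) := fun r => by
  simp only [radialInverse, neg_sq, abs_neg]

lemma apply_abs_of_even {f : ℝ → ℝ} (hf : Function.Even f) (r : ℝ) : f |r| = f r := by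
  rcases abs_choice r with hr | hr <;> rw [hr]
  exact hf r

lemma radialInverse_of_nonneg (hh : QuadraticGrowth M h) {r : ℝ} (hr : 0 ≤ r) :
    radialInverse e h r = exp (r ^ 2 / 2) *
      ((∫ s in Ioi 0, fluxDensity e h s) - ∫ s in (0 : ℝ)..r, fluxDensity e h s) := by
  have hsplit := intervalIntegral.integral_Ioi_sub_Ioi
    ((hh.integrable_fluxDensity (e := e)).integrableOn (s := Ioi (0 : ℝ))) hr
  rw [radialInverse, abs_of_nonneg hr, ← hsplit, sub_sub_cancel]

lemma exp_mul_radialInverse_of_nonneg (hh : QuadraticGrowth M h) {r : ℝ} (hr : 0 ≤ r) :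
    exp (-r ^ 2 / 2) * radialInverse e h r =
      (∫ s in Ioi 0, fluxDensity e h s) - ∫ s in (0 : ℝ)..r, fluxDensity e h s := by
  rw [radialInverse_of_nonneg hh hr, ← mul_assoc, mul_comm (exp _), exp_mul_exp_neg_sq_half,
    one_mul]

lemma continuous_radialInverse (hh : QuadraticGrowth M h) : Continuous (radialInverse e h) := by
  have heq : radialInverse e h = fun r => exp (|r| ^ 2 / 2) *
      ((∫ s in Ioi 0, fluxDensity e h s) - ∫ s in (0 : ℝ)..|r|, fluxDensity e h s) := by
    ext r
    rw [← apply_abs_of_even even_radialInverse, radialInverse_of_nonneg hh (abs_nonneg r)]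
  rw [heq]
  have hprim := intervalIntegral.continuous_primitive
    (fun a b => (hh.integrable_fluxDensity (e := e)).intervalIntegrable) (0 : ℝ)
  fun_prop

lemma tendsto_fluxDensity {H : ℕ → ℝ → ℝ} (hH : ∀ m, QuadraticGrowth M (H m))
    (hlim : ∀ x, Tendsto (fun m => H m x) atTop (𝓝 (h x))) (s : ℝ) :
    Tendsto (fun m => fluxDensity e (H m) s) atTop (𝓝 (fluxDensity e h s)) := by
  unfold fluxDensity gaussianMean
  refine Tendsto.const_mul _ (Tendsto.const_mul _ (Tendsto.const_mul _ ?_))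
  refine intervalIntegral.tendsto_integral_filter_of_dominated_convergence
    (fun _ => M * (1 + s ^ 2) * exp (s ^ 2 / 2)) ?_ ?_ intervalIntegrable_const ?_
  · refine Eventually.of_forall fun m => ?_
    have hm := (hH m).measurable
    exact Measurable.aestronglyMeasurable (by fun_prop)
  · refine Eventually.of_forall fun m => ae_of_all _ fun t ht => ?_
    exact (hH m).norm_integrand_le (uIoc_of_le (zero_le_one (α := ℝ)) ▸ ht)
  · exact ae_of_all _ fun t _ => ((hlim _).const_mul _).const_smul _

lemma tendsto_radialInverse {H : ℕ → ℝ → ℝ} (hH : ∀ m, QuadraticGrowth M (H m))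
    (hlim : ∀ x, Tendsto (fun m => H m x) atTop (𝓝 (h x))) (r : ℝ) :
    Tendsto (fun m => radialInverse e (H m) r) atTop (𝓝 (radialInverse e h r)) :=
  Tendsto.const_mul _ <| tendsto_integral_of_dominated_convergence (fluxMajorant M)
    (fun m => (hH m).measurable_fluxDensity.aestronglyMeasurable)
    (integrable_fluxMajorant M).integrableOn
    (fun m => ae_of_all _ (hH m).norm_fluxDensity_le)
    (ae_of_all _ (tendsto_fluxDensity hH hlim))

lemma tendsto_exp_mul_radialInverse (hh : QuadraticGrowth M h) :
    Tendsto (fun r => exp (-r ^ 2 / 2) * radialInverse e h r) atTop (𝓝 0) := by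
  have htail := (intervalIntegral_tendsto_integral_Ioi 0
    (hh.integrable_fluxDensity (e := e)).integrableOn tendsto_id).const_sub
    (∫ s in Ioi 0, fluxDensity e h s)
  rw [sub_self] at htail
  refine htail.congr' ?_
  filter_upwards [eventually_ge_atTop 0] with r hr
  exact (exp_mul_radialInverse_of_nonneg hh hr).symm

lemma contDiff_gaussianMean {m : ℕ} (hs : ContDiff ℝ m h) : ContDiff ℝ m (gaussianMean e h) :=
  (by fun_prop : ContDiff ℝ m fun s : ℝ => exp (-s ^ 2 / 2)).mul
    (contDiff_weightedMean m e (by fun_prop))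

lemma contDiff_fluxDensity {m : ℕ} (hs : ContDiff ℝ m h) : ContDiff ℝ m (fluxDensity e h) :=
  contDiff_id.mul ((by fun_prop : ContDiff ℝ m fun s : ℝ => exp (-s ^ 2 / 2)).mul
    (contDiff_gaussianMean hs))

lemma continuous_gaussianMean (hc : Continuous h) : Continuous (gaussianMean e h) :=
  (contDiff_gaussianMean (contDiff_zero.2 hc)).continuous

lemma continuous_fluxDensity (hc : Continuous h) : Continuous (fluxDensity e h) :=
  (contDiff_fluxDensity (contDiff_zero.2 hc)).continuous

lemma hasDerivAt_gaussianMean (hc : Continuous h) {r : ℝ} (hr : 0 < r) :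
    HasDerivAt (gaussianMean e h)
      ((h r - (e + 1) * gaussianMean e h r) / r - r * gaussianMean e h r) r := by
  have hW := hasDerivAt_weightedMean_of_pos e
    (by fun_prop : Continuous fun x => exp (x ^ 2 / 2) * h x) hr
  refine ((hasDerivAt_exp_neg_sq_half r).fun_mul hW).congr_deriv ?_
  simp only [gaussianMean, smul_eq_mul]
  have hexp := exp_mul_exp_neg_sq_half r
  generalize exp (-r ^ 2 / 2) = E at *
  field_simp
  linear_combination h r * hexp

lemma hasDerivAt_exp_mul_radialInverse (hh : QuadraticGrowth M h) (hc : Continuous h) {r : ℝ}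
    (hr : 0 < r) :
    HasDerivAt (fun r => exp (-r ^ 2 / 2) * radialInverse e h r) (-fluxDensity e h r) r := by
  have hprim := (Continuous.integral_hasStrictDerivAt
    (continuous_fluxDensity (e := e) hc) 0 r).hasDerivAt
  refine (hprim.const_sub (∫ s in Ioi 0, fluxDensity e h s)).congr_of_eventuallyEq ?_
  filter_upwards [eventually_gt_nhds hr] with x hx
  exact exp_mul_radialInverse_of_nonneg hh hx.le

lemma hasDerivAt_radialInverse (hh : QuadraticGrowth M h) (hc : Continuous h) {r : ℝ}
    (hr : 0 < r) :
    HasDerivAt (radialInverse e h) (r * radialInverse e h r - r * gaussianMean e h r) r := by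
  have hmul := (hasDerivAt_exp_sq_half r).fun_mul
    (hasDerivAt_exp_mul_radialInverse (e := e) hh hc hr)
  simp only [← mul_assoc, exp_mul_exp_neg_sq_half, one_mul] at hmul
  refine hmul.congr_deriv ?_
  rw [fluxDensity]
  linear_combination (r * radialInverse e h r - r * gaussianMean e h r) *
    exp_mul_exp_neg_sq_half r

/-- The radial Laplacian `w'' + (e / r) w'` in dimension `e + 1`. At `r = 0` the quotient is the
junk value `0`, so it is only used for `r > 0`. -/
noncomputable def radialLaplacian (e : ℕ) (w : ℝ → ℝ) (r : ℝ) : ℝ :=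
  deriv (deriv w) r + e / r * deriv w r

lemma radialLaplacian_eq {w w' : ℝ → ℝ} {w'' r : ℝ} (hr : 0 < r)
    (hw : ∀ x, 0 < x → HasDerivAt w (w' x) x) (hw' : HasDerivAt w' w'' r) :
    radialLaplacian e w r = w'' + e / r * w' r := by
  have hderiv : deriv w =ᶠ[𝓝 r] w' := by
    filter_upwards [eventually_gt_nhds hr] with x hx using (hw x hx).deriv
  rw [radialLaplacian, (hw'.congr_of_eventuallyEq hderiv).deriv, (hw r hr).deriv]

lemma radialLaplacian_radialInverse (hh : QuadraticGrowth M h) (hc : Continuous h) {r : ℝ}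
    (hr : 0 < r) :
    radialLaplacian e (radialInverse e h) r =
      (r ^ 2 + e + 1) * radialInverse e h r - h r := by
  have hG' := ((hasDerivAt_id r).fun_mul (hasDerivAt_radialInverse (e := e) hh hc hr)).fun_sub
    ((hasDerivAt_id r).fun_mul (hasDerivAt_gaussianMean (e := e) hc hr))
  rw [radialLaplacian_eq hr (fun x hx => hasDerivAt_radialInverse hh hc hx) hG']
  simp only [id]
  field_simp
  ring

lemma radialLaplacian_neg (e : ℕ) (w : ℝ → ℝ) (r : ℝ) :
    radialLaplacian e (fun x => -w x) r = -radialLaplacian e w r := by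
  simp only [radialLaplacian, deriv.fun_neg', mul_neg, neg_add]

lemma deriv_zero_of_even {w : ℝ → ℝ} (hw : Function.Even w) : deriv w 0 = 0 := by
  have hneg := deriv_comp_neg w 0
  rw [show (fun x => w (-x)) = w from funext hw, neg_zero] at hneg
  linarith

lemma monotoneOn_Ici_of_hasDerivAt_nonneg {f f' : ℝ → ℝ} {a : ℝ} (hf : ContinuousOn f (Ici a))
    (hf' : ∀ x, a < x → HasDerivAt f (f' x) x) (hnonneg : ∀ x, a < x → 0 ≤ f' x) :
    MonotoneOn f (Ici a) := by
  refine monotoneOn_of_hasDerivWithinAt_nonneg (convex_Ici a) hf (f' := f') ?_ ?_ <;>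
    rw [interior_Ici]
  exacts [fun x hx => (hf' x hx).hasDerivWithinAt, hnonneg]

/-- With `w' - r w + r gaussianMean` as first-order unknown, the second-order inequality becomes a
first-order one with integrating factor `rᵉ exp (r² / 2)`. -/
lemma flux_nonneg_of_subsolution {w : ℝ → ℝ} (hc : Continuous h) (hw : ContDiff ℝ 2 w)
    (hev : Function.Even w)
    (hle : ∀ r, 0 < r → 0 ≤ radialLaplacian e w r - (r ^ 2 + e + 1) * w r + h r) {r : ℝ}
    (hr : 0 < r) : 0 ≤ deriv w r - r * w r + r * gaussianMean e h r := by
  set N : ℝ → ℝ := fun x =>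
    x ^ e * (exp (x ^ 2 / 2) * (deriv w x - x * w x + x * gaussianMean e h x)) with hN
  have hw' : ContDiff ℝ 1 (deriv w) := ((contDiff_succ_iff_deriv (n := 1)).1 hw).2.2
  have hN' : ∀ x, 0 < x → HasDerivAt N
      (x ^ e * exp (x ^ 2 / 2) * (radialLaplacian e w x - (x ^ 2 + e + 1) * w x + h x)) x := by
    intro x hx
    have dw := (hw.differentiable two_ne_zero x).hasDerivAt
    have dw' := (hw'.differentiable one_ne_zero x).hasDerivAt
    have dflux := (dw'.fun_sub ((hasDerivAt_id x).fun_mul dw)).fun_add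
      ((hasDerivAt_id x).fun_mul (hasDerivAt_gaussianMean (e := e) hc hx))
    refine ((hasDerivAt_pow e x).fun_mul
      ((hasDerivAt_exp_sq_half x).fun_mul dflux)).congr_deriv ?_
    have hpow : (e : ℝ) * x ^ (e - 1) = e * x ^ e / x := by
      rcases e with _ | i
      · simp
      · rw [Nat.add_sub_cancel, pow_succ]
        field_simp
    rw [hpow, radialLaplacian]
    simp only [id]
    field_simp
    ring
  have hNc : Continuous N := by
    have := hw.continuous
    have := hw'.continuous
    have := continuous_gaussianMean (e := e) hc
    fun_prop
  have hNr : N 0 ≤ N r := monotoneOn_Ici_of_hasDerivAt_nonneg hNc.continuousOn hN'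
    (fun x hx => mul_nonneg (by positivity) (hle x hx)) self_mem_Ici hr.le hr.le
  simp only [hN, zero_mul, deriv_zero_of_even hev, sub_zero, add_zero, mul_zero] at hNr
  exact nonneg_of_mul_nonneg_right (nonneg_of_mul_nonneg_right hNr (by positivity)) (by positivity)

lemma le_radialInverse {w : ℝ → ℝ} {B : ℝ} (hh : QuadraticGrowth M h) (hc : Continuous h)
    (hw : ContDiff ℝ 2 w) (hev : Function.Even w) (hB : ∀ r, |w r| ≤ B)
    (hle : ∀ r, 0 < r → 0 ≤ radialLaplacian e w r - (r ^ 2 + e + 1) * w r + h r) (r : ℝ) :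
    w r ≤ radialInverse e h r := by
  set D : ℝ → ℝ := fun x =>
    exp (-x ^ 2 / 2) * w x - exp (-x ^ 2 / 2) * radialInverse e h x
  have hD' : ∀ x, 0 < x → HasDerivAt D
      (exp (-x ^ 2 / 2) * (deriv w x - x * w x + x * gaussianMean e h x)) x := by
    intro x hx
    refine (((hasDerivAt_exp_neg_sq_half x).fun_mul
      (hw.differentiable two_ne_zero x).hasDerivAt).fun_sub
      (hasDerivAt_exp_mul_radialInverse (e := e) hh hc hx)).congr_deriv ?_
    rw [fluxDensity]
    ring
  have hDc : Continuous D := by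
    have := hw.continuous
    have := continuous_radialInverse (e := e) hh
    fun_prop
  have hmono : MonotoneOn D (Ici 0) :=
    monotoneOn_Ici_of_hasDerivAt_nonneg hDc.continuousOn hD'
      fun x hx => mul_nonneg (exp_nonneg _) (flux_nonneg_of_subsolution hc hw hev hle hx)
  have hlim : Tendsto D atTop (𝓝 0) := by
    have hdecay : Tendsto (fun x => exp (-x ^ 2 / 2) * w x) atTop (𝓝 0) :=
      tendsto_exp_neg_sq_half.zero_mul_isBoundedUnder_le (isBoundedUnder_of ⟨B, hB⟩)
    simpa using hdecay.sub (tendsto_exp_mul_radialInverse hh)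
  have hDr : D |r| ≤ 0 := by
    refine ge_of_tendsto hlim ?_
    filter_upwards [eventually_ge_atTop |r|] with y hy
    exact hmono (abs_nonneg r) ((abs_nonneg r).trans hy) hy
  rw [← apply_abs_of_even hev, ← apply_abs_of_even even_radialInverse]
  exact le_of_mul_le_mul_left (sub_nonpos.1 hDr) (exp_pos _)

lemma radialInverse_le {w : ℝ → ℝ} {B : ℝ} (hh : QuadraticGrowth M h) (hc : Continuous h)
    (hw : ContDiff ℝ 2 w) (hev : Function.Even w) (hB : ∀ r, |w r| ≤ B)
    (hle : ∀ r, 0 < r → radialLaplacian e w r - (r ^ 2 + e + 1) * w r + h r ≤ 0) (r : ℝ) :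
    radialInverse e h r ≤ w r := by
  have hneg := le_radialInverse (e := e) (w := fun x => -w x) (B := B) hh.neg hc.neg hw.neg
    (fun x => congrArg Neg.neg (hev x)) (by simpa using hB)
    (fun x hx => by
      rw [radialLaplacian_neg]
      linarith [hle x hx]) r
  rwa [radialInverse_neg, neg_le_neg_iff] at hneg

lemma radialInverse_of_even (hh : QuadraticGrowth M h) (hev : Function.Even h) (r : ℝ) :
    radialInverse e h r = exp (r ^ 2 / 2) *
      ((∫ s in Ioi 0, fluxDensity e h s) - ∫ s in (0 : ℝ)..r, fluxDensity e h s) := by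
  have hevg : Function.Even fun x => exp (x ^ 2 / 2) * h x := fun x => by
    simp only [neg_sq, hev x]
  have hodd : ∀ s, fluxDensity e h (-s) = -fluxDensity e h s := fun s => by
    simp only [fluxDensity, gaussianMean, neg_sq, neg_mul, even_weightedMean e hevg s]
  have heven : Function.Even fun r => ∫ s in (0 : ℝ)..r, fluxDensity e h s := fun r => by
    have hsubst := intervalIntegral.integral_comp_neg (a := 0) (b := r) (fluxDensity e h)
    simp only [hodd, intervalIntegral.integral_neg, neg_zero] at hsubst
    beta_reduce
    rw [intervalIntegral.integral_symm, ← hsubst, neg_neg]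
  rw [← apply_abs_of_even even_radialInverse, radialInverse_of_nonneg hh (abs_nonneg r), sq_abs,
    apply_abs_of_even heven]

lemma contDiff_radialInverse (hh : QuadraticGrowth M h) (hev : Function.Even h) {m : ℕ}
    (hs : ContDiff ℝ m h) : ContDiff ℝ (m + 1) (radialInverse e h) := by
  rw [funext fun r => radialInverse_of_even (e := e) hh hev r]
  have hf := contDiff_fluxDensity (e := e) hs
  have hprim : ContDiff ℝ (m + 1) fun r => ∫ s in (0 : ℝ)..r, fluxDensity e h s := by
    refine contDiff_succ_iff_deriv.2
      ⟨intervalIntegral.differentiable_integral_of_continuous hf.continuous, by simp, ?_⟩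
    rwa [funext fun r => hf.continuous.deriv_integral _ 0 r]
  exact (by fun_prop : ContDiff ℝ (m + 1) fun r : ℝ => exp (r ^ 2 / 2)).mul
    (contDiff_const.sub hprim)

end RadialInverse

/-! ### Monotone iteration -/

theorem exists_isFixedPt_of_le_map {α : Type*} [Preorder α] [TopologicalSpace α] [T2Space α]
    [ClosedIciTopology α] {S : Set α} {T : α → α} {x₀ : α} (hmaps : MapsTo T S S)
    (hmono : MonotoneOn T S)
    (hlim : ∀ z : ℕ → α, Monotone z → (∀ m, z m ∈ S) →
      ∃ x ∈ S, Tendsto z atTop (𝓝 x) ∧ Tendsto (T ∘ z) atTop (𝓝 (T x)))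
    (hx₀ : x₀ ∈ S) (hle : x₀ ≤ T x₀) : ∃ x ∈ S, x₀ ≤ x ∧ Function.IsFixedPt T x := by
  have hmem : ∀ m, T^[m] x₀ ∈ S := fun m => hmaps.iterate m hx₀
  have hstep : ∀ m, T^[m] x₀ ≤ T^[m + 1] x₀ := fun m => by
    induction m with
    | zero => exact hle
    | succ m ih =>
      rw [Function.iterate_succ_apply', Function.iterate_succ_apply']
      exact hmono (hmem m) (hmem (m + 1)) ih
  obtain ⟨x, hx, hzx, hTz⟩ := hlim _ (monotone_nat_of_le_succ hstep) hmem
  refine ⟨x, hx, ge_of_tendsto' hzx fun m => monotone_nat_of_le_succ hstep m.zero_le, ?_⟩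
  refine tendsto_nhds_unique hTz ((hzx.comp (tendsto_add_atTop_nat 1)).congr fun m => ?_)
  exact Function.iterate_succ_apply' T m x₀

/-! ### The normalized system -/

section NormalizedSystem

/-- The reaction coefficient of the normalized amplitude equation
`U'' + U' / r - n² U / r² = U * amplitudeReaction δ U y`. The factor `1 / 10` comes from the choice
of the length scale; it is small enough to make `amplitudeSource` and `orderSource` monotone. -/
noncomputable def amplitudeReaction (δ U y : ℝ) : ℝ :=
  1 / 10 * (3 * (U ^ 2 - 1) + δ ^ 2 * ((1 - y) * (3 - y)))

/-- The reaction term of the normalized order-parameter equation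
`y'' + y' / r = orderReaction δ U y`. -/
noncomputable def orderReaction (δ U y : ℝ) : ℝ :=
  1 / 10 * ((1 + δ * (1 - y)) * (3 + δ * (1 - y)) * y - 3 * U ^ 2 * (2 - y))

/-- The source to which `radialInverse (2 * n + 1)` is applied in the equation for `a`, where
`U = rⁿ a`. -/
noncomputable def amplitudeSource (n : ℕ) (δ r a y : ℝ) : ℝ :=
  (r ^ 2 + 2 * n + 2) * a - a * amplitudeReaction δ (r ^ n * a) y

/-- The source to which `radialInverse 1` is applied in the equation for `y`. -/
noncomputable def orderSource (n : ℕ) (δ r a y : ℝ) : ℝ :=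
  (r ^ 2 + 2) * y - orderReaction δ (r ^ n * a) y

variable {n : ℕ} {δ : ℝ}

lemma amplitudeSource_mono (hδ : δ ^ 2 ≤ 1) {r a a' y y' : ℝ} (ha : 0 ≤ a) (haa : a ≤ a')
    (hU : (r ^ n * a') ^ 2 ≤ 1) (hy : 0 ≤ y) (hyy : y ≤ y') (hy' : y' ≤ 1) :
    amplitudeSource n δ r a y ≤ amplitudeSource n δ r a' y' := by
  set X := (r ^ n) ^ 2 with hX
  have hX0 : 0 ≤ X := sq_nonneg _
  rw [mul_pow, ← hX] at hU
  have hcubic : X * (a' ^ 3 - a ^ 3) ≤ 3 * (a' - a) := by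
    have hslope : X * (a' ^ 2 + a * a' + a ^ 2) ≤ 3 := by
      have hmixed : X * (a * a') ≤ X * a' ^ 2 := by gcongr; nlinarith
      have hsq : X * a ^ 2 ≤ X * a' ^ 2 := by gcongr
      linarith
    nlinarith [mul_le_mul_of_nonneg_left hslope (sub_nonneg.2 haa)]
  have hpot_anti : δ ^ 2 * ((1 - y') * (3 - y')) ≤ δ ^ 2 * ((1 - y) * (3 - y)) := by
    gcongr <;> linarith
  have hpot_le : δ ^ 2 * ((1 - y') * (3 - y')) ≤ 3 := by
    nlinarith [mul_nonneg (sub_nonneg.2 hy') (by linarith : 0 ≤ 3 - y')]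
  have hpot : a' * (δ ^ 2 * ((1 - y') * (3 - y'))) - a * (δ ^ 2 * ((1 - y) * (3 - y))) ≤
      3 * (a' - a) := by
    linarith [mul_le_mul_of_nonneg_left hpot_anti ha,
      mul_le_mul_of_nonneg_left hpot_le (sub_nonneg.2 haa)]
  have hshift : 0 ≤ (r ^ 2 + 2 * n) * (a' - a) := mul_nonneg (by positivity) (sub_nonneg.2 haa)
  simp only [amplitudeSource, amplitudeReaction, mul_pow, ← hX]
  nlinarith

lemma cubic_sub_le (hδ : δ ^ 2 ≤ 1) {y y' : ℝ} (hy : 0 ≤ y) (hyy : y ≤ y') (hy' : y' ≤ 1) :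
    (1 + δ * (1 - y')) * (3 + δ * (1 - y')) * y' - (1 + δ * (1 - y)) * (3 + δ * (1 - y)) * y ≤
      14 * (y' - y) := by
  have hδ' := abs_le.1 ((sq_le_one_iff_abs_le_one δ).1 hδ)
  have hdist : |δ * (1 - y') - δ * (1 - y)| ≤ y' - y := by
    rw [show δ * (1 - y') - δ * (1 - y) = -(δ * (y' - y)) by ring, abs_neg, abs_mul,
      abs_of_nonneg (sub_nonneg.2 hyy)]
    exact mul_le_of_le_one_left (sub_nonneg.2 hyy) (abs_le.2 hδ')
  have hs : -1 ≤ δ * (1 - y) ∧ δ * (1 - y) ≤ 1 := by constructor <;> nlinarith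
  have hs' : -1 ≤ δ * (1 - y') ∧ δ * (1 - y') ≤ 1 := by constructor <;> nlinarith
  generalize δ * (1 - y) = s at *
  generalize δ * (1 - y') = s' at *
  have hvalue : (1 + s') * (3 + s') ≤ 8 := by nlinarith
  have hslope : (s' - s) * (4 + s' + s) ≤ (y' - y) * 6 := by
    have := abs_le.1 hdist
    cases le_total 0 (s' - s) <;> nlinarith
  have hslope_mul : (s' - s) * (4 + s' + s) * y ≤ (y' - y) * 6 := by
    nlinarith [mul_le_mul_of_nonneg_right hslope hy]
  nlinarith [mul_le_mul_of_nonneg_right hvalue (sub_nonneg.2 hyy)]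

lemma orderSource_mono (hδ : δ ^ 2 ≤ 1) {r a a' y y' : ℝ} (ha : 0 ≤ a) (haa : a ≤ a')
    (hU : (r ^ n * a') ^ 2 ≤ 1) (hy : 0 ≤ y) (hyy : y ≤ y') (hy' : y' ≤ 1) :
    orderSource n δ r a y ≤ orderSource n δ r a' y' := by
  have hX : (r ^ n * a) ^ 2 ≤ (r ^ n * a') ^ 2 := by
    rw [mul_pow, mul_pow]
    gcongr
  have hX0 : 0 ≤ (r ^ n * a) ^ 2 := sq_nonneg _
  have hcubic := cubic_sub_le hδ hy hyy hy'
  unfold orderSource orderReaction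
  generalize (r ^ n * a) ^ 2 = X at *
  generalize (r ^ n * a') ^ 2 = X' at *
  have hcoupling : X * (2 - y) - X' * (2 - y') ≤ y' - y := by
    nlinarith [mul_nonneg (sub_nonneg.2 hX) (by linarith : 0 ≤ 2 - y')]
  nlinarith [mul_nonneg (sq_nonneg r) (sub_nonneg.2 hyy)]

/-- The quotient `r² / (C + r²)`. -/
noncomputable def sqRatio (C r : ℝ) : ℝ := r ^ 2 / (C + r ^ 2)

/-- The function `(C + r²)^(-n / 2)`, so that `rⁿ * decay n C r = (sqRatio C r)^(n / 2)`. -/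
noncomputable def decay (n : ℕ) (C r : ℝ) : ℝ := (√(C + r ^ 2))⁻¹ ^ n

variable {C : ℝ}

lemma sqRatio_nonneg (hC : 0 < C) (r : ℝ) : 0 ≤ sqRatio C r := by
  unfold sqRatio
  positivity

lemma sqRatio_le_one (hC : 0 < C) (r : ℝ) : sqRatio C r ≤ 1 :=
  div_le_one_of_le₀ (by linarith) (by positivity)

lemma sq_mul_one_sub_sqRatio (hC : 0 < C) (r : ℝ) :
    r ^ 2 * (1 - sqRatio C r) = C * sqRatio C r := by
  unfold sqRatio
  have : C + r ^ 2 ≠ 0 := by positivity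
  field_simp
  ring

lemma one_add_mul_sub_one_le_sqRatio_pow (n : ℕ) (hC : 0 < C) (r : ℝ) :
    1 + n * (sqRatio C r - 1) ≤ sqRatio C r ^ n := by
  simpa using one_add_mul_le_pow (a := sqRatio C r - 1) (by linarith [sqRatio_nonneg hC r]) n

lemma contDiff_sqRatio (hC : 0 < C) : ContDiff ℝ 2 (sqRatio C) :=
  (contDiff_id.pow 2).div (contDiff_const.add (contDiff_id.pow 2)) fun r => by positivity

lemma decay_pos (n : ℕ) (hC : 0 < C) (r : ℝ) : 0 < decay n C r := by
  unfold decay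
  positivity

lemma decay_one_le_one (n : ℕ) (r : ℝ) : decay n 1 r ≤ 1 :=
  pow_le_one₀ (by positivity)
    (inv_le_one_of_one_le₀ (Real.one_le_sqrt.2 (by linarith [sq_nonneg r])))

lemma contDiff_decay (n : ℕ) (hC : 0 < C) : ContDiff ℝ 2 (decay n C) := by
  have hpos : ∀ r : ℝ, 0 < C + r ^ 2 := fun r => by positivity
  have hsqrt : ContDiff ℝ 2 fun r : ℝ => √(C + r ^ 2) :=
    (by fun_prop : ContDiff ℝ 2 fun r : ℝ => C + r ^ 2).sqrt fun r => (hpos r).ne'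
  exact (hsqrt.inv fun r => (Real.sqrt_pos.2 (hpos r)).ne').pow n

lemma even_decay (n : ℕ) (C : ℝ) : Function.Even (decay n C) := fun r => by
  simp only [decay, neg_sq]

lemma even_sqRatio (C : ℝ) : Function.Even (sqRatio C) := fun r => by
  simp only [sqRatio, neg_sq]

lemma sq_pow_mul_decay (n : ℕ) (hC : 0 < C) (r : ℝ) :
    (r ^ n * decay n C r) ^ 2 = sqRatio C r ^ n := by
  rw [decay, ← mul_pow, pow_right_comm, mul_pow, inv_pow, Real.sq_sqrt (by positivity), sqRatio,
    div_eq_mul_inv]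

/-- Pairs `(a, y)` with `0 ≤ a ≤ (1 + r²)^(-n / 2)` and `0 ≤ y ≤ 1`: the order interval in which
the normalized system is solved. -/
structure Admissible (n : ℕ) (z : (ℝ → ℝ) × (ℝ → ℝ)) : Prop where
  measurable_fst : Measurable z.1
  measurable_snd : Measurable z.2
  fst_nonneg : ∀ r, 0 ≤ z.1 r
  fst_le : ∀ r, z.1 r ≤ decay n 1 r
  snd_nonneg : ∀ r, 0 ≤ z.2 r
  snd_le : ∀ r, z.2 r ≤ 1

/-- The solution operator whose fixed points `(a, y)` solve the normalized system with
`U = rⁿ a`. -/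
noncomputable def monotoneStep (n : ℕ) (δ : ℝ) (z : (ℝ → ℝ) × (ℝ → ℝ)) : (ℝ → ℝ) × (ℝ → ℝ) :=
  (radialInverse (2 * n + 1) fun r => amplitudeSource n δ r (z.1 r) (z.2 r),
    radialInverse 1 fun r => orderSource n δ r (z.1 r) (z.2 r))

variable {z z' : (ℝ → ℝ) × (ℝ → ℝ)}

namespace Admissible

lemma sq_le_one (hz : Admissible n z) (r : ℝ) : (r ^ n * z.1 r) ^ 2 ≤ 1 := by
  have hle := hz.fst_le r
  have hnonneg := hz.fst_nonneg r
  calc (r ^ n * z.1 r) ^ 2 ≤ (r ^ n * decay n 1 r) ^ 2 := by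
        rw [mul_pow, mul_pow]
        gcongr
    _ = sqRatio 1 r ^ n := sq_pow_mul_decay n one_pos r
    _ ≤ 1 := pow_le_one₀ (sqRatio_nonneg one_pos r) (sqRatio_le_one one_pos r)

lemma growth_amplitudeSource (hz : Admissible n z) (hδ : δ ^ 2 ≤ 1) :
    QuadraticGrowth (2 * n + 3) fun r => amplitudeSource n δ r (z.1 r) (z.2 r) := by
  have hm₁ := hz.measurable_fst
  have hm₂ := hz.measurable_snd
  refine ⟨by unfold amplitudeSource amplitudeReaction; fun_prop, fun r => ?_⟩
  have hnonneg : 0 ≤ amplitudeSource n δ r (z.1 r) (z.2 r) := by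
    simpa [amplitudeSource] using amplitudeSource_mono hδ le_rfl (hz.fst_nonneg r)
      (hz.sq_le_one r) (hz.snd_nonneg r) le_rfl (hz.snd_le r)
  have hle_one : amplitudeSource n δ r (z.1 r) (z.2 r) ≤ amplitudeSource n δ r (z.1 r) 1 :=
    amplitudeSource_mono hδ (hz.fst_nonneg r) le_rfl (hz.sq_le_one r) (hz.snd_nonneg r)
      (hz.snd_le r) le_rfl
  rw [abs_of_nonneg hnonneg]
  refine hle_one.trans ?_
  have ha0 := hz.fst_nonneg r
  have ha1 := (hz.fst_le r).trans (decay_one_le_one n r)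
  have hX := hz.sq_le_one r
  have hX0 := sq_nonneg (r ^ n * z.1 r)
  unfold amplitudeSource amplitudeReaction
  generalize (r ^ n * z.1 r) ^ 2 = X at *
  have hreaction : z.1 r * (1 - X) ≤ 1 := by nlinarith
  nlinarith [mul_le_mul_of_nonneg_left ha1 (by positivity : 0 ≤ r ^ 2 + 2 * n + 2),
    mul_nonneg n.cast_nonneg (sq_nonneg r)]

lemma growth_orderSource (hz : Admissible n z) (hδ : δ ^ 2 ≤ 1) :
    QuadraticGrowth 2 fun r => orderSource n δ r (z.1 r) (z.2 r) := by
  have hm₁ := hz.measurable_fst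
  have hm₂ := hz.measurable_snd
  refine ⟨by unfold orderSource orderReaction; fun_prop, fun r => ?_⟩
  have hnonneg : 0 ≤ orderSource n δ r (z.1 r) (z.2 r) := by
    simpa [orderSource, orderReaction] using orderSource_mono hδ le_rfl (hz.fst_nonneg r)
      (hz.sq_le_one r) le_rfl (hz.snd_nonneg r) (hz.snd_le r)
  have hle_one : orderSource n δ r (z.1 r) (z.2 r) ≤ orderSource n δ r (z.1 r) 1 :=
    orderSource_mono hδ (hz.fst_nonneg r) le_rfl (hz.sq_le_one r) (hz.snd_nonneg r)
      (hz.snd_le r) le_rfl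
  rw [abs_of_nonneg hnonneg]
  refine hle_one.trans ?_
  have hX := hz.sq_le_one r
  unfold orderSource orderReaction
  nlinarith [sq_nonneg r]

lemma monotoneStep_le_monotoneStep (hz : Admissible n z) (hz' : Admissible n z')
    (hδ : δ ^ 2 ≤ 1) (hle : z ≤ z') : monotoneStep n δ z ≤ monotoneStep n δ z' :=
  ⟨radialInverse_mono (hz.growth_amplitudeSource hδ) (hz'.growth_amplitudeSource hδ) fun x _ =>
      amplitudeSource_mono hδ (hz.fst_nonneg x) (hle.1 x) (hz'.sq_le_one x) (hz.snd_nonneg x)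
        (hle.2 x) (hz'.snd_le x),
    radialInverse_mono (hz.growth_orderSource hδ) (hz'.growth_orderSource hδ) fun x _ =>
      orderSource_mono hδ (hz.fst_nonneg x) (hle.1 x) (hz'.sq_le_one x) (hz.snd_nonneg x)
        (hle.2 x) (hz'.snd_le x)⟩

lemma le_monotoneStep (hz : Admissible n z) (hδ : δ ^ 2 ≤ 1) (hc₁ : ContDiff ℝ 2 z.1)
    (hc₂ : ContDiff ℝ 2 z.2) (he₁ : Function.Even z.1) (he₂ : Function.Even z.2)
    (hamp : ∀ r, 0 < r → z.1 r * amplitudeReaction δ (r ^ n * z.1 r) (z.2 r) ≤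
      radialLaplacian (2 * n + 1) z.1 r)
    (hord : ∀ r, 0 < r → orderReaction δ (r ^ n * z.1 r) (z.2 r) ≤ radialLaplacian 1 z.2 r) :
    z ≤ monotoneStep n δ z := by
  have hcont₁ := hc₁.continuous
  have hcont₂ := hc₂.continuous
  constructor
  · refine le_radialInverse (B := 1) (hz.growth_amplitudeSource hδ)
      (by unfold amplitudeSource amplitudeReaction; fun_prop) hc₁ he₁ (fun r => ?_) fun r hr => ?_
    · rw [abs_of_nonneg (hz.fst_nonneg r)]
      exact (hz.fst_le r).trans (decay_one_le_one n r)
    · rw [amplitudeSource]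
      push_cast
      linarith [hamp r hr]
  · refine le_radialInverse (B := 1) (hz.growth_orderSource hδ)
      (by unfold orderSource orderReaction; fun_prop) hc₂ he₂ (fun r => ?_) fun r hr => ?_
    · rw [abs_of_nonneg (hz.snd_nonneg r)]
      exact hz.snd_le r
    · rw [orderSource]
      push_cast
      linarith [hord r hr]

lemma monotoneStep_le (hz : Admissible n z) (hδ : δ ^ 2 ≤ 1) (hc₁ : ContDiff ℝ 2 z.1)
    (hc₂ : ContDiff ℝ 2 z.2) (he₁ : Function.Even z.1) (he₂ : Function.Even z.2)
    (hamp : ∀ r, 0 < r → radialLaplacian (2 * n + 1) z.1 r ≤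
      z.1 r * amplitudeReaction δ (r ^ n * z.1 r) (z.2 r))
    (hord : ∀ r, 0 < r → radialLaplacian 1 z.2 r ≤ orderReaction δ (r ^ n * z.1 r) (z.2 r)) :
    monotoneStep n δ z ≤ z := by
  have hcont₁ := hc₁.continuous
  have hcont₂ := hc₂.continuous
  constructor
  · refine radialInverse_le (B := 1) (hz.growth_amplitudeSource hδ)
      (by unfold amplitudeSource amplitudeReaction; fun_prop) hc₁ he₁ (fun r => ?_) fun r hr => ?_
    · rw [abs_of_nonneg (hz.fst_nonneg r)]
      exact (hz.fst_le r).trans (decay_one_le_one n r)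
    · rw [amplitudeSource]
      push_cast
      linarith [hamp r hr]
  · refine radialInverse_le (B := 1) (hz.growth_orderSource hδ)
      (by unfold orderSource orderReaction; fun_prop) hc₂ he₂ (fun r => ?_) fun r hr => ?_
    · rw [abs_of_nonneg (hz.snd_nonneg r)]
      exact hz.snd_le r
    · rw [orderSource]
      push_cast
      linarith [hord r hr]

end Admissible

/-- `m` is the image of `w` under the Euler operator `r d/dr` on the half-line `r > 0`. -/
def HasEulerDeriv (w m : ℝ → ℝ) : Prop :=
  ∀ r, 0 < r → HasDerivAt w (m r / r) r

lemma HasEulerDeriv.pow_of_log {w L : ℝ → ℝ} (hw : HasEulerDeriv w fun r => L r * w r) (n : ℕ) :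
    HasEulerDeriv (fun r => w r ^ n) fun r => n * L r * w r ^ n := fun r hr => by
  refine ((hw r hr).fun_pow n).congr_deriv ?_
  cases n with
  | zero => simp
  | succ m =>
    simp only [add_tsub_cancel_right]
    ring

lemma radialLaplacian_of_log_eulerDeriv {e : ℕ} {w L L' : ℝ → ℝ}
    (hw : HasEulerDeriv w fun r => L r * w r) (hL : HasEulerDeriv L L') {r : ℝ} (hr : 0 < r) :
    radialLaplacian e w r = (L r ^ 2 + (e - 1) * L r + L' r) * w r / r ^ 2 := by
  rw [radialLaplacian_eq hr hw (((hL r hr).fun_mul (hw r hr)).fun_div (hasDerivAt_id r) hr.ne')]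
  simp only
  field_simp
  ring

lemma hasEulerDeriv_sqRatio (hC : 0 < C) :
    HasEulerDeriv (sqRatio C) fun r => 2 * (1 - sqRatio C r) * sqRatio C r := fun r hr => by
  have hne : C + r ^ 2 ≠ 0 := by positivity
  refine ((hasDerivAt_pow 2 r).fun_div ((hasDerivAt_pow 2 r).const_add C) hne).congr_deriv ?_
  simp only [sqRatio]
  field_simp
  ring

lemma hasEulerDeriv_decay (n : ℕ) (hC : 0 < C) :
    HasEulerDeriv (decay n C) fun r => n * -sqRatio C r * decay n C r := by
  refine HasEulerDeriv.pow_of_log (L := fun r => -sqRatio C r) (fun r hr => ?_) n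
  have hpos : 0 < C + r ^ 2 := by positivity
  have hsqrt := ((hasDerivAt_pow 2 r).const_add C).sqrt hpos.ne'
  refine (hsqrt.fun_inv (Real.sqrt_pos.2 hpos).ne').congr_deriv ?_
  simp only [sqRatio, Real.sq_sqrt hpos.le]
  field_simp
  ring

lemma hasEulerDeriv_neg_mul_sqRatio (n : ℕ) (hC : 0 < C) :
    HasEulerDeriv (fun r => n * -sqRatio C r)
      fun r => -(2 * n * sqRatio C r * (1 - sqRatio C r)) := fun r hr =>
  ((hasEulerDeriv_sqRatio hC r hr).fun_neg.const_mul (n : ℝ)).congr_deriv (by ring)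

lemma admissible_barrier (n : ℕ) : Admissible n (decay n 1, fun _ => 1) where
  measurable_fst := (contDiff_decay n one_pos).continuous.measurable
  measurable_snd := measurable_const
  fst_nonneg r := (decay_pos n one_pos r).le
  fst_le _ := le_rfl
  snd_nonneg _ := zero_le_one
  snd_le _ := le_rfl

lemma radialLaplacian_const (e : ℕ) (c r : ℝ) : radialLaplacian e (fun _ => c) r = 0 := by
  simp [radialLaplacian]

lemma radialLaplacian_decay_one_le (n : ℕ) (δ : ℝ) {r : ℝ} (hr : 0 < r) :
    radialLaplacian (2 * n + 1) (decay n 1) r ≤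
      decay n 1 r * amplitudeReaction δ (r ^ n * decay n 1 r) 1 := by
  rw [radialLaplacian_of_log_eulerDeriv (hasEulerDeriv_decay n one_pos)
    (hasEulerDeriv_neg_mul_sqRatio n one_pos) hr, mul_comm, mul_div_assoc]
  refine mul_le_mul_of_nonneg_left ?_ (decay_pos n one_pos r).le
  rw [div_le_iff₀ (by positivity), amplitudeReaction, sq_pow_mul_decay n one_pos]
  have hq0 := sqRatio_nonneg one_pos r
  have hq1 := sqRatio_le_one one_pos r
  have hrq := sq_mul_one_sub_sqRatio one_pos r
  have hbernoulli := mul_le_mul_of_nonneg_left (one_add_mul_sub_one_le_sqRatio_pow n one_pos r)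
    (sq_nonneg r)
  have hn : (n : ℝ) ≤ n ^ 2 := by exact_mod_cast Nat.le_self_pow two_ne_zero n
  push_cast
  generalize sqRatio 1 r = q at *
  have hreaction : -(n * q) ≤ (q ^ n - 1) * r ^ 2 := by linear_combination hbernoulli + n * hrq
  nlinarith [mul_nonneg (mul_nonneg n.cast_nonneg hq0) (sub_nonneg.2 hq1),
    mul_nonneg (mul_nonneg (sq_nonneg (n : ℝ)) hq0) (sub_nonneg.2 hq1),
    mul_le_mul_of_nonneg_right hn hq0]

lemma monotoneStep_barrier_le (n : ℕ) (hδ : δ ^ 2 ≤ 1) :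
    monotoneStep n δ (decay n 1, fun _ => 1) ≤ (decay n 1, fun _ => 1) := by
  refine (admissible_barrier n).monotoneStep_le hδ (contDiff_decay n one_pos) contDiff_const
    (even_decay n 1) (fun _ => rfl) (fun r hr => radialLaplacian_decay_one_le n δ hr) fun r _ => ?_
  have hU := (admissible_barrier n).sq_le_one r
  rw [radialLaplacian_const, orderReaction]
  linarith

namespace Admissible

lemma zero (n : ℕ) : Admissible n 0 where
  measurable_fst := measurable_const
  measurable_snd := measurable_const
  fst_nonneg _ := le_rfl
  fst_le r := (decay_pos n one_pos r).le
  snd_nonneg _ := le_rfl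
  snd_le _ := zero_le_one

lemma zero_le_monotoneStep (n : ℕ) (hδ : δ ^ 2 ≤ 1) : 0 ≤ monotoneStep n δ 0 :=
  (Admissible.zero n).le_monotoneStep hδ contDiff_const contDiff_const (fun _ => rfl)
    (fun _ => rfl) (fun r _ => ((zero_mul _).trans (radialLaplacian_const _ 0 r).symm).le)
    fun r _ => (Eq.trans (by simp [orderReaction]) (radialLaplacian_const 1 0 r).symm).le

lemma map_monotoneStep (hz : Admissible n z) (hδ : δ ^ 2 ≤ 1) :
    Admissible n (monotoneStep n δ z) := by
  have hlower := (zero_le_monotoneStep n hδ).trans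
    ((Admissible.zero n).monotoneStep_le_monotoneStep hz hδ ⟨hz.fst_nonneg, hz.snd_nonneg⟩)
  have hupper := (hz.monotoneStep_le_monotoneStep (admissible_barrier n) hδ
    ⟨hz.fst_le, hz.snd_le⟩).trans (monotoneStep_barrier_le n hδ)
  exact ⟨(continuous_radialInverse (hz.growth_amplitudeSource hδ)).measurable,
    (continuous_radialInverse (hz.growth_orderSource hδ)).measurable,
    hlower.1, hupper.1, hlower.2, hupper.2⟩

variable {x : (ℝ → ℝ) × (ℝ → ℝ)} {w : ℕ → (ℝ → ℝ) × (ℝ → ℝ)}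

lemma of_tendsto (hw : ∀ m, Admissible n (w m)) (hwx : Tendsto w atTop (𝓝 x)) :
    Admissible n x := by
  have h₁ := tendsto_pi_nhds.1 ((continuous_fst.tendsto x).comp hwx)
  have h₂ := tendsto_pi_nhds.1 ((continuous_snd.tendsto x).comp hwx)
  exact ⟨measurable_of_tendsto_metrizable (fun m => (hw m).measurable_fst) (tendsto_pi_nhds.2 h₁),
    measurable_of_tendsto_metrizable (fun m => (hw m).measurable_snd) (tendsto_pi_nhds.2 h₂),
    fun r => ge_of_tendsto' (h₁ r) fun m => (hw m).fst_nonneg r,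
    fun r => le_of_tendsto' (h₁ r) fun m => (hw m).fst_le r,
    fun r => ge_of_tendsto' (h₂ r) fun m => (hw m).snd_nonneg r,
    fun r => le_of_tendsto' (h₂ r) fun m => (hw m).snd_le r⟩

lemma tendsto_monotoneStep (hw : ∀ m, Admissible n (w m)) (hδ : δ ^ 2 ≤ 1)
    (hwx : Tendsto w atTop (𝓝 x)) :
    Tendsto (monotoneStep n δ ∘ w) atTop (𝓝 (monotoneStep n δ x)) := by
  have h₁ := tendsto_pi_nhds.1 ((continuous_fst.tendsto x).comp hwx)
  have h₂ := tendsto_pi_nhds.1 ((continuous_snd.tendsto x).comp hwx)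
  have hpair : ∀ r, Tendsto (fun m => ((w m).1 r, (w m).2 r)) atTop (𝓝 (x.1 r, x.2 r)) :=
    fun r => (h₁ r).prodMk_nhds (h₂ r)
  refine Tendsto.prodMk_nhds (tendsto_pi_nhds.2 fun r => ?_) (tendsto_pi_nhds.2 fun r => ?_)
  · refine tendsto_radialInverse (fun m => (hw m).growth_amplitudeSource hδ) (fun s => ?_) r
    have hcont : Continuous fun p : ℝ × ℝ => amplitudeSource n δ s p.1 p.2 := by
      unfold amplitudeSource amplitudeReaction
      fun_prop
    exact (hcont.tendsto _).comp (hpair s)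
  · refine tendsto_radialInverse (fun m => (hw m).growth_orderSource hδ) (fun s => ?_) r
    have hcont : Continuous fun p : ℝ × ℝ => orderSource n δ s p.1 p.2 := by
      unfold orderSource orderReaction
      fun_prop
    exact (hcont.tendsto _).comp (hpair s)

lemma exists_tendsto_of_monotone (hw : ∀ m, Admissible n (w m)) (hmono : Monotone w) :
    ∃ x, Tendsto w atTop (𝓝 x) := by
  have hbdd₁ : ∀ r, BddAbove (range fun m => (w m).1 r) := fun r =>
    ⟨decay n 1 r, forall_mem_range.2 fun m => (hw m).fst_le r⟩
  have hbdd₂ : ∀ r, BddAbove (range fun m => (w m).2 r) := fun r =>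
    ⟨1, forall_mem_range.2 fun m => (hw m).snd_le r⟩
  exact ⟨(fun r => ⨆ m, (w m).1 r, fun r => ⨆ m, (w m).2 r), Tendsto.prodMk_nhds
    (tendsto_pi_nhds.2 fun r => tendsto_atTop_ciSup (fun _ _ h => (hmono h).1 r) (hbdd₁ r))
    (tendsto_pi_nhds.2 fun r => tendsto_atTop_ciSup (fun _ _ h => (hmono h).2 r) (hbdd₂ r))⟩

lemma exists_isFixedPt_monotoneStep (hz : Admissible n z) (hδ : δ ^ 2 ≤ 1)
    (hle : z ≤ monotoneStep n δ z) :
    ∃ z', Admissible n z' ∧ z ≤ z' ∧ Function.IsFixedPt (monotoneStep n δ) z' := by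
  refine exists_isFixedPt_of_le_map (S := {z | Admissible n z}) (fun w hw => hw.map_monotoneStep hδ)
    (fun w hw w' hw' => hw.monotoneStep_le_monotoneStep hw' hδ) (fun w hmono hw => ?_) hz hle
  obtain ⟨x, hx⟩ := exists_tendsto_of_monotone hw hmono
  exact ⟨x, of_tendsto hw hx, hx, tendsto_monotoneStep hw hδ hx⟩

end Admissible

/-! ### The explicit subsolution -/

/-- The amplitude of the explicit subsolution. With `X = sqRatio C r ^ n`, the square of
`rⁿ * subAmplitude n C r` is `16 X / (3 + X)²`. Together with `subOrder = 4 X / (3 + X)` this makes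
`1 - X` a factor of both reaction terms. -/
noncomputable def subAmplitude (n : ℕ) (C r : ℝ) : ℝ :=
  4 * decay n C r / (3 + sqRatio C r ^ n)

/-- The order parameter of the explicit subsolution. -/
noncomputable def subOrder (n : ℕ) (C r : ℝ) : ℝ :=
  4 * sqRatio C r ^ n / (3 + sqRatio C r ^ n)

/-- The function through which the logarithmic Euler derivatives of `subAmplitude` and `subOrder`
are expressed. -/
noncomputable def subSlope (n : ℕ) (C r : ℝ) : ℝ :=
  (1 - sqRatio C r) * (3 - sqRatio C r ^ n) / (3 + sqRatio C r ^ n)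

lemma sqRatio_pow_nonneg (n : ℕ) (hC : 0 < C) (r : ℝ) : 0 ≤ sqRatio C r ^ n :=
  pow_nonneg (sqRatio_nonneg hC r) n

lemma sqRatio_pow_le_one (n : ℕ) (hC : 0 < C) (r : ℝ) : sqRatio C r ^ n ≤ 1 :=
  pow_le_one₀ (sqRatio_nonneg hC r) (sqRatio_le_one hC r)

lemma sqRatio_pow_le (hn : n ≠ 0) (hC : 0 < C) (r : ℝ) : sqRatio C r ^ n ≤ sqRatio C r :=
  pow_le_of_le_one (sqRatio_nonneg hC r) (sqRatio_le_one hC r) hn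

lemma three_add_sqRatio_pow_pos (n : ℕ) (hC : 0 < C) (r : ℝ) : 0 < 3 + sqRatio C r ^ n := by
  linarith [sqRatio_pow_nonneg n hC r]

lemma hasEulerDeriv_sqRatio_pow (n : ℕ) (hC : 0 < C) :
    HasEulerDeriv (fun r => sqRatio C r ^ n)
      fun r => n * (2 * (1 - sqRatio C r)) * sqRatio C r ^ n :=
  HasEulerDeriv.pow_of_log (hasEulerDeriv_sqRatio hC) n

lemma hasEulerDeriv_subAmplitude (n : ℕ) (hC : 0 < C) :
    HasEulerDeriv (subAmplitude n C)
      fun r => n * (subSlope n C r - 1) * subAmplitude n C r := fun r hr => by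
  have hpos := three_add_sqRatio_pow_pos n hC r
  refine (((hasEulerDeriv_decay n hC r hr).const_mul 4).fun_div
    ((hasEulerDeriv_sqRatio_pow n hC r hr).const_add 3) hpos.ne').congr_deriv ?_
  simp only [subAmplitude, subSlope]
  field_simp
  ring

lemma hasEulerDeriv_subOrder (n : ℕ) (hC : 0 < C) :
    HasEulerDeriv (subOrder n C)
      fun r => n * (1 - sqRatio C r + subSlope n C r) * subOrder n C r := fun r hr => by
  have hpos := three_add_sqRatio_pow_pos n hC r
  have hpow := hasEulerDeriv_sqRatio_pow n hC r hr
  refine ((hpow.const_mul 4).fun_div (hpow.const_add 3) hpos.ne').congr_deriv ?_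
  simp only [subOrder, subSlope]
  field_simp
  ring

lemma hasEulerDeriv_subSlope (n : ℕ) (hC : 0 < C) :
    HasEulerDeriv (subSlope n C) fun r => -(2 * sqRatio C r * subSlope n C r +
      12 * n * (1 - sqRatio C r) ^ 2 * (sqRatio C r ^ n / (3 + sqRatio C r ^ n) ^ 2)) :=
  fun r hr => by
  have hpos := three_add_sqRatio_pow_pos n hC r
  have hpow := hasEulerDeriv_sqRatio_pow n hC r hr
  refine ((((hasEulerDeriv_sqRatio hC r hr).const_sub 1).fun_mul (hpow.const_sub 3)).fun_div
    (hpow.const_add 3) hpos.ne').congr_deriv ?_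
  simp only [subSlope]
  field_simp
  ring

lemma radialLaplacian_subAmplitude (n : ℕ) (hC : 0 < C) {r : ℝ} (hr : 0 < r) :
    radialLaplacian (2 * n + 1) (subAmplitude n C) r =
      (n ^ 2 * (subSlope n C r ^ 2 - 1) - 2 * n * sqRatio C r * subSlope n C r -
        12 * n ^ 2 * (1 - sqRatio C r) ^ 2 * (sqRatio C r ^ n / (3 + sqRatio C r ^ n) ^ 2)) *
        subAmplitude n C r / r ^ 2 := by
  rw [radialLaplacian_of_log_eulerDeriv (hasEulerDeriv_subAmplitude n hC)
    (L' := fun r => n * -(2 * sqRatio C r * subSlope n C r +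
      12 * n * (1 - sqRatio C r) ^ 2 * (sqRatio C r ^ n / (3 + sqRatio C r ^ n) ^ 2)))
    (fun s hs => (((hasEulerDeriv_subSlope n hC s hs).sub_const 1).const_mul
      (n : ℝ)).congr_deriv (by ring)) hr]
  push_cast
  ring

lemma radialLaplacian_subOrder (n : ℕ) (hC : 0 < C) {r : ℝ} (hr : 0 < r) :
    radialLaplacian 1 (subOrder n C) r =
      12 * (n ^ 2 * (1 - sqRatio C r) ^ 2 * ((3 - sqRatio C r ^ n) / (3 + sqRatio C r ^ n)) -
        n * sqRatio C r * (1 - sqRatio C r)) / (3 + sqRatio C r ^ n) *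
        subOrder n C r / r ^ 2 := by
  have hpos := three_add_sqRatio_pow_pos n hC r
  rw [radialLaplacian_of_log_eulerDeriv (hasEulerDeriv_subOrder n hC)
    (L' := fun r => n * (-(2 * (1 - sqRatio C r) * sqRatio C r) -
      (2 * sqRatio C r * subSlope n C r +
        12 * n * (1 - sqRatio C r) ^ 2 * (sqRatio C r ^ n / (3 + sqRatio C r ^ n) ^ 2))))
    (fun s hs => ((((hasEulerDeriv_sqRatio hC s hs).const_sub 1).fun_add
      (hasEulerDeriv_subSlope n hC s hs)).const_mul (n : ℝ)).congr_deriv (by ring)) hr, subSlope]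
  push_cast
  field_simp
  ring

lemma sq_pow_mul_subAmplitude (n : ℕ) (hC : 0 < C) (r : ℝ) :
    (r ^ n * subAmplitude n C r) ^ 2 =
      16 * sqRatio C r ^ n / (3 + sqRatio C r ^ n) ^ 2 := by
  rw [subAmplitude, ← mul_div_assoc, div_pow, mul_left_comm, mul_pow, sq_pow_mul_decay n hC]
  norm_num

lemma subAmplitude_pos (n : ℕ) (hC : 0 < C) (r : ℝ) : 0 < subAmplitude n C r :=
  div_pos (mul_pos four_pos (decay_pos n hC r)) (three_add_sqRatio_pow_pos n hC r)

lemma subOrder_nonneg (n : ℕ) (hC : 0 < C) (r : ℝ) : 0 ≤ subOrder n C r :=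
  div_nonneg (mul_nonneg zero_le_four (sqRatio_pow_nonneg n hC r))
    (three_add_sqRatio_pow_pos n hC r).le

lemma subSlope_le_one (n : ℕ) (hC : 0 < C) (r : ℝ) : subSlope n C r ≤ 1 := by
  rw [subSlope, div_le_one (three_add_sqRatio_pow_pos n hC r)]
  nlinarith [sqRatio_nonneg hC r, sqRatio_pow_nonneg n hC r, sqRatio_pow_le_one n hC r]

lemma one_sub_le_subSlope (hn : n ≠ 0) (hC : 0 < C) (r : ℝ) :
    1 - 5 / 3 * sqRatio C r ≤ subSlope n C r := by
  have hX := sqRatio_pow_nonneg n hC r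
  have hXq := sqRatio_pow_le hn hC r
  rw [subSlope, le_div_iff₀ (three_add_sqRatio_pow_pos n hC r)]
  nlinarith [sqRatio_le_one hC r]

lemma neg_seven_mul_le_radialSymbol (hn : n ≠ 0) (hC : 0 < C) (r : ℝ) :
    -(7 * n ^ 2 * sqRatio C r) ≤
      n ^ 2 * (subSlope n C r ^ 2 - 1) - 2 * n * sqRatio C r * subSlope n C r -
        12 * n ^ 2 * (1 - sqRatio C r) ^ 2 * (sqRatio C r ^ n / (3 + sqRatio C r ^ n) ^ 2) := by
  have hX0 := sqRatio_pow_nonneg n hC r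
  have hX1 := sqRatio_pow_le_one n hC r
  have hXq := sqRatio_pow_le hn hC r
  have hq1 := sqRatio_le_one hC r
  have hw := one_sub_le_subSlope hn hC r
  have hw1 := subSlope_le_one n hC r
  generalize subSlope n C r = w at *
  have hratio : sqRatio C r ^ n / (3 + sqRatio C r ^ n) ^ 2 ≤ sqRatio C r / 9 :=
    div_le_div₀ (sqRatio_nonneg hC r) hXq (by norm_num) (by nlinarith)
  have hratio_nonneg : 0 ≤ sqRatio C r ^ n / (3 + sqRatio C r ^ n) ^ 2 := by positivity
  generalize sqRatio C r ^ n / (3 + sqRatio C r ^ n) ^ 2 = s at *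
  generalize sqRatio C r = q at *
  have hq0 : 0 ≤ q := hX0.trans hXq
  have hN : (n : ℝ) ≤ n ^ 2 := by exact_mod_cast Nat.le_self_pow two_ne_zero n
  have hsquare : -(10 / 3 * q) ≤ w ^ 2 - 1 := by nlinarith [sq_nonneg (w - 1)]
  have hcross : n * (q * w) ≤ n ^ 2 * q :=
    (mul_le_mul_of_nonneg_left (mul_le_of_le_one_right hq0 hw1) n.cast_nonneg).trans
      (mul_le_mul_of_nonneg_right hN hq0)
  have htail : (1 - q) ^ 2 * s ≤ q / 9 :=
    (mul_le_of_le_one_left hratio_nonneg (pow_le_one₀ (by linarith) (by linarith))).trans hratio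
  nlinarith [mul_le_mul_of_nonneg_left hsquare (sq_nonneg (n : ℝ)),
    mul_le_mul_of_nonneg_left htail (sq_nonneg (n : ℝ)), mul_nonneg (sq_nonneg (n : ℝ)) hq0]

lemma mul_sqRatio_le (hn : n ≠ 0) (hC : 0 < C) (r : ℝ) :
    C * sqRatio C r ≤ r ^ 2 * (1 - sqRatio C r ^ n) := by
  rw [← sq_mul_one_sub_sqRatio hC]
  gcongr
  exact sqRatio_pow_le hn hC r

lemma amplitudeReaction_sub_le (n : ℕ) (hC : 0 < C) (hδ : δ ^ 2 ≤ 1) (r : ℝ) :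
    amplitudeReaction δ (r ^ n * subAmplitude n C r) (subOrder n C r) ≤
      -(3 / 20 * ((1 - δ ^ 2) * (1 - sqRatio C r ^ n))) := by
  have hX0 := sqRatio_pow_nonneg n hC r
  have hX1 := sqRatio_pow_le_one n hC r
  rw [amplitudeReaction, sq_pow_mul_subAmplitude n hC, subOrder]
  generalize sqRatio C r ^ n = X at *
  have hhalf : 1 / 2 ≤ (9 - X) / (3 + X) ^ 2 := by
    rw [le_div_iff₀ (by positivity)]
    nlinarith
  have hnonneg : 0 ≤ (1 - δ ^ 2) * (1 - X) := mul_nonneg (by linarith) (by linarith)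
  calc _ = -(3 / 10 * ((1 - δ ^ 2) * (1 - X) * ((9 - X) / (3 + X) ^ 2))) := by
        field_simp
        ring
    _ ≤ _ := by linarith [mul_le_mul_of_nonneg_left hhalf hnonneg]

lemma subAmplitude_mul_amplitudeReaction_le (hn : n ≠ 0) (hC : 0 < C) (hδ : δ ^ 2 ≤ 1)
    (hCn : 140 * (n : ℝ) ^ 2 ≤ 3 * (1 - δ ^ 2) * C) {r : ℝ} (hr : 0 < r) :
    subAmplitude n C r * amplitudeReaction δ (r ^ n * subAmplitude n C r) (subOrder n C r) ≤
      radialLaplacian (2 * n + 1) (subAmplitude n C) r := by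
  rw [radialLaplacian_subAmplitude n hC hr, mul_comm, mul_div_right_comm]
  refine mul_le_mul_of_nonneg_right ?_ (subAmplitude_pos n hC r).le
  rw [le_div_iff₀ (by positivity)]
  refine le_trans ?_ (neg_seven_mul_le_radialSymbol hn hC r)
  have hreaction := mul_le_mul_of_nonneg_right (amplitudeReaction_sub_le n hC hδ r) (sq_nonneg r)
  have hgain := mul_le_mul_of_nonneg_left (mul_sqRatio_le hn hC r) (sub_nonneg.2 hδ)
  have hloss := mul_le_mul_of_nonneg_right hCn (sqRatio_nonneg hC r)
  linarith

lemma orderReaction_sub_le (n : ℕ) (hC : 0 < C) (hδ : δ ^ 2 ≤ 1) (r : ℝ) :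
    orderReaction δ (r ^ n * subAmplitude n C r) (subOrder n C r) ≤
      -(12 / 10 * ((1 - δ) * (1 - sqRatio C r ^ n))) / (3 + sqRatio C r ^ n) *
        subOrder n C r := by
  have hX0 := sqRatio_pow_nonneg n hC r
  have hX1 := sqRatio_pow_le_one n hC r
  rw [orderReaction, sq_pow_mul_subAmplitude n hC, subOrder]
  generalize sqRatio C r ^ n = X at *
  have hdrop : 0 ≤ 36 / 10 * (1 - δ ^ 2) * (X * (1 - X) ^ 2 / (3 + X) ^ 3) :=
    mul_nonneg (by linarith) (by positivity)
  calc _ = -(12 / 10 * ((1 - δ) * (1 - X))) / (3 + X) * (4 * X / (3 + X)) -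
        36 / 10 * (1 - δ ^ 2) * (X * (1 - X) ^ 2 / (3 + X) ^ 3) := by
        field_simp
        ring
    _ ≤ _ := sub_le_self _ hdrop

lemma orderReaction_le_radialLaplacian_subOrder (hn : n ≠ 0) (hC : 0 < C) (hδ : δ ^ 2 ≤ 1)
    (hCn : 10 * (n : ℝ) ≤ (1 - δ) * C) {r : ℝ} (hr : 0 < r) :
    orderReaction δ (r ^ n * subAmplitude n C r) (subOrder n C r) ≤
      radialLaplacian 1 (subOrder n C) r := by
  have hδ1 : 0 ≤ 1 - δ := by linarith [le_of_abs_le ((sq_le_one_iff_abs_le_one δ).1 hδ)]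
  have hq0 := sqRatio_nonneg hC r
  have hX1 := sqRatio_pow_le_one n hC r
  have hpos := three_add_sqRatio_pow_pos n hC r
  refine (orderReaction_sub_le n hC hδ r).trans ?_
  rw [radialLaplacian_subOrder n hC hr, mul_div_right_comm]
  refine mul_le_mul_of_nonneg_right ?_ (subOrder_nonneg n hC r)
  rw [div_right_comm]
  gcongr
  rw [le_div_iff₀ (by positivity)]
  have hgain := mul_le_mul_of_nonneg_left (mul_sqRatio_le hn hC r) hδ1
  have hloss := mul_le_mul_of_nonneg_right hCn hq0
  have hconvex : 0 ≤ (n : ℝ) ^ 2 * (1 - sqRatio C r) ^ 2 *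
      ((3 - sqRatio C r ^ n) / (3 + sqRatio C r ^ n)) :=
    mul_nonneg (by positivity) (div_nonneg (by linarith) hpos.le)
  nlinarith [mul_nonneg (mul_nonneg n.cast_nonneg hq0) hq0]

lemma mul_inv_sqrt_le (hC : 9 / 2 ≤ C) (r : ℝ) :
    (1 + (1 - sqRatio C r) / 3) * (√(C + r ^ 2))⁻¹ ≤ (√(1 + r ^ 2))⁻¹ := by
  have hC0 : 0 < C := by linarith
  have hq0 := sqRatio_nonneg hC0 r
  have hq1 := sqRatio_le_one hC0 r
  have hrq := sq_mul_one_sub_sqRatio hC0 r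
  generalize sqRatio C r = q at *
  have hsquare : (1 + (1 - q) / 3) ^ 2 ≤ 1 + 7 / 9 * (1 - q) := by nlinarith
  have hproduct : (1 - q) * (1 + r ^ 2) ≤ C := by nlinarith
  rw [← div_eq_mul_inv, div_le_iff₀ (by positivity), inv_mul_eq_div, le_div_iff₀ (by positivity)]
  refine Real.le_sqrt_of_sq_le ?_
  rw [mul_pow, Real.sq_sqrt (by positivity)]
  nlinarith [mul_le_mul_of_nonneg_right hsquare (by positivity : 0 ≤ 1 + r ^ 2)]

lemma subAmplitude_le (n : ℕ) (hC : 9 / 2 ≤ C) (r : ℝ) : subAmplitude n C r ≤ decay n 1 r := by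
  have hC0 : 0 < C := by linarith
  have hp : 0 ≤ 1 - sqRatio C r := sub_nonneg.2 (sqRatio_le_one hC0 r)
  have hX0 := sqRatio_pow_nonneg n hC0 r
  have hpos := three_add_sqRatio_pow_pos n hC0 r
  have hfactor : 4 / (3 + sqRatio C r ^ n) ≤ (1 + (1 - sqRatio C r) / 3) ^ n := by
    have hbernoulli := one_add_mul_sub_one_le_sqRatio_pow n hC0 r
    have hbernoulli' := one_add_mul_le_pow (a := (1 - sqRatio C r) / 3) (by linarith) n
    refine le_trans ((div_le_iff₀ hpos).2 ?_) hbernoulli'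
    nlinarith [mul_nonneg (mul_nonneg n.cast_nonneg hp) hX0]
  calc subAmplitude n C r = 4 / (3 + sqRatio C r ^ n) * decay n C r := mul_div_right_comm ..
    _ ≤ (1 + (1 - sqRatio C r) / 3) ^ n * decay n C r :=
        mul_le_mul_of_nonneg_right hfactor (decay_pos n hC0 r).le
    _ = ((1 + (1 - sqRatio C r) / 3) * (√(C + r ^ 2))⁻¹) ^ n := (mul_pow ..).symm
    _ ≤ decay n 1 r := pow_le_pow_left₀ (by positivity) (mul_inv_sqrt_le hC r) n

lemma subOrder_le_one (n : ℕ) (hC : 0 < C) (r : ℝ) : subOrder n C r ≤ 1 := by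
  rw [subOrder, div_le_one (three_add_sqRatio_pow_pos n hC r)]
  linarith [sqRatio_pow_le_one n hC r]

lemma contDiff_subAmplitude (n : ℕ) (hC : 0 < C) : ContDiff ℝ 2 (subAmplitude n C) :=
  (contDiff_const.mul (contDiff_decay n hC)).div
    (contDiff_const.add ((contDiff_sqRatio hC).pow n)) fun r =>
    (three_add_sqRatio_pow_pos n hC r).ne'

lemma contDiff_subOrder (n : ℕ) (hC : 0 < C) : ContDiff ℝ 2 (subOrder n C) :=
  (contDiff_const.mul ((contDiff_sqRatio hC).pow n)).div
    (contDiff_const.add ((contDiff_sqRatio hC).pow n)) fun r =>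
    (three_add_sqRatio_pow_pos n hC r).ne'

lemma admissible_sub (n : ℕ) (hC : 9 / 2 ≤ C) :
    Admissible n (subAmplitude n C, subOrder n C) := by
  have hC0 : 0 < C := by linarith
  exact ⟨(contDiff_subAmplitude n hC0).continuous.measurable,
    (contDiff_subOrder n hC0).continuous.measurable, fun r => (subAmplitude_pos n hC0 r).le,
    subAmplitude_le n hC, subOrder_nonneg n hC0, subOrder_le_one n hC0⟩

lemma sub_le_monotoneStep (hn : n ≠ 0) (hC : 9 / 2 ≤ C) (hδ : δ ^ 2 ≤ 1)
    (hCn : 10 * (n : ℝ) ≤ (1 - δ) * C) (hCn' : 140 * (n : ℝ) ^ 2 ≤ 3 * (1 - δ ^ 2) * C) :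
    (subAmplitude n C, subOrder n C) ≤ monotoneStep n δ (subAmplitude n C, subOrder n C) := by
  have hC0 : 0 < C := by linarith
  exact (admissible_sub n hC).le_monotoneStep hδ (contDiff_subAmplitude n hC0)
    (contDiff_subOrder n hC0)
    (fun r => by simp only [subAmplitude, even_decay n C r, even_sqRatio C r])
    (fun r => by simp only [subOrder, even_sqRatio C r])
    (fun r hr => subAmplitude_mul_amplitudeReaction_le hn hC0 hδ hCn' hr)
    fun r hr => orderReaction_le_radialLaplacian_subOrder hn hC0 hδ hCn hr

lemma tendsto_sqRatio_pow (n : ℕ) (hC : 0 < C) :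
    Tendsto (fun r => sqRatio C r ^ n) atTop (𝓝 1) := by
  have hden : Tendsto (fun r : ℝ => C + r ^ 2) atTop atTop :=
    tendsto_atTop_add_const_left _ _ (tendsto_pow_atTop two_ne_zero)
  have hlim : Tendsto (fun r : ℝ => 1 - C / (C + r ^ 2)) atTop (𝓝 (1 - 0)) :=
    (hden.const_div_atTop C).const_sub 1
  have hratio : Tendsto (sqRatio C) atTop (𝓝 1) := by
    refine sub_zero (1 : ℝ) ▸ hlim.congr fun r => ?_
    rw [sqRatio, one_sub_div (by positivity), add_sub_cancel_left]
  simpa using hratio.pow n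

lemma tendsto_subOrder (n : ℕ) (hC : 0 < C) : Tendsto (subOrder n C) atTop (𝓝 1) := by
  have hX := tendsto_sqRatio_pow n hC
  have hlim := (hX.const_mul 4).div (hX.const_add 3) (by norm_num)
  norm_num at hlim
  exact hlim

lemma tendsto_pow_mul_subAmplitude (n : ℕ) (hC : 0 < C) :
    Tendsto (fun r => r ^ n * subAmplitude n C r) atTop (𝓝 1) := by
  have hX := tendsto_sqRatio_pow n hC
  have hlim := ((hX.const_mul 16).div ((hX.const_add 3).pow 2) (by norm_num)).sqrt
  norm_num at hlim
  refine hlim.congr' ?_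
  filter_upwards [eventually_ge_atTop 0] with r hr
  have := subAmplitude_pos n hC r
  rw [← sq_pow_mul_subAmplitude n hC, Real.sqrt_sq (by positivity)]

lemma exists_subsolution_constant (n : ℕ) (hδ : δ ^ 2 < 1) :
    ∃ C : ℝ, 9 / 2 ≤ C ∧ 10 * (n : ℝ) ≤ (1 - δ) * C ∧
      140 * (n : ℝ) ^ 2 ≤ 3 * (1 - δ ^ 2) * C := by
  have hδ1 : 0 < 1 - δ := by linarith [lt_of_abs_lt ((sq_lt_one_iff_abs_lt_one δ).1 hδ)]
  have hδ2 : 0 < 3 * (1 - δ ^ 2) := by linarith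
  refine ⟨max (9 / 2) (max (10 * n / (1 - δ)) (140 * n ^ 2 / (3 * (1 - δ ^ 2)))),
    le_max_left .., ?_, ?_⟩
  · rw [← div_le_iff₀' hδ1]
    exact le_max_of_le_right (le_max_left ..)
  · rw [← div_le_iff₀' hδ2]
    exact le_max_of_le_right (le_max_right ..)

theorem exists_pos_isFixedPt_monotoneStep (hn : n ≠ 0) (hδ : δ ^ 2 < 1) :
    ∃ z, Admissible n z ∧ Function.IsFixedPt (monotoneStep n δ) z ∧ (∀ r, 0 < z.1 r) ∧
      Tendsto (fun r => r ^ n * z.1 r) atTop (𝓝 1) ∧ Tendsto z.2 atTop (𝓝 1) := by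
  obtain ⟨C, hC, hCn, hCn'⟩ := exists_subsolution_constant n hδ
  have hC0 : 0 < C := by linarith
  obtain ⟨z, hz, hle, hfix⟩ := (admissible_sub n hC).exists_isFixedPt_monotoneStep hδ.le
    (sub_le_monotoneStep hn hC hδ.le hCn hCn')
  refine ⟨z, hz, hfix, fun r => (subAmplitude_pos n hC0 r).trans_le (hle.1 r), ?_,
    tendsto_of_tendsto_of_tendsto_of_le_of_le (tendsto_subOrder n hC0) tendsto_const_nhds hle.2
      hz.snd_le⟩
  refine tendsto_of_tendsto_of_tendsto_of_le_of_le' (tendsto_pow_mul_subAmplitude n hC0)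
    tendsto_const_nhds ?_ (Eventually.of_forall fun r => le_of_abs_le
      ((sq_le_one_iff_abs_le_one _).1 (hz.sq_le_one r)))
  filter_upwards [eventually_ge_atTop 0] with r hr
  exact mul_le_mul_of_nonneg_left (hle.1 r) (pow_nonneg hr n)

/-! ### Regularity and the normalized profiles -/

namespace Admissible

lemma contDiff_nat_of_isFixedPt (hz : Admissible n z) (hδ : δ ^ 2 ≤ 1)
    (hfix : Function.IsFixedPt (monotoneStep n δ) z) (m : ℕ) :
    ContDiff ℝ m z.1 ∧ ContDiff ℝ m z.2 := by
  have hfst : radialInverse _ _ = z.1 := congrArg Prod.fst hfix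
  have hsnd : radialInverse _ _ = z.2 := congrArg Prod.snd hfix
  have heven₁ : Function.Even z.1 := hfst ▸ even_radialInverse
  have heven₂ : Function.Even z.2 := hsnd ▸ even_radialInverse
  induction m with
  | zero =>
    exact ⟨contDiff_zero.2 (hfst ▸ continuous_radialInverse (hz.growth_amplitudeSource hδ)),
      contDiff_zero.2 (hsnd ▸ continuous_radialInverse (hz.growth_orderSource hδ))⟩
  | succ m ih =>
    obtain ⟨ih₁, ih₂⟩ := ih
    have hpow : ∀ r x : ℝ, ((-r) ^ n * x) ^ 2 = (r ^ n * x) ^ 2 := fun r x => by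
      rw [mul_pow, mul_pow, pow_right_comm, neg_sq, pow_right_comm]
    push_cast
    constructor
    · refine hfst ▸ contDiff_radialInverse (hz.growth_amplitudeSource hδ) (fun r => ?_) ?_
      · simp only [amplitudeSource, amplitudeReaction, heven₁ r, heven₂ r, neg_sq, hpow]
      · unfold amplitudeSource amplitudeReaction
        fun_prop
    · refine hsnd ▸ contDiff_radialInverse (hz.growth_orderSource hδ) (fun r => ?_) ?_
      · simp only [orderSource, orderReaction, heven₁ r, heven₂ r, neg_sq, hpow]
      · unfold orderSource orderReaction
        fun_prop

lemma radialLaplacian_fst (hz : Admissible n z) (hδ : δ ^ 2 ≤ 1)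
    (hfix : Function.IsFixedPt (monotoneStep n δ) z) {r : ℝ} (hr : 0 < r) :
    radialLaplacian (2 * n + 1) z.1 r = z.1 r * amplitudeReaction δ (r ^ n * z.1 r) (z.2 r) := by
  obtain ⟨hc₁, hc₂⟩ := hz.contDiff_nat_of_isFixedPt hδ hfix 0
  have hcont₁ := hc₁.continuous
  have hcont₂ := hc₂.continuous
  have hode := radialLaplacian_radialInverse (e := 2 * n + 1) (hz.growth_amplitudeSource hδ)
    (by unfold amplitudeSource amplitudeReaction; fun_prop) hr
  rw [show radialInverse _ _ = z.1 from congrArg Prod.fst hfix, amplitudeSource] at hode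
  push_cast at hode
  linear_combination hode

lemma radialLaplacian_snd (hz : Admissible n z) (hδ : δ ^ 2 ≤ 1)
    (hfix : Function.IsFixedPt (monotoneStep n δ) z) {r : ℝ} (hr : 0 < r) :
    radialLaplacian 1 z.2 r = orderReaction δ (r ^ n * z.1 r) (z.2 r) := by
  obtain ⟨hc₁, hc₂⟩ := hz.contDiff_nat_of_isFixedPt hδ hfix 0
  have hcont₁ := hc₁.continuous
  have hcont₂ := hc₂.continuous
  have hode := radialLaplacian_radialInverse (e := 1) (hz.growth_orderSource hδ)
    (by unfold orderSource orderReaction; fun_prop) hr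
  rw [show radialInverse _ _ = z.2 from congrArg Prod.snd hfix, orderSource] at hode
  push_cast at hode
  linear_combination hode

end Admissible

lemma hasEulerDeriv_pow (n : ℕ) : HasEulerDeriv (fun x => x ^ n) fun x => n * x ^ n := by
  simpa using HasEulerDeriv.pow_of_log (w := fun x => x) (L := 1)
    (fun x hx => (hasDerivAt_id' x).congr_deriv (by simp [hx.ne'])) n

lemma radialLaplacian_pow_mul (n : ℕ) {a : ℝ → ℝ} (ha : ContDiff ℝ 2 a) {r : ℝ} (hr : 0 < r) :
    radialLaplacian 1 (fun x => x ^ n * a x) r - n ^ 2 * (r ^ n * a r) / r ^ 2 =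
      r ^ n * radialLaplacian (2 * n + 1) a r := by
  have ha' : ∀ x, HasDerivAt a (deriv a x) x := fun x =>
    (ha.differentiable (by norm_num) x).hasDerivAt
  have ha'' : HasDerivAt (deriv a) (deriv (deriv a) r) r :=
    (((contDiff_succ_iff_deriv (n := 1)).1 ha).2.2.differentiable (by norm_num) r).hasDerivAt
  have hpow := hasEulerDeriv_pow n
  have hfst : ∀ x, 0 < x → HasDerivAt (fun x => x ^ n * a x)
      (n * x ^ n / x * a x + x ^ n * deriv a x) x := fun x hx => (hpow x hx).fun_mul (ha' x)
  have hsnd := ((((hpow r hr).const_mul (n : ℝ)).fun_div (hasDerivAt_id r) hr.ne').fun_mul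
    (ha' r)).fun_add ((hpow r hr).fun_mul ha'')
  rw [radialLaplacian_eq hr hfst hsnd, radialLaplacian]
  simp only [id]
  push_cast
  field_simp
  ring

/-- `U` and `y` solve the boundary value problem with winding number `n` in normalized variables,
in which both limits at infinity are `1`. -/
structure NormalizedProfile (n : ℕ) (δ : ℝ) (U y : ℝ → ℝ) : Prop where
  contDiff_amplitude : ContDiff ℝ (⊤ : ℕ∞) U
  contDiff_order : ContDiff ℝ (⊤ : ℕ∞) y
  amplitude_eq : ∀ r, 0 < r →
    radialLaplacian 1 U r - n ^ 2 * U r / r ^ 2 = U r * amplitudeReaction δ (U r) (y r)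
  order_eq : ∀ r, 0 < r → radialLaplacian 1 y r = orderReaction δ (U r) (y r)
  amplitude_zero : U 0 = 0
  deriv_order_zero : deriv y 0 = 0
  tendsto_amplitude : Tendsto U atTop (𝓝 1)
  tendsto_order : Tendsto y atTop (𝓝 1)
  amplitude_pos : ∀ r, 0 < r → 0 < U r
  order_nonneg : ∀ r, 0 ≤ y r
  order_le_one : ∀ r, y r ≤ 1

theorem exists_normalizedProfile (hn : n ≠ 0) (hδ : δ ^ 2 < 1) :
    ∃ U y, NormalizedProfile n δ U y := by
  obtain ⟨z, hz, hfix, hpos, hlim₁, hlim₂⟩ := exists_pos_isFixedPt_monotoneStep hn hδ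
  have hreg := hz.contDiff_nat_of_isFixedPt hδ.le hfix
  have hsmooth : ContDiff ℝ (⊤ : ℕ∞) z.1 := contDiff_infty.2 fun m => (hreg m).1
  refine ⟨fun r => r ^ n * z.1 r, z.2, ?_⟩
  exact {
    contDiff_amplitude := by fun_prop
    contDiff_order := contDiff_infty.2 fun m => (hreg m).2
    amplitude_eq := fun r hr => by
      rw [radialLaplacian_pow_mul n (hreg 2).1 hr, hz.radialLaplacian_fst hδ.le hfix hr, mul_assoc]
    order_eq := fun r hr => hz.radialLaplacian_snd hδ.le hfix hr
    amplitude_zero := by simp [hn]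
    deriv_order_zero :=
      deriv_zero_of_even (congrArg Prod.snd hfix ▸ even_radialInverse : Function.Even z.2)
    tendsto_amplitude := hlim₁
    tendsto_order := hlim₂
    amplitude_pos := fun r hr => mul_pos (pow_pos hr n) (hpos r)
    order_nonneg := hz.snd_nonneg
    order_le_one := hz.snd_le }

end NormalizedSystem

/-! ### Return to the original variables -/

section Rescaling

lemma radialLaplacian_one (w : ℝ → ℝ) (r : ℝ) :
    radialLaplacian 1 w r = deriv (deriv w) r + deriv w r / r := by
  rw [radialLaplacian, Nat.cast_one, one_div_mul_eq_div]

lemma radialLaplacian_const_mul (e : ℕ) (A : ℝ) (f : ℝ → ℝ) (r : ℝ) :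
    radialLaplacian e (fun r => A * f r) r = A * radialLaplacian e f r := by
  simp only [radialLaplacian, deriv_const_mul_field']
  ring

lemma radialLaplacian_sub_const (e : ℕ) (B : ℝ) (f : ℝ → ℝ) (r : ℝ) :
    radialLaplacian e (fun r => f r - B) r = radialLaplacian e f r := by
  simp only [radialLaplacian, deriv_sub_const_fun]

lemma radialLaplacian_comp_mul_left (e : ℕ) {σ : ℝ} (hσ : σ ≠ 0) (f : ℝ → ℝ) (r : ℝ) :
    radialLaplacian e (fun r => f (σ * r)) r = σ ^ 2 * radialLaplacian e f (σ * r) := by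
  have hderiv : ∀ g : ℝ → ℝ, (deriv fun r => g (σ * r)) = fun r => σ * deriv g (σ * r) :=
    fun g => funext fun r => deriv_comp_mul_left σ g r
  rw [radialLaplacian, hderiv, deriv_const_mul_field, hderiv, radialLaplacian]
  field_simp

lemma lt_splus {a2 b2 c2 : ℝ} (ha : 0 < a2) (hc : 0 < c2) :
    b2 < 2 * c2 * splus a2 b2 c2 := by
  have hroot : b2 < √(b2 ^ 2 + 24 * a2 * c2) :=
    Real.lt_sqrt_of_sq_lt (by linarith [mul_pos ha hc])
  rw [splus, mul_div_assoc', lt_div_iff₀ (by positivity)]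
  nlinarith

lemma splus_quadratic {a2 b2 c2 : ℝ} (ha : 0 < a2) (hc : 0 < c2) :
    2 * c2 * splus a2 b2 c2 ^ 2 - b2 * splus a2 b2 c2 - 3 * a2 = 0 := by
  have hroot : √(b2 ^ 2 + 24 * a2 * c2) ^ 2 = b2 ^ 2 + 24 * a2 * c2 :=
    Real.sq_sqrt (by positivity)
  rw [splus]
  generalize √(b2 ^ 2 + 24 * a2 * c2) = x at *
  field_simp
  linear_combination 2 * hroot

lemma exists_splus_parametrization {a2 b2 c2 : ℝ} (ha : 0 < a2) (hb : 0 < b2) (hc : 0 < c2) :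
    ∃ s δ : ℝ, splus a2 b2 c2 = s ∧ 0 < s ∧ δ ^ 2 < 1 ∧
      a2 = c2 * s ^ 2 * (1 + δ) / 3 ∧ b2 = c2 * s * (1 - δ) := by
  have hlt := lt_splus (b2 := b2) ha hc
  have hquad := splus_quadratic (b2 := b2) ha hc
  have hs : 0 < splus a2 b2 c2 := pos_of_mul_pos_right (hb.trans hlt) (by positivity)
  generalize splus a2 b2 c2 = s at *
  have hcs : 0 < c2 * s := mul_pos hc hs
  have hratio_pos : 0 < b2 / (c2 * s) := div_pos hb hcs
  have hratio_lt : b2 / (c2 * s) < 2 := (div_lt_iff₀ hcs).2 (by linarith)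
  refine ⟨s, 1 - b2 / (c2 * s), rfl, hs, by nlinarith, ?_, by field_simp; ring⟩
  field_simp
  linear_combination -hquad

/-- The component `u`, with limit `s / √2`, obtained from a normalized amplitude `U`. -/
noncomputable def amplitudeProfile (s σ : ℝ) (U : ℝ → ℝ) (r : ℝ) : ℝ :=
  s / √2 * U (σ * r)

/-- The component `v`, with limit `-s / √6`, obtained from a normalized order parameter `y`. -/
noncomputable def orderProfile (s δ σ : ℝ) (y : ℝ → ℝ) (r : ℝ) : ℝ :=
  s / √6 * (δ * y (σ * r) - (1 + δ))

variable {n : ℕ} {s δ σ c : ℝ} {U y : ℝ → ℝ}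

lemma sq_amplitudeProfile (s σ : ℝ) (U : ℝ → ℝ) (r : ℝ) :
    amplitudeProfile s σ U r ^ 2 = s ^ 2 * U (σ * r) ^ 2 / 2 := by
  rw [amplitudeProfile, mul_pow, div_pow, Real.sq_sqrt zero_le_two, div_mul_eq_mul_div]

lemma sq_orderProfile (s δ σ : ℝ) (y : ℝ → ℝ) (r : ℝ) :
    orderProfile s δ σ y r ^ 2 = s ^ 2 * (δ * y (σ * r) - (1 + δ)) ^ 2 / 6 := by
  rw [orderProfile, mul_pow, div_pow, Real.sq_sqrt (by norm_num), div_mul_eq_mul_div]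

lemma one_div_sqrt_six_mul_orderProfile (s δ σ : ℝ) (y : ℝ → ℝ) (r : ℝ) :
    1 / √6 * orderProfile s δ σ y r = s * (δ * y (σ * r) - (1 + δ)) / 6 := by
  rw [orderProfile]
  field_simp
  rw [Real.sq_sqrt (by norm_num)]
  ring

lemma sqrt_two_thirds : √(2 / 3) = 2 * (1 / √6) := by
  rw [Real.sqrt_eq_iff_mul_self_eq (by norm_num) (by positivity)]
  field_simp
  norm_num

namespace NormalizedProfile

lemma amplitudeProfile_eq (hp : NormalizedProfile n δ U y) (hσ : 0 < σ)
    (hσc : σ ^ 2 = 5 / 3 * (c * s ^ 2)) {r : ℝ} (hr : 0 < r) :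
    radialLaplacian 1 (amplitudeProfile s σ U) r - n ^ 2 * amplitudeProfile s σ U r / r ^ 2 =
      amplitudeProfile s σ U r * (-(c * s ^ 2 * (1 + δ) / 3) +
        √(2 / 3) * (c * s * (1 - δ)) * orderProfile s δ σ y r +
        c * (amplitudeProfile s σ U r ^ 2 + orderProfile s δ σ y r ^ 2)) := by
  have hode := hp.amplitude_eq (σ * r) (by positivity)
  have hcoupling : √(2 / 3) * (c * s * (1 - δ)) * orderProfile s δ σ y r =
      c * s * (1 - δ) * (s * (δ * y (σ * r) - (1 + δ)) / 3) := by
    rw [sqrt_two_thirds]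
    linear_combination 2 * c * s * (1 - δ) * one_div_sqrt_six_mul_orderProfile s δ σ y r
  rw [sq_amplitudeProfile, sq_orderProfile, hcoupling]
  unfold amplitudeProfile
  rw [radialLaplacian_const_mul, radialLaplacian_comp_mul_left 1 hσ.ne']
  calc _ = s / √2 * σ ^ 2 * (radialLaplacian 1 U (σ * r) - n ^ 2 * U (σ * r) / (σ * r) ^ 2) := by
        field_simp
    _ = _ := by
        rw [hode, hσc, amplitudeReaction]
        ring

lemma orderProfile_eq (hp : NormalizedProfile n δ U y) (hσ : 0 < σ)
    (hσc : σ ^ 2 = 5 / 3 * (c * s ^ 2)) {r : ℝ} (hr : 0 < r) :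
    radialLaplacian 1 (orderProfile s δ σ y) r =
      orderProfile s δ σ y r * (-(c * s ^ 2 * (1 + δ) / 3) -
        1 / √6 * (c * s * (1 - δ)) * orderProfile s δ σ y r +
        c * (amplitudeProfile s σ U r ^ 2 + orderProfile s δ σ y r ^ 2)) +
      1 / √6 * (c * s * (1 - δ)) * amplitudeProfile s σ U r ^ 2 := by
  rw [mul_right_comm (1 / √6) _ (orderProfile s δ σ y r), one_div_sqrt_six_mul_orderProfile,
    sq_amplitudeProfile, sq_orderProfile]
  unfold orderProfile
  rw [radialLaplacian_const_mul, radialLaplacian_sub_const, radialLaplacian_const_mul,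
    radialLaplacian_comp_mul_left 1 hσ.ne', hp.order_eq (σ * r) (by positivity), hσc,
    orderReaction]
  ring

lemma contDiff_amplitudeProfile (hp : NormalizedProfile n δ U y) (s σ : ℝ) :
    ContDiff ℝ (⊤ : ℕ∞) (amplitudeProfile s σ U) :=
  contDiff_const.mul (hp.contDiff_amplitude.comp (contDiff_const.mul contDiff_id))

lemma contDiff_orderProfile (hp : NormalizedProfile n δ U y) (s σ : ℝ) :
    ContDiff ℝ (⊤ : ℕ∞) (orderProfile s δ σ y) :=
  contDiff_const.mul ((contDiff_const.mul
    (hp.contDiff_order.comp (contDiff_const.mul contDiff_id))).sub contDiff_const)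

lemma derivWithin_orderProfile (hp : NormalizedProfile n δ U y) (s σ : ℝ) :
    derivWithin (orderProfile s δ σ y) (Ici 0) 0 = 0 := by
  rw [((hp.contDiff_orderProfile s σ).differentiable (by simp) 0).derivWithin
    (uniqueDiffOn_Ici 0 0 self_mem_Ici)]
  unfold orderProfile
  rw [deriv_const_mul_field, deriv_sub_const, deriv_const_mul_field, deriv_comp_mul_left, mul_zero,
    hp.deriv_order_zero]
  simp only [smul_eq_mul, mul_zero]

lemma tendsto_amplitudeProfile (hp : NormalizedProfile n δ U y) (s : ℝ) (hσ : 0 < σ) :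
    Tendsto (amplitudeProfile s σ U) atTop (𝓝 (s / √2)) := by
  have hlim := (hp.tendsto_amplitude.comp (tendsto_id.const_mul_atTop hσ)).const_mul (s / √2)
  rwa [mul_one] at hlim

lemma tendsto_orderProfile (hp : NormalizedProfile n δ U y) (s : ℝ) (hσ : 0 < σ) :
    Tendsto (orderProfile s δ σ y) atTop (𝓝 (-s / √6)) := by
  have hlim := (((hp.tendsto_order.comp (tendsto_id.const_mul_atTop hσ)).const_mul δ).sub_const
    (1 + δ)).const_mul (s / √6)
  rwa [show s / √6 * (δ * 1 - (1 + δ)) = -s / √6 by ring] at hlim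

lemma amplitudeProfile_pos (hp : NormalizedProfile n δ U y) (hs : 0 < s) (hσ : 0 < σ) {r : ℝ}
    (hr : 0 < r) : 0 < amplitudeProfile s σ U r :=
  mul_pos (by positivity) (hp.amplitude_pos _ (mul_pos hσ hr))

lemma orderProfile_neg (hp : NormalizedProfile n δ U y) (hδ : δ ^ 2 < 1) (hs : 0 < s) (σ r : ℝ) :
    orderProfile s δ σ y r < 0 := by
  have hδ' := abs_lt.1 ((sq_lt_one_iff_abs_lt_one δ).1 hδ)
  have hy0 := hp.order_nonneg (σ * r)
  have hy1 := hp.order_le_one (σ * r)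
  exact mul_neg_of_pos_of_neg (by positivity) (by nlinarith)

end NormalizedProfile

end Rescaling

end

/-- existence of a solution `(u,v)` of the ODE system with the stated
boundary conditions, with `u > 0` and `v < 0` on `(0,∞)`. -/
theorem stmt2 (a2 b2 c2 : ℝ) (ha : 0 < a2) (hb : 0 < b2) (hc : 0 < c2)
    (k : ℤ) (hk : k ≠ 0) :
    ∃ u v : ℝ → ℝ,
      ContDiffOn ℝ 2 u (Set.Ici 0) ∧ ContDiffOn ℝ (⊤ : ℕ∞) u (Set.Ioi 0) ∧
      ContDiffOn ℝ (⊤ : ℕ∞) v (Set.Ici 0) ∧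
      (∀ r : ℝ, 0 < r →
        (deriv (deriv u) r + deriv u r / r - (k : ℝ)^2 * u r / r^2 =
          u r * (-a2 + Real.sqrt (2/3) * b2 * v r + c2 * ((u r)^2 + (v r)^2))) ∧
        (deriv (deriv v) r + deriv v r / r =
          v r * (-a2 - (1 / Real.sqrt 6) * b2 * v r + c2 * ((u r)^2 + (v r)^2))
            + (1 / Real.sqrt 6) * b2 * (u r)^2)) ∧
      u 0 = 0 ∧ derivWithin v (Set.Ici 0) 0 = 0 ∧
      Filter.Tendsto u Filter.atTop (nhds (splus a2 b2 c2 / Real.sqrt 2)) ∧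
      Filter.Tendsto v Filter.atTop (nhds (-(splus a2 b2 c2) / Real.sqrt 6)) ∧
      (∀ r : ℝ, 0 < r → 0 < u r ∧ v r < 0) := by
  obtain ⟨s, δ, hsplus, hs, hδ, rfl, rfl⟩ := exists_splus_parametrization ha hb hc
  obtain ⟨U, y, hp⟩ := exists_normalizedProfile (Int.natAbs_ne_zero.2 hk) hδ
  obtain ⟨σ, hσ, hσc⟩ : ∃ σ : ℝ, 0 < σ ∧ σ ^ 2 = 5 / 3 * (c2 * s ^ 2) :=
    ⟨√(5 / 3 * (c2 * s ^ 2)), by positivity, Real.sq_sqrt (by positivity)⟩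
  have hk_sq : (k : ℝ) ^ 2 = (k.natAbs : ℝ) ^ 2 := by
    rw [Nat.cast_natAbs, Int.cast_abs, sq_abs]
  have hu := hp.contDiff_amplitudeProfile s σ
  rw [hsplus, hk_sq]
  simp only [← radialLaplacian_one]
  exact ⟨amplitudeProfile s σ U, orderProfile s δ σ y, (hu.of_le (by norm_cast)).contDiffOn,
    hu.contDiffOn, (hp.contDiff_orderProfile s σ).contDiffOn,
    fun r hr => ⟨hp.amplitudeProfile_eq hσ hσc hr, hp.orderProfile_eq hσ hσc hr⟩,
    by simp [amplitudeProfile, hp.amplitude_zero], hp.derivWithin_orderProfile s σ,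
    hp.tendsto_amplitudeProfile s hσ, hp.tendsto_orderProfile s hσ,
    fun r hr => ⟨hp.amplitudeProfile_pos hs hσ hr, hp.orderProfile_neg hδ hs σ r⟩⟩
end

section
/- Let a²,b²,c² > 0 and k ∈ ℤ with |k| ≥ 2. Let u, v : [0,∞) → ℝ with u ∈ C²([0,∞)) ∩ C^∞((0,∞)), v ∈ C^∞([0,∞)), solving on (0,∞) the ODE system u'' + u'/r − k²u/r² = u[−a² + √(2/3)b²v + c²(u²+v²)], v'' + v'/r = v[−a² − (1/√6)b²v + c²(u²+v²)] + (1/√6)b²u², with u(0) = 0, v'(0) = 0, lim_{r→∞} u(r) = s₊/√2, lim_{r→∞} v(r) = −s₊/√6. Define Q : ℝ² → S₀ by Q(x) = u(|x|)·√2(n(x)⊗n(x) − (1/2)I₂) + v(|x|)·√(3/2)(e₃⊗e₃ − (1/3)I₃). Then Q is locally unstable: there exists a smooth compactly supported map P : ℝ² → S₀ such that the second variation L[Q](P) = ∫_{ℝ²} [ (1/2)|∇P|² − (a²/2)|P|² − b²·tr(P²Q) + (c²/2)(|Q|²|P|² + 2(tr(QP))²) ] dx is strictly negative. -/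
open Real Matrix
open scoped ENNReal

/-!
For `m + l = k` the field `e^{imφ} + e^{ilφ}` is `2 cos ((m - l)φ/2)` times the director `n`, so
`P = g (log r) (p ⊗ e₃ + e₃ ⊗ p)` with this `p` tilts the director out of the plane. In the
variable `t = log r` the second variation becomes `A ∫ (g'² + W g²) dt + B ∫ g² dt`, where `A` is
the mass and `B` the Dirichlet energy of the field on the circle. The gap `w = u - √3 v`
(up to the factor `√2`, the difference of two eigenvalues of `Q`) satisfies `w'' = k² u + W w`
because rotating the director is a symmetry of the bulk energy. Hence `w (w'' - (W + B/A) w)` tends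
to `s² (k² - 2B/A)` with `s = s₊`. This is positive when `m l > 0`: splitting the winding `k` into
two modes of the same sign costs less than half of `k²`. Long cutoffs of `w` then make the energy
negative.
-/

noncomputable section

open Filter MeasureTheory Set
open scoped Topology

/-! ### Energies on the line -/

theorem integral_comp_inv_mul_sub {T : ℝ} (hT : 0 < T) (g : ℝ → ℝ) (a : ℝ) :
    ∫ t, g (T⁻¹ * (t - a)) = T * ∫ t, g t := by
  rw [integral_sub_right_eq_self (fun t => g (T⁻¹ * t)), Measure.integral_comp_inv_mul_left,
    abs_of_pos hT, smul_eq_mul]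

theorem exists_integral_deriv_sq_lt {ε : ℝ} (hε : 0 < ε) (R : ℝ) :
    ∃ η : ℝ → ℝ, ContDiff ℝ (⊤ : ℕ∞) η ∧ HasCompactSupport η ∧ (∀ t ≤ R, η t = 0) ∧
      ∫ t, deriv η t ^ 2 < ε * ∫ t, η t ^ 2 := by
  let β : ContDiffBump (0 : ℝ) := default
  have hβ : ContDiff ℝ (⊤ : ℕ∞) β := β.contDiff
  have hβpos : 0 < ∫ t, β t ^ 2 :=
    (β.continuous.pow 2).integral_pos_of_hasCompactSupport_nonneg_nonzero
      (β.hasCompactSupport.comp_left (g := (· ^ 2)) (by simp)) (fun t => sq_nonneg (β t)) (x := 0)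
      (by simp [(β.pos_of_mem_ball (Metric.mem_ball_self β.rOut_pos)).ne'])
  obtain ⟨T, hTβ, hT⟩ := ((eventually_gt_atTop ((∫ t, deriv β t ^ 2) / (ε * ∫ t, β t ^ 2))).and
    (eventually_ge_atTop 1)).exists
  have hT0 : 0 < T := one_pos.trans_le hT
  -- Stretching a bump by the factor `T` divides the ratio of the two integrals by `T²`.
  let η : ℝ → ℝ := fun t => β (T⁻¹ * (t - (R + T * β.rOut)))
  have hη' (t : ℝ) : deriv η t = T⁻¹ * deriv β (T⁻¹ * (t - (R + T * β.rOut))) := by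
    have := (hβ.differentiable (by simp) (T⁻¹ * (t - (R + T * β.rOut)))).hasDerivAt.comp t
      (((hasDerivAt_id t).sub_const (R + T * β.rOut)).const_mul T⁻¹)
    exact this.deriv.trans (by rw [mul_one, mul_comm])
  refine ⟨η, hβ.comp (by fun_prop), ?_, fun t ht => ?_, ?_⟩
  · refine β.hasCompactSupport.comp_isClosedEmbedding
      (g := fun t => T⁻¹ * (t - (R + T * β.rOut))) ?_
    exact ((Homeomorph.subRight (R + T * β.rOut)).trans
      (Homeomorph.mulLeft₀ T⁻¹ (inv_ne_zero hT0.ne'))).isClosedEmbedding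
  · refine β.zero_of_le_dist ?_
    rw [dist_zero_right, Real.norm_eq_abs, le_abs]
    right
    rw [← mul_neg, le_inv_mul_iff₀ hT0]
    linarith
  · simp only [hη', mul_pow, η]
    rw [integral_const_mul, integral_comp_inv_mul_sub hT0 (deriv β · ^ 2),
      integral_comp_inv_mul_sub hT0 (β · ^ 2)]
    rw [div_lt_iff₀ (by positivity)] at hTβ
    calc T⁻¹ ^ 2 * (T * ∫ t, deriv β t ^ 2)
        = (∫ t, deriv β t ^ 2) / T := by field_simp
      _ < ε * ∫ t, β t ^ 2 := by rwa [div_lt_iff₀' hT0]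
      _ ≤ ε * (T * ∫ t, β t ^ 2) := by gcongr; exact le_mul_of_one_le_left hβpos.le hT

theorem integrable_of_eq_zero_of_deriv_eq_zero {η G : ℝ → ℝ} (hη : HasCompactSupport η)
    (hG : Continuous G) (h0 : ∀ t, η t = 0 → deriv η t = 0 → G t = 0) : Integrable G := by
  refine hG.integrable_of_hasCompactSupport (HasCompactSupport.intro hη.isCompact fun t ht => ?_)
  exact h0 t (image_eq_zero_of_notMem_tsupport ht)
    (image_eq_zero_of_notMem_tsupport fun h => ht (tsupport_deriv_subset h))

theorem integral_deriv_mul_sq_add {w η W : ℝ → ℝ} (hw : ContDiff ℝ 2 w) (hη : ContDiff ℝ 1 η)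
    (hηs : HasCompactSupport η) (hW : Continuous W) :
    ∫ t, (deriv (fun s => w s * η s) t ^ 2 + W t * (w t * η t) ^ 2) =
      ∫ t, (w t ^ 2 * deriv η t ^ 2 - w t * (deriv (deriv w) t - W t * w t) * η t ^ 2) := by
  have hw' : ContDiff ℝ 1 (deriv w) := hw.deriv'
  have dw (t : ℝ) : HasDerivAt w (deriv w t) t := (hw.differentiable two_ne_zero t).hasDerivAt
  have dη (t : ℝ) : HasDerivAt η (deriv η t) t := (hη.differentiable one_ne_zero t).hasDerivAt
  have dwη : deriv (fun s => w s * η s) = fun t => deriv w t * η t + w t * deriv η t :=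
    funext fun t => ((dw t).mul (dη t)).deriv
  let F : ℝ → ℝ := fun t => w t * deriv w t * η t ^ 2
  let F' : ℝ → ℝ := fun t =>
    (deriv w t ^ 2 + w t * deriv (deriv w) t) * η t ^ 2 + 2 * w t * deriv w t * η t * deriv η t
  have dF (t : ℝ) : HasDerivAt F (F' t) t :=
    (((dw t).mul (hw'.differentiable one_ne_zero t).hasDerivAt).mul ((dη t).pow 2)).congr_deriv
      (by simp [F']; ring)
  have hF'0 : ∫ t, F' t = 0 := integral_eq_zero_of_hasDerivAt_of_integrable dF
    (integrable_of_eq_zero_of_deriv_eq_zero hηs (by fun_prop) fun t h _ => by simp [F', h])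
    (integrable_of_eq_zero_of_deriv_eq_zero hηs (by fun_prop) fun t h _ => by simp [F, h])
  simp only [dwη]
  rw [← sub_eq_zero, ← integral_sub, ← hF'0]
  · congr 1 with t
    ring
  · exact integrable_of_eq_zero_of_deriv_eq_zero hηs (by fun_prop) fun t h0 h0' => by simp [h0, h0']
  · exact integrable_of_eq_zero_of_deriv_eq_zero hηs (by fun_prop) fun t h0 h0' => by simp [h0, h0']

theorem deriv_eq_zero_of_forall_le {η : ℝ → ℝ} {S t : ℝ} (hη : ∀ s ≤ S, η s = 0) (ht : t < S) :
    deriv η t = 0 := by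
  have : η =ᶠ[𝓝 t] fun _ => 0 := by
    filter_upwards [Iio_mem_nhds ht] with s hs using hη s (le_of_lt hs)
  simpa using this.deriv_eq

theorem exists_integral_deriv_sq_add_neg {w W : ℝ → ℝ} {c M : ℝ} (hw : ContDiff ℝ (⊤ : ℕ∞) w)
    (hW : Continuous W) (hc : 0 < c) (hwM : ∀ᶠ t in atTop, w t ^ 2 ≤ M)
    (hwc : ∀ᶠ t in atTop, c ≤ w t * (deriv (deriv w) t - W t * w t)) (R : ℝ) :
    ∃ g : ℝ → ℝ, ContDiff ℝ (⊤ : ℕ∞) g ∧ HasCompactSupport g ∧ (∀ t ≤ R, g t = 0) ∧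
      ∫ t, (deriv g t ^ 2 + W t * g t ^ 2) < 0 := by
  obtain ⟨S, hS⟩ := eventually_atTop.1 (hwM.and hwc)
  have hM : 0 ≤ M := (sq_nonneg _).trans (hS S le_rfl).1
  obtain ⟨η, hη, hηs, hη0, hlt⟩ := exists_integral_deriv_sq_lt
    (div_pos hc (add_pos_of_nonneg_of_pos hM one_pos)) (max R S)
  have hη0S (t : ℝ) (ht : t ≤ S) : η t = 0 := hη0 t (le_max_of_le_right ht)
  have hw2 : ContDiff ℝ 2 w := mod_cast contDiff_infty.1 hw 2
  have cη' := hη.continuous_deriv (by simp)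
  refine ⟨fun t => w t * η t, hw.mul hη, hηs.mul_left,
    fun t ht => by simp [hη0 t (le_max_of_le_left ht)], ?_⟩
  have integrable {G : ℝ → ℝ} := integrable_of_eq_zero_of_deriv_eq_zero (G := G) hηs
  calc ∫ t, (deriv (fun s => w s * η s) t ^ 2 + W t * (w t * η t) ^ 2)
      = ∫ t, (w t ^ 2 * deriv η t ^ 2 - w t * (deriv (deriv w) t - W t * w t) * η t ^ 2) :=
        integral_deriv_mul_sq_add hw2 (hη.of_le (by simp)) hηs hW
    _ ≤ ∫ t, ((M + 1) * deriv η t ^ 2 - c * η t ^ 2) := by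
        refine integral_mono (integrable (by fun_prop) fun t h h' => by simp [h, h'])
          (integrable (by fun_prop) fun t h h' => by simp [h, h']) fun t => ?_
        rcases lt_or_ge t S with ht | ht
        · simp [deriv_eq_zero_of_forall_le hη0S ht, hη0S t ht.le]
        · obtain ⟨hwM, hwc⟩ := hS t ht
          exact sub_le_sub (by gcongr; linarith) (by gcongr)
    _ = (M + 1) * (∫ t, deriv η t ^ 2) - c * ∫ t, η t ^ 2 := by
        rw [integral_sub, integral_const_mul, integral_const_mul]
        · exact integrable (by fun_prop) fun t _ h' => by simp [h']
        · exact integrable (by fun_prop) fun t h0 _ => by simp [h0]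
    _ < 0 := by
        rw [div_mul_eq_mul_div, lt_div_iff₀' (by positivity)] at hlt
        exact sub_neg.2 hlt

/-! ### Logarithmic polar coordinates -/

/-- The point of the plane with logarithmic polar coordinates `(t, φ)`, that is `e^{t + iφ}`. -/
def logPolar (t φ : ℝ) : ℝ × ℝ := (Real.exp t * Real.cos φ, Real.exp t * Real.sin φ)

theorem equivRealProdCLM_symm_logPolar (t φ : ℝ) :
    Complex.equivRealProdCLM.symm (logPolar t φ) = Complex.exp (t + φ * Complex.I) := by
  rw [Complex.equivRealProdCLM_symm_apply, Complex.exp_add, Complex.exp_mul_I]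
  simp only [logPolar]
  push_cast
  ring

theorem image_prodMap_exp_id :
    Prod.map Real.exp id '' (univ ×ˢ Ioo (-π) π) = polarCoord.target := by
  rw [prodMap_image_prod, image_univ, Real.range_exp, image_id, polarCoord_target]

theorem integral_eq_setIntegral_logPolar (F : ℝ × ℝ → ℝ) :
    ∫ x, F x = ∫ p in univ ×ˢ Ioo (-π) π, Real.exp p.1 ^ 2 * F (logPolar p.1 p.2) := by
  let D (p : ℝ × ℝ) : ℝ × ℝ →L[ℝ] ℝ × ℝ :=
    (ContinuousLinearMap.toSpanSingleton ℝ (Real.exp p.1)).prodMap (.id ℝ ℝ)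
  have hD (p : ℝ × ℝ) : HasFDerivAt (Prod.map Real.exp id) (D p) p :=
    (Real.hasDerivAt_exp p.1).hasFDerivAt.prodMap p (hasFDerivAt_id p.2)
  have hdet (p : ℝ × ℝ) : (D p).det = Real.exp p.1 := by
    have : (D p : ℝ × ℝ →ₗ[ℝ] ℝ × ℝ) = LinearMap.prodMap
        (ContinuousLinearMap.toSpanSingleton ℝ (Real.exp p.1) : ℝ →ₗ[ℝ] ℝ) LinearMap.id := rfl
    rw [ContinuousLinearMap.det, this, LinearMap.det_prodMap]
    simp
  have hinj : InjOn (Prod.map Real.exp id) (univ ×ˢ Ioo (-π) π) :=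
    (Real.exp_injective.prodMap Function.injective_id).injOn
  have hmeas : MeasurableSet (univ ×ˢ Ioo (-π) π : Set (ℝ × ℝ)) :=
    MeasurableSet.univ.prod measurableSet_Ioo
  rw [← integral_comp_polarCoord_symm F, ← image_prodMap_exp_id,
    integral_image_eq_integral_abs_det_fderiv_smul volume hmeas
      (fun p _ => (hD p).hasFDerivWithinAt) hinj]
  refine setIntegral_congr_fun hmeas fun p _ => ?_
  simp only [hdet, Real.abs_exp, smul_eq_mul, polarCoord_symm_apply, Prod.map_fst, Prod.map_snd,
    id, logPolar]
  ring

theorem exp_sq_mul_gradNormSq_logPolar {h : ℝ × ℝ → ℝ} {t φ A B : ℝ}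
    (hd : DifferentiableAt ℝ h (logPolar t φ))
    (hA : HasDerivAt (fun s => h (logPolar s φ)) A t)
    (hB : HasDerivAt (fun ψ => h (logPolar t ψ)) B φ) :
    Real.exp t ^ 2 * gradNormSq h (logPolar t φ) = A ^ 2 + B ^ 2 := by
  have dt : HasDerivAt (fun s => logPolar s φ)
      (Real.exp t * Real.cos φ, Real.exp t * Real.sin φ) t :=
    ((Real.hasDerivAt_exp t).mul_const _).prodMk ((Real.hasDerivAt_exp t).mul_const _)
  have dφ : HasDerivAt (logPolar t) (Real.exp t * -Real.sin φ, Real.exp t * Real.cos φ) φ :=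
    ((Real.hasDerivAt_cos φ).const_mul _).prodMk ((Real.hasDerivAt_sin φ).const_mul _)
  set D := fderiv ℝ h (logPolar t φ) with hD
  have D_apply (a b : ℝ) : D (a, b) = a * D (1, 0) + b * D (0, 1) := by
    rw [show ((a, b) : ℝ × ℝ) = a • (1, 0) + b • (0, 1) by simp, map_add, map_smul, map_smul,
      smul_eq_mul, smul_eq_mul]
  rw [hA.unique (hd.hasFDerivAt.comp_hasDerivAt t dt),
    hB.unique (hd.hasFDerivAt.comp_hasDerivAt φ dφ), ← hD,
    D_apply, D_apply (Real.exp t * -Real.sin φ), gradNormSq, ← hD]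
  linear_combination
    -Real.exp t ^ 2 * (D (1, 0) ^ 2 + D (0, 1) ^ 2) * Real.sin_sq_add_cos_sq φ

theorem exp_sq_mul_gradNormSq_logPolar_of_separated {h : ℝ × ℝ → ℝ} {g c : ℝ → ℝ} {t φ g' c' : ℝ}
    (hh : ∀ s ψ, h (logPolar s ψ) = g s * c ψ) (hd : DifferentiableAt ℝ h (logPolar t φ))
    (hg : HasDerivAt g g' t) (hc : HasDerivAt c c' φ) :
    Real.exp t ^ 2 * gradNormSq h (logPolar t φ) = (g' * c φ) ^ 2 + (g t * c') ^ 2 :=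
  exp_sq_mul_gradNormSq_logPolar hd (by simpa only [hh] using hg.mul_const (c φ))
    (by simpa only [hh] using hc.const_mul (g t))

/-- The superposition `g (log |z|) (e^{imφ} + e^{ilφ})` of two angular modes, `z = |z| e^{iφ}`. -/
def twoMode (g : ℝ → ℝ) (m l : ℤ) (z : ℂ) : ℂ :=
  g (Real.log ‖z‖) • ((z / ‖z‖) ^ m + (z / ‖z‖) ^ l)

theorem twoMode_exp (g : ℝ → ℝ) (m l : ℤ) (t φ : ℝ) :
    twoMode g m l (Complex.exp (t + φ * Complex.I)) =
      ⟨g t * (Real.cos (m * φ) + Real.cos (l * φ)),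
        g t * (Real.sin (m * φ) + Real.sin (l * φ))⟩ := by
  have hnorm : ‖Complex.exp (t + φ * Complex.I)‖ = Real.exp t := by simp [Complex.norm_exp]
  have hphase : Complex.exp (t + φ * Complex.I) / Real.exp t = Complex.exp (φ * Complex.I) := by
    rw [Complex.exp_add, Complex.ofReal_exp, mul_div_cancel_left₀ _ (Complex.exp_ne_zero _)]
  have hmode (n : ℤ) : Complex.exp (φ * Complex.I) ^ n = ⟨Real.cos (n * φ), Real.sin (n * φ)⟩ := by
    rw [← Complex.exp_int_mul, ← mul_assoc, ← Complex.ofReal_intCast, ← Complex.ofReal_mul]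
    apply Complex.ext
    · exact Complex.exp_ofReal_mul_I_re _
    · exact Complex.exp_ofReal_mul_I_im _
  rw [twoMode, hnorm, Real.log_exp, hphase, hmode, hmode]
  apply Complex.ext <;> simp [mul_add]

theorem contDiffAt_div_norm_zpow (n : ℤ) {z : ℂ} (hz : z ≠ 0) :
    ContDiffAt ℝ (⊤ : ℕ∞) (fun z : ℂ => (z / ‖z‖) ^ n) z := by
  have hnorm : (‖z‖ : ℂ) ≠ 0 := by simpa using hz
  have hnormS : ContDiffAt ℝ (⊤ : ℕ∞) (fun z : ℂ => (‖z‖ : ℂ)) z :=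
    Complex.ofRealCLM.contDiff.contDiffAt.comp z (contDiffAt_norm ℝ hz)
  have hphase : ContDiffAt ℝ (⊤ : ℕ∞) (fun z : ℂ => z / ‖z‖) z := by
    have hinv := hnormS.inv hnorm
    simp only [div_eq_mul_inv]
    exact contDiffAt_fun_id.mul hinv
  have hpow : ContDiffAt ℝ (⊤ : ℕ∞) (fun ζ : ℂ => ζ ^ n) (z / ‖z‖) :=
    ((analyticAt_id (𝕜 := ℝ)).zpow (div_ne_zero hz hnorm)).contDiffAt
  exact hpow.comp z hphase

theorem contDiff_twoMode {g : ℝ → ℝ} (hg : ContDiff ℝ (⊤ : ℕ∞) g) (hg0 : ∀ t ≤ 0, g t = 0)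
    (m l : ℤ) : ContDiff ℝ (⊤ : ℕ∞) (twoMode g m l) := by
  rw [contDiff_iff_contDiffAt]
  intro z
  rcases eq_or_ne z 0 with rfl | hz
  -- At `z = 0` the value `Real.log 0 = 0` also falls where `g` vanishes.
  · refine (contDiffAt_const (c := (0 : ℂ))).congr_of_eventuallyEq ?_
    filter_upwards [Metric.ball_mem_nhds (0 : ℂ) one_pos] with y hy
    rw [mem_ball_zero_iff] at hy
    rw [twoMode, hg0 _ (Real.log_nonpos (norm_nonneg y) hy.le), zero_smul]
  · have hlog : ContDiffAt ℝ (⊤ : ℕ∞) (fun z : ℂ => Real.log ‖z‖) z :=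
      (contDiffAt_norm ℝ hz).log (norm_ne_zero_iff.2 hz)
    exact (hg.contDiffAt.comp z hlog).smul
      ((contDiffAt_div_norm_zpow m hz).add (contDiffAt_div_norm_zpow l hz))

theorem hasCompactSupport_twoMode {g : ℝ → ℝ} (hg : HasCompactSupport g) (m l : ℤ) :
    HasCompactSupport (twoMode g m l) := by
  obtain ⟨T, hT⟩ := hg.isCompact.bddAbove
  refine HasCompactSupport.intro (isCompact_closedBall 0 (Real.exp T)) fun z hz => ?_
  rw [mem_closedBall_zero_iff, not_le] at hz
  have hlog : T < Real.log ‖z‖ := (Real.lt_log_iff_exp_lt ((Real.exp_pos T).trans hz)).2 hz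
  rw [twoMode, image_eq_zero_of_notMem_tsupport fun h => hlog.not_ge (hT h), zero_smul]

/-! ### Tilting perturbations -/

/-- The symmetric matrix `p ⊗ e₃ + e₃ ⊗ p` for the horizontal vector `p = (w.re, w.im, 0)`. -/
def tilt (w : ℂ) : Mat3 := !![0, 0, w.re; 0, 0, w.im; w.re, w.im, 0]

theorem tilt_zero : tilt 0 = 0 := by
  ext i j
  fin_cases i <;> fin_cases j <;> rfl

theorem isS0_tilt (w : ℂ) : isS0 (tilt w) := by
  constructor
  · ext i j
    fin_cases i <;> fin_cases j <;> rfl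
  · simp [tilt, Matrix.trace, Fin.sum_univ_three]

theorem contDiff_tilt_apply {f : ℝ × ℝ → ℂ} (hf : ContDiff ℝ (⊤ : ℕ∞) f) (i j : Fin 3) :
    ContDiff ℝ (⊤ : ℕ∞) fun x => tilt (f x) i j := by
  have hre : ContDiff ℝ (⊤ : ℕ∞) fun x => (f x).re := Complex.reCLM.contDiff.comp hf
  have him : ContDiff ℝ (⊤ : ℕ∞) fun x => (f x).im := Complex.imCLM.contDiff.comp hf
  fin_cases i <;> fin_cases j <;> simp [tilt, hre, him, contDiff_const]

theorem matGradNormSq_tilt (f : ℝ × ℝ → ℂ) (x : ℝ × ℝ) :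
    matGradNormSq (fun x => tilt (f x)) x =
      2 * (gradNormSq (fun x => (f x).re) x + gradNormSq (fun x => (f x).im) x) := by
  have h0 : gradNormSq (fun _ => (0 : ℝ)) x = 0 := by simp [gradNormSq]
  simp [matGradNormSq, Fin.sum_univ_three, tilt, h0]
  ring

theorem trace_tilt_mul_tilt (w : ℂ) :
    (tilt w * tilt w).trace = 2 * (w.re ^ 2 + w.im ^ 2) := by
  simp [tilt, Matrix.trace, Fin.sum_univ_three]
  ring

theorem E0_eq_s13 : E0 = (1 / Real.sqrt 6) • !![-1, 0, 0; 0, -1, 0; 0, 0, 2] := by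
  have h : Real.sqrt (3 / 2) = 3 * (1 / Real.sqrt 6) := by
    rw [show (3 / 2 : ℝ) = 3 ^ 2 / 6 by norm_num, Real.sqrt_div (by norm_num),
      Real.sqrt_sq (by norm_num)]
    ring
  rw [E0, h]
  ext i j
  fin_cases i <;> fin_cases j <;> simp [e3, vecMulVec] <;> ring

theorem E1_eq_s13 (k : ℤ) (φ : ℝ) : E1 k φ = (Real.sqrt 2 / 2) •
    !![Real.cos (k * φ), Real.sin (k * φ), 0; Real.sin (k * φ), -Real.cos (k * φ), 0; 0, 0, 0] := by
  have e : (k : ℝ) * φ = 2 * (k * φ / 2) := by ring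
  have := Real.sin_sq_add_cos_sq (k * φ / 2)
  rw [e, Real.cos_two_mul, Real.sin_two_mul]
  ext i j
  fin_cases i <;> fin_cases j <;> simp [E1, I2, e3, nvec, vecMulVec]
  · ring
  · ring
  · ring
  · linear_combination Real.sqrt 2 * this

theorem trace_E1_add_E0_mul_self (k : ℤ) (φ u v : ℝ) :
    ((u • E1 k φ + v • E0) * (u • E1 k φ + v • E0)).trace = u ^ 2 + v ^ 2 := by
  have h2 : Real.sqrt 2 ^ 2 = 2 := Real.sq_sqrt (by norm_num)
  have h6 : (1 / Real.sqrt 6) ^ 2 = 1 / 6 := by rw [div_pow, Real.sq_sqrt (by norm_num), one_pow]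
  have hφ := Real.sin_sq_add_cos_sq (k * φ)
  rw [E1_eq_s13, E0_eq_s13]
  generalize 1 / Real.sqrt 6 = s at *
  simp [Matrix.trace, Fin.sum_univ_three]
  linear_combination u ^ 2 * hφ * (Real.sqrt 2 ^ 2 / 2) + u ^ 2 / 2 * h2 + 6 * v ^ 2 * h6

theorem trace_E1_add_E0_mul_tilt (k : ℤ) (φ u v : ℝ) (w : ℂ) :
    ((u • E1 k φ + v • E0) * tilt w).trace = 0 := by
  rw [E1_eq_s13, E0_eq_s13]
  simp [tilt, Matrix.trace, Fin.sum_univ_three]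

theorem trace_tilt_mul_tilt_mul_E1_add_E0 (k : ℤ) (φ u v ρ : ℝ) :
    (tilt ⟨ρ * Real.cos (k * φ / 2), ρ * Real.sin (k * φ / 2)⟩ *
        tilt ⟨ρ * Real.cos (k * φ / 2), ρ * Real.sin (k * φ / 2)⟩ *
        (u • E1 k φ + v • E0)).trace =
      ρ ^ 2 * (u * (Real.sqrt 2 / 2) + v * (1 / Real.sqrt 6)) := by
  have e : (k : ℝ) * φ = 2 * (k * φ / 2) := by ring
  have hn := Real.sin_sq_add_cos_sq (k * φ / 2)
  rw [E1_eq_s13, E0_eq_s13, e, Real.cos_two_mul, Real.sin_two_mul]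
  simp [tilt, Matrix.trace, Fin.sum_univ_three]
  linear_combination ρ ^ 2 * (u * (Real.sqrt 2 / 2) * (2 * Real.cos (k * φ / 2) ^ 2 + 1)
    + v * (Real.sqrt 6)⁻¹) * hn

/-- The perturbation tilting the director towards `e₃` by the horizontal field
`g (log r) (e^{imφ} + e^{ilφ})`. -/
def tiltMode (g : ℝ → ℝ) (m l : ℤ) (x : ℝ × ℝ) : Mat3 :=
  tilt (twoMode g m l (Complex.equivRealProdCLM.symm x))

theorem tiltMode_logPolar (g : ℝ → ℝ) (m l : ℤ) (t φ : ℝ) :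
    tiltMode g m l (logPolar t φ) = tilt ⟨g t * (Real.cos (m * φ) + Real.cos (l * φ)),
      g t * (Real.sin (m * φ) + Real.sin (l * φ))⟩ := by
  rw [tiltMode, equivRealProdCLM_symm_logPolar, twoMode_exp]

theorem exists_tiltMode_logPolar_eq_director (g : ℝ → ℝ) (m l : ℤ) (t φ : ℝ) :
    ∃ ρ : ℝ, ρ ^ 2 = g t ^ 2 * (2 + 2 * Real.cos ((m - l) * φ)) ∧
      tiltMode g m l (logPolar t φ) = tilt ⟨ρ * Real.cos ((m + l : ℤ) * φ / 2),
        ρ * Real.sin ((m + l : ℤ) * φ / 2)⟩ := by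
  refine ⟨2 * g t * Real.cos ((m * φ - l * φ) / 2), ?_, ?_⟩
  · rw [show (m - l) * φ = 2 * ((m * φ - l * φ) / 2) by ring, Real.cos_two_mul]
    ring
  · rw [tiltMode_logPolar, Real.cos_add_cos, Real.sin_add_sin]
    push_cast
    rw [add_mul]
    congr 2 <;> ring

theorem contDiff_tiltMode_apply {g : ℝ → ℝ} (hg : ContDiff ℝ (⊤ : ℕ∞) g) (hg0 : ∀ t ≤ 0, g t = 0)
    (m l : ℤ) (i j : Fin 3) : ContDiff ℝ (⊤ : ℕ∞) fun x => tiltMode g m l x i j :=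
  contDiff_tilt_apply ((contDiff_twoMode hg hg0 m l).comp
    Complex.equivRealProdCLM.symm.contDiff) i j

theorem hasCompactSupport_tiltMode {g : ℝ → ℝ} (hg : HasCompactSupport g) (m l : ℤ) :
    HasCompactSupport (tiltMode g m l) :=
  ((hasCompactSupport_twoMode hg m l).comp_isClosedEmbedding
    Complex.equivRealProdCLM.symm.toHomeomorph.isClosedEmbedding).comp_left tilt_zero

theorem exp_sq_mul_matGradNormSq_tiltMode {g : ℝ → ℝ} (hg : ContDiff ℝ (⊤ : ℕ∞) g)
    (hg0 : ∀ t ≤ 0, g t = 0) (m l : ℤ) (t φ : ℝ) :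
    Real.exp t ^ 2 * matGradNormSq (tiltMode g m l) (logPolar t φ) =
      2 * (deriv g t ^ 2 * (2 + 2 * Real.cos ((m - l) * φ)) +
        g t ^ 2 * (m ^ 2 + l ^ 2 + 2 * (m * l) * Real.cos ((m - l) * φ))) := by
  have hf : ContDiff ℝ (⊤ : ℕ∞) fun x => twoMode g m l (Complex.equivRealProdCLM.symm x) :=
    (contDiff_twoMode hg hg0 m l).comp Complex.equivRealProdCLM.symm.contDiff
  have hf_logPolar (s ψ : ℝ) := twoMode_exp g m l s ψ
  simp only [← equivRealProdCLM_symm_logPolar] at hf_logPolar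
  have hg' : HasDerivAt g (deriv g t) t := (hg.differentiable (by simp) t).hasDerivAt
  have hcos (n : ℤ) : HasDerivAt (fun ψ => Real.cos (n * ψ)) (-Real.sin (n * φ) * n) φ := by
    simpa using ((hasDerivAt_id φ).const_mul (n : ℝ)).cos
  have hsin (n : ℤ) : HasDerivAt (fun ψ => Real.sin (n * ψ)) (Real.cos (n * φ) * n) φ := by
    simpa using ((hasDerivAt_id φ).const_mul (n : ℝ)).sin
  have hre := exp_sq_mul_gradNormSq_logPolar_of_separated
    (h := fun x => (twoMode g m l (Complex.equivRealProdCLM.symm x)).re)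
    (fun s ψ => congrArg Complex.re (hf_logPolar s ψ))
    ((Complex.reCLM.contDiff.comp hf).differentiable (by simp) _) hg' ((hcos m).fun_add (hcos l))
  have him := exp_sq_mul_gradNormSq_logPolar_of_separated
    (h := fun x => (twoMode g m l (Complex.equivRealProdCLM.symm x)).im)
    (fun s ψ => congrArg Complex.im (hf_logPolar s ψ))
    ((Complex.imCLM.contDiff.comp hf).differentiable (by simp) _) hg' ((hsin m).fun_add (hsin l))
  have hm := Real.sin_sq_add_cos_sq (m * φ)
  have hl := Real.sin_sq_add_cos_sq (l * φ)
  unfold tiltMode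
  rw [matGradNormSq_tilt, mul_left_comm, mul_add, hre, him, sub_mul, Real.cos_sub]
  linear_combination 2 * (deriv g t ^ 2 + g t ^ 2 * m ^ 2) * hm
    + 2 * (deriv g t ^ 2 + g t ^ 2 * l ^ 2) * hl

/-- The integrand of the second variation of the Landau–de Gennes energy at `Q` in direction
`P`. -/
def secondVariationDensity (a2 b2 c2 : ℝ) (Q P : ℝ × ℝ → Mat3) (x : ℝ × ℝ) : ℝ :=
  (1/2) * matGradNormSq P x - a2/2 * (P x * P x).trace
    - b2 * (P x * P x * Q x).trace
    + c2/2 * ((Q x * Q x).trace * (P x * P x).trace + 2 * ((Q x * P x).trace)^2)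

/-- The value at `P` of the zeroth order part of the second variation at `u E₁ + v E₀`, for `P`
of norm `√2` tilting the director towards `e₃`. -/
def tiltPotential (a2 b2 c2 u v : ℝ) : ℝ :=
  -a2 - b2 * (u * (Real.sqrt 2 / 2) + v * (1 / Real.sqrt 6)) + c2 * (u ^ 2 + v ^ 2)

theorem secondVariationDensity_tiltMode_logPolar {a2 b2 c2 u v : ℝ} {Q : ℝ × ℝ → Mat3} {g : ℝ → ℝ}
    (hg : ContDiff ℝ (⊤ : ℕ∞) g) (hg0 : ∀ t ≤ 0, g t = 0) {m l : ℤ} {t φ : ℝ}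
    (hQ : Q (logPolar t φ) = u • E1 (m + l) φ + v • E0) :
    Real.exp t ^ 2 * secondVariationDensity a2 b2 c2 Q (tiltMode g m l) (logPolar t φ) =
      (deriv g t ^ 2 + Real.exp t ^ 2 * tiltPotential a2 b2 c2 u v * g t ^ 2) *
          (2 + 2 * Real.cos ((m - l) * φ)) +
        g t ^ 2 * (m ^ 2 + l ^ 2 + 2 * (m * l) * Real.cos ((m - l) * φ)) := by
  obtain ⟨ρ, hρ, hP⟩ := exists_tiltMode_logPolar_eq_director g m l t φ
  have hn := Real.sin_sq_add_cos_sq ((m + l : ℤ) * φ / 2)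
  have hgrad := exp_sq_mul_matGradNormSq_tiltMode hg hg0 m l t φ
  rw [secondVariationDensity, hP, hQ, trace_tilt_mul_tilt_mul_E1_add_E0, trace_E1_add_E0_mul_self,
    trace_E1_add_E0_mul_tilt, trace_tilt_mul_tilt]
  have hV : tiltPotential a2 b2 c2 u v = -a2 - b2 * (u * (Real.sqrt 2 / 2) + v * (1 / Real.sqrt 6))
    + c2 * (u ^ 2 + v ^ 2) := rfl
  linear_combination (1 / 2) * hgrad + Real.exp t ^ 2 * (c2 * (u ^ 2 + v ^ 2) - a2) * ρ ^ 2 * hn +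
    Real.exp t ^ 2 * tiltPotential a2 b2 c2 u v * hρ - Real.exp t ^ 2 * ρ ^ 2 * hV

/-- The integral of `|e^{imφ} + e^{ilφ}|²` over the circle. -/
def angularMass (m l : ℤ) : ℝ := ∫ φ in -π..π, (2 + 2 * Real.cos ((m - l) * φ))

/-- The integral of `|d/dφ (e^{imφ} + e^{ilφ})|²` over the circle. -/
def angularEnergy (m l : ℤ) : ℝ :=
  ∫ φ in -π..π, ((m : ℝ) ^ 2 + l ^ 2 + 2 * (m * l) * Real.cos ((m - l) * φ))

theorem integral_eq_add_of_separated_logPolar {F : ℝ × ℝ → ℝ} {R₁ R₂ Φ₁ Φ₂ : ℝ → ℝ}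
    (hF : ∀ t φ, Real.exp t ^ 2 * F (logPolar t φ) = R₁ t * Φ₁ φ + R₂ t * Φ₂ φ)
    (hR₁ : Integrable R₁) (hR₂ : Integrable R₂) (hΦ₁ : Continuous Φ₁) (hΦ₂ : Continuous Φ₂) :
    ∫ x, F x = (∫ t, R₁ t) * (∫ φ in -π..π, Φ₁ φ) + (∫ t, R₂ t) * ∫ φ in -π..π, Φ₂ φ := by
  have circle (Φ : ℝ → ℝ) : ∫ φ in -π..π, Φ φ = ∫ φ in Ioo (-π) π, Φ φ := by
    rw [intervalIntegral.integral_of_le (by linarith [Real.pi_pos]), integral_Ioc_eq_integral_Ioo]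
  have integrable {Φ : ℝ → ℝ} (hΦ : Continuous Φ) : IntegrableOn Φ (Ioo (-π) π) :=
    hΦ.integrableOn_Icc.mono_set Ioo_subset_Icc_self
  rw [integral_eq_setIntegral_logPolar]
  simp only [hF]
  rw [Measure.volume_eq_prod, ← Measure.prod_restrict, Measure.restrict_univ, circle, circle,
    integral_add (hR₁.mul_prod (integrable hΦ₁)) (hR₂.mul_prod (integrable hΦ₂)),
    integral_prod_mul, integral_prod_mul]

theorem integral_secondVariationDensity_tiltMode {a2 b2 c2 : ℝ} {u v : ℝ → ℝ}
    (hu : Continuous u) (hv : Continuous v) {m l : ℤ} {Q : ℝ × ℝ → Mat3}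
    (hQ : ∀ t φ, Q (logPolar t φ) = u t • E1 (m + l) φ + v t • E0) {g : ℝ → ℝ}
    (hg : ContDiff ℝ (⊤ : ℕ∞) g) (hgs : HasCompactSupport g) (hg0 : ∀ t ≤ 0, g t = 0) :
    ∫ x, secondVariationDensity a2 b2 c2 Q (tiltMode g m l) x =
      (∫ t, (deriv g t ^ 2 + Real.exp t ^ 2 * tiltPotential a2 b2 c2 (u t) (v t) * g t ^ 2)) *
        angularMass m l + (∫ t, g t ^ 2) * angularEnergy m l := by
  have cg' := hg.continuous_deriv (by simp)
  refine integral_eq_add_of_separated_logPolar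
    (fun t φ => secondVariationDensity_tiltMode_logPolar hg hg0 (hQ t φ)) ?_ ?_
    (by fun_prop) (by fun_prop)
  · unfold tiltPotential
    exact integrable_of_eq_zero_of_deriv_eq_zero hgs (by fun_prop) fun t h0 h0' => by simp [h0, h0']
  · exact integrable_of_eq_zero_of_deriv_eq_zero hgs (by fun_prop) fun t h0 _ => by simp [h0]

/-! ### The eigenvalue gap -/

theorem integral_cos_intCast_mul_nonneg (n : ℤ) : 0 ≤ ∫ φ in -π..π, Real.cos (n * φ) := by
  rcases eq_or_ne n 0 with rfl | hn
  · simp [Real.pi_pos.le]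
  · rw [intervalIntegral.integral_comp_mul_left Real.cos (Int.cast_ne_zero.2 hn), integral_cos]
    simp [Real.sin_int_mul_pi]

theorem integral_add_mul_cos_intCast_mul (a b : ℝ) (n : ℤ) :
    ∫ φ in -π..π, (a + b * Real.cos (n * φ)) =
      2 * π * a + b * ∫ φ in -π..π, Real.cos (n * φ) := by
  have hcos : IntervalIntegrable (fun φ => Real.cos (n * φ)) volume (-π) π :=
    Continuous.intervalIntegrable (by fun_prop) _ _
  rw [intervalIntegral.integral_add (by simp) (hcos.const_mul _),
    intervalIntegral.integral_const_mul, intervalIntegral.integral_const, smul_eq_mul]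
  ring

theorem angularMass_eq (m l : ℤ) :
    angularMass m l = 4 * π + 2 * ∫ φ in -π..π, Real.cos ((m - l : ℤ) * φ) := by
  have := integral_add_mul_cos_intCast_mul 2 2 (m - l)
  push_cast at this ⊢
  rw [angularMass, this]
  ring

theorem angularMass_pos (m l : ℤ) : 0 < angularMass m l := by
  have := integral_cos_intCast_mul_nonneg (m - l)
  rw [angularMass_eq]
  positivity

theorem two_mul_angularEnergy_lt {m l : ℤ} (hml : 0 < m * l) :
    2 * angularEnergy m l < ((m + l : ℤ) : ℝ) ^ 2 * angularMass m l := by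
  have hI := integral_cos_intCast_mul_nonneg (m - l)
  have henergy := integral_add_mul_cos_intCast_mul (m ^ 2 + l ^ 2) (2 * (m * l)) (m - l)
  have hml' : (0 : ℝ) < m * l := mod_cast hml
  rw [angularMass_eq, angularEnergy]
  push_cast at hI henergy ⊢
  rw [henergy, ← sub_pos]
  calc (0 : ℝ) < 8 * π * (m * l)
        + 2 * (m ^ 2 + l ^ 2) * ∫ φ in -π..π, Real.cos ((m - l) * φ) := by positivity
    _ = _ := by ring

theorem exists_add_eq_mul_pos {k : ℤ} (hk : 2 ≤ |k|) : ∃ m l : ℤ, m + l = k ∧ 0 < m * l := by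
  rcases le_abs.1 hk with h | h
  · exact ⟨1, k - 1, by ring, by linarith⟩
  · exact ⟨-1, k + 1, by ring, by linarith⟩

theorem contDiff_comp_exp {f : ℝ → ℝ} {n : WithTop ℕ∞} (hf : ContDiffOn ℝ n f (Ioi 0)) :
    ContDiff ℝ n fun t => f (Real.exp t) :=
  hf.comp_contDiff Real.contDiff_exp Real.exp_pos

theorem deriv_deriv_comp_exp {f : ℝ → ℝ} (hf : ContDiffOn ℝ 2 f (Ioi 0)) (t : ℝ) :
    deriv (deriv fun s => f (Real.exp s)) t =
      Real.exp t ^ 2 * (deriv (deriv f) (Real.exp t) + deriv f (Real.exp t) / Real.exp t) := by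
  have hf' : ContDiffOn ℝ 1 (deriv f) (Ioi 0) := hf.deriv_of_isOpen isOpen_Ioi (by norm_num)
  have df (s : ℝ) : HasDerivAt (fun s => f (Real.exp s)) (deriv f (Real.exp s) * Real.exp s) s :=
    ((hf.contDiffAt (Ioi_mem_nhds s.exp_pos)).differentiableAt two_ne_zero).hasDerivAt.comp s
      (Real.hasDerivAt_exp s)
  have df' : HasDerivAt (fun s => deriv f (Real.exp s))
      (deriv (deriv f) (Real.exp t) * Real.exp t) t :=
    ((hf'.contDiffAt (Ioi_mem_nhds t.exp_pos)).differentiableAt one_ne_zero).hasDerivAt.comp t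
      (Real.hasDerivAt_exp t)
  rw [funext fun s => (df s).deriv, (df'.fun_mul (Real.hasDerivAt_exp t)).deriv]
  field_simp

theorem deriv_deriv_sub_const_mul {f g : ℝ → ℝ} (hf : ContDiff ℝ 2 f) (hg : ContDiff ℝ 2 g)
    (c t : ℝ) : deriv (deriv fun s => f s - c * g s) t =
      deriv (deriv f) t - c * deriv (deriv g) t := by
  have key {f g : ℝ → ℝ} (hf : Differentiable ℝ f) (hg : Differentiable ℝ g) :
      (deriv fun s => f s - c * g s) = fun s => deriv f s - c * deriv g s :=
    funext fun s => ((hf s).hasDerivAt.fun_sub ((hg s).hasDerivAt.const_mul c)).deriv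
  have hf' : ContDiff ℝ 1 (deriv f) := hf.deriv'
  have hg' : ContDiff ℝ 1 (deriv g) := hg.deriv'
  rw [key (hf.differentiable two_ne_zero) (hg.differentiable two_ne_zero),
    key (hf'.differentiable one_ne_zero) (hg'.differentiable one_ne_zero)]

theorem one_div_sqrt_six : 1 / Real.sqrt 6 = Real.sqrt 2 * Real.sqrt 3 / 6 := by
  rw [← Real.sqrt_mul zero_le_two, show (2 * 3 : ℝ) = 6 by norm_num, Real.sqrt_div_self', one_div]

theorem sqrt_two_div_three : Real.sqrt (2 / 3) = Real.sqrt 2 * Real.sqrt 3 / 3 := by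
  rw [Real.sqrt_div zero_le_two, mul_div_assoc, Real.sqrt_div_self', mul_one_div]

/-- The radial Landau–de Gennes system with centrifugal coefficient `κ`. -/
def IsRadialProfile (a2 b2 c2 κ : ℝ) (u v : ℝ → ℝ) : Prop :=
  ∀ r : ℝ, 0 < r →
    (deriv (deriv u) r + deriv u r / r - κ * u r / r^2 =
      u r * (-a2 + Real.sqrt (2/3) * b2 * v r + c2 * ((u r)^2 + (v r)^2))) ∧
    (deriv (deriv v) r + deriv v r / r =
      v r * (-a2 - (1 / Real.sqrt 6) * b2 * v r + c2 * ((u r)^2 + (v r)^2))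
        + (1 / Real.sqrt 6) * b2 * (u r)^2)

theorem IsRadialProfile.deriv_deriv_gap_comp_exp {a2 b2 c2 κ : ℝ} {u v : ℝ → ℝ}
    (h : IsRadialProfile a2 b2 c2 κ u v) (hu : ContDiffOn ℝ 2 u (Ioi 0))
    (hv : ContDiffOn ℝ 2 v (Ioi 0)) (t : ℝ) :
    deriv (deriv fun s => u (Real.exp s) - Real.sqrt 3 * v (Real.exp s)) t =
      κ * u (Real.exp t) +
        Real.exp t ^ 2 * tiltPotential a2 b2 c2 (u (Real.exp t)) (v (Real.exp t)) *
          (u (Real.exp t) - Real.sqrt 3 * v (Real.exp t)) := by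
  obtain ⟨odeU, odeV⟩ := h (Real.exp t) t.exp_pos
  have s3 : Real.sqrt 3 ^ 2 = 3 := Real.sq_sqrt (by norm_num)
  have cancel : Real.exp t ^ 2 * (κ * u (Real.exp t) / Real.exp t ^ 2) = κ * u (Real.exp t) := by
    field_simp
  rw [sqrt_two_div_three] at odeU
  rw [deriv_deriv_sub_const_mul (contDiff_comp_exp hu) (contDiff_comp_exp hv),
    deriv_deriv_comp_exp hu, deriv_deriv_comp_exp hv, odeV, eq_add_of_sub_eq odeU, tiltPotential,
    one_div_sqrt_six]
  linear_combination cancel - s3 * Real.exp t ^ 2 * (b2 * Real.sqrt 2 * u (Real.exp t) ^ 2 / 6)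

theorem tendsto_gap {u v : ℝ → ℝ} {s : ℝ} (hu : Tendsto u atTop (𝓝 (s / Real.sqrt 2)))
    (hv : Tendsto v atTop (𝓝 (-s / Real.sqrt 6))) :
    Tendsto (fun r => u r - Real.sqrt 3 * v r) atTop (𝓝 (2 * (s / Real.sqrt 2))) := by
  convert hu.sub (hv.const_mul (Real.sqrt 3)) using 2
  rw [show (6 : ℝ) = 2 * 3 by norm_num, Real.sqrt_mul (by norm_num)]
  field_simp
  ring

theorem IsRadialProfile.exists_integral_deriv_sq_add_tiltPotential_neg
    {a2 b2 c2 κ μ s : ℝ} {u v : ℝ → ℝ} (h : IsRadialProfile a2 b2 c2 κ u v) (hs : s ≠ 0)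
    (hμ : 2 * μ < κ) (hu : ContDiffOn ℝ (⊤ : ℕ∞) u (Ioi 0))
    (hv : ContDiffOn ℝ (⊤ : ℕ∞) v (Ioi 0)) (hulim : Tendsto u atTop (𝓝 (s / Real.sqrt 2)))
    (hvlim : Tendsto v atTop (𝓝 (-s / Real.sqrt 6))) :
    ∃ g : ℝ → ℝ, ContDiff ℝ (⊤ : ℕ∞) g ∧ HasCompactSupport g ∧ (∀ t ≤ 0, g t = 0) ∧
      (∫ t, (deriv g t ^ 2 + Real.exp t ^ 2 *
        tiltPotential a2 b2 c2 (u (Real.exp t)) (v (Real.exp t)) * g t ^ 2)) +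
        μ * ∫ t, g t ^ 2 < 0 := by
  set U : ℝ → ℝ := fun t => u (Real.exp t)
  set V : ℝ → ℝ := fun t => v (Real.exp t)
  have hU : ContDiff ℝ (⊤ : ℕ∞) U := contDiff_comp_exp hu
  have hV : ContDiff ℝ (⊤ : ℕ∞) V := contDiff_comp_exp hv
  have hUlim : Tendsto U atTop (𝓝 (s / Real.sqrt 2)) := hulim.comp Real.tendsto_exp_atTop
  have hwlim : Tendsto (fun t => U t - Real.sqrt 3 * V t) atTop (𝓝 (2 * (s / Real.sqrt 2))) :=
    (tendsto_gap hulim hvlim).comp Real.tendsto_exp_atTop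
  have hW : Continuous fun t => Real.exp t ^ 2 * tiltPotential a2 b2 c2 (U t) (V t) := by
    unfold tiltPotential
    fun_prop
  have hlim := hwlim.mul ((hUlim.const_mul κ).sub (hwlim.const_mul μ))
  have hpos : 0 < 2 * (s / Real.sqrt 2) *
      (κ * (s / Real.sqrt 2) - μ * (2 * (s / Real.sqrt 2))) := by
    have : 0 < s ^ 2 * (κ - 2 * μ) := mul_pos (by positivity) (sub_pos.2 hμ)
    convert this using 1
    field_simp
    rw [Real.sq_sqrt zero_le_two]
  obtain ⟨g, hg, hgs, hg0, hneg⟩ := exists_integral_deriv_sq_add_neg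
    (hU.sub (contDiff_const.mul hV)) (hW.add_const μ) (half_pos hpos)
    ((hwlim.pow 2).eventually_le_const (lt_add_one _)) (by
      filter_upwards [hlim.eventually_const_le (half_lt_self hpos)] with t ht
      rw [h.deriv_deriv_gap_comp_exp (mod_cast contDiffOn_infty.1 hu 2)
        (mod_cast contDiffOn_infty.1 hv 2)]
      exact ht.trans_eq (by ring)) 0
  have cg' := hg.continuous_deriv (by simp)
  refine ⟨g, hg, hgs, hg0, ?_⟩
  rw [← integral_const_mul, ← integral_add]
  · simpa only [add_mul, add_assoc] using hneg
  · exact integrable_of_eq_zero_of_deriv_eq_zero hgs (by fun_prop) fun t h0 h0' => by simp [h0, h0']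
  · exact integrable_of_eq_zero_of_deriv_eq_zero hgs (by fun_prop) fun t h0 _ => by simp [h0]

theorem stmt13_general {a2 b2 c2 s : ℝ} (hs : s ≠ 0) {k : ℤ} (hk : 2 ≤ |k|) {u v : ℝ → ℝ}
    (hu : ContDiffOn ℝ (⊤ : ℕ∞) u (Ioi 0)) (hv : ContDiffOn ℝ (⊤ : ℕ∞) v (Ioi 0))
    (hode : IsRadialProfile a2 b2 c2 ((k : ℝ) ^ 2) u v)
    (hulim : Tendsto u atTop (𝓝 (s / Real.sqrt 2)))
    (hvlim : Tendsto v atTop (𝓝 (-s / Real.sqrt 6))) {Q : ℝ × ℝ → Mat3}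
    (hQ : ∀ r φ : ℝ, 0 < r → Q (r * Real.cos φ, r * Real.sin φ) = u r • E1 k φ + v r • E0) :
    ∃ P : ℝ × ℝ → Mat3, (∀ x, isS0 (P x)) ∧ (∀ i j, ContDiff ℝ (⊤ : ℕ∞) fun x => P x i j) ∧
      HasCompactSupport P ∧ ∫ x, secondVariationDensity a2 b2 c2 Q P x < 0 := by
  obtain ⟨m, l, rfl, hml⟩ := exists_add_eq_mul_pos hk
  have hA := angularMass_pos m l
  obtain ⟨g, hg, hgs, hg0, hneg⟩ := hode.exists_integral_deriv_sq_add_tiltPotential_neg hs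
    (μ := angularEnergy m l / angularMass m l)
    (by rw [← mul_div_assoc, div_lt_iff₀ hA]; exact two_mul_angularEnergy_lt hml)
    hu hv hulim hvlim
  refine ⟨tiltMode g m l, fun x => isS0_tilt _, contDiff_tiltMode_apply hg hg0 m l,
    hasCompactSupport_tiltMode hgs m l, ?_⟩
  rw [integral_secondVariationDensity_tiltMode (contDiff_comp_exp hu).continuous
    (contDiff_comp_exp hv).continuous (fun t φ => hQ _ φ t.exp_pos) hg hgs hg0]
  calc _ = angularMass m l * (_ + angularEnergy m l / angularMass m l * _) := by field_simp
    _ < 0 := mul_neg_of_pos_of_neg hA hneg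

end

/-- instability of `k`-radially symmetric solutions for `|k| ≥ 2`: there is a
smooth compactly supported perturbation `P` with negative second variation. -/
theorem stmt13 (a2 b2 c2 : ℝ) (ha : 0 < a2) (hb : 0 < b2) (hc : 0 < c2)
    (k : ℤ) (hk : 2 ≤ |k|)
    (u v : ℝ → ℝ)
    (hu2 : ContDiffOn ℝ 2 u (Set.Ici 0)) (huS : ContDiffOn ℝ (⊤ : ℕ∞) u (Set.Ioi 0))
    (hvS : ContDiffOn ℝ (⊤ : ℕ∞) v (Set.Ici 0))
    (hode : ∀ r : ℝ, 0 < r →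
      (deriv (deriv u) r + deriv u r / r - (k : ℝ)^2 * u r / r^2 =
        u r * (-a2 + Real.sqrt (2/3) * b2 * v r + c2 * ((u r)^2 + (v r)^2))) ∧
      (deriv (deriv v) r + deriv v r / r =
        v r * (-a2 - (1 / Real.sqrt 6) * b2 * v r + c2 * ((u r)^2 + (v r)^2))
          + (1 / Real.sqrt 6) * b2 * (u r)^2))
    (hu0 : u 0 = 0) (hv'0 : derivWithin v (Set.Ici 0) 0 = 0)
    (hulim : Filter.Tendsto u Filter.atTop (nhds (splus a2 b2 c2 / Real.sqrt 2)))
    (hvlim : Filter.Tendsto v Filter.atTop (nhds (-(splus a2 b2 c2) / Real.sqrt 6)))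
    (Q : ℝ × ℝ → Mat3)
    (hQ : ∀ r φ : ℝ, 0 ≤ r →
      Q (r * Real.cos φ, r * Real.sin φ) = u r • E1 k φ + v r • E0) :
    ∃ P : ℝ × ℝ → Mat3,
      (∀ x, isS0 (P x)) ∧
      (∀ i j, ContDiff ℝ (⊤ : ℕ∞) (fun x => P x i j)) ∧
      HasCompactSupport P ∧
      (∫ x : ℝ × ℝ,
        ((1/2) * matGradNormSq P x - a2/2 * (P x * P x).trace
          - b2 * (P x * P x * Q x).trace
          + c2/2 * ((Q x * Q x).trace * (P x * P x).trace + 2 * ((Q x * P x).trace)^2))) < 0 := by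
  have hs : 0 < splus a2 b2 c2 := by unfold splus; positivity
  exact stmt13_general hs.ne' hk huS (hvS.mono Set.Ioi_subset_Ici_self) hode hulim hvlim
    fun r φ hr => hQ r φ hr.le
end
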